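/- arXiv:1502.07452 — 2 statements merged into one kernel-verified Lean document; each statement's English description precedes it below -/
import Mathlib

section
/- Fix n, d ∈ ℕ, 1 ≤ p < ∞, and smooth vector fields X_1, …, X_d : ℝ^n → ℝ^n that are bounded, have bounded first derivatives, and are bracket generating. Then every point of ℝ^n has an open neighborhood W ⊆ ℝ^n together with continuous maps σ : W × W → L^p([0,∞), ℝ^d) and T : W × W → [0,∞) such that for all x, y ∈ W the trajectory of the control σ(x,y) starting at x, evaluated at time T(x,y), equals y, and such that σ(x,x) = 0 and T(x,x) = 0 for every x ∈ W. -/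
open MeasureTheory Set

noncomputable section

/-- The Lie bracket of two (smooth) vector fields on `ℝⁿ`:
`[Y,Z](x) = DZ(x)Y(x) − DY(x)Z(x)`. -/
def lieBracketVF {n : ℕ}
    (Y Z : EuclideanSpace ℝ (Fin n) → EuclideanSpace ℝ (Fin n)) :
    EuclideanSpace ℝ (Fin n) → EuclideanSpace ℝ (Fin n) :=
  fun x => fderiv ℝ Z x (Y x) - fderiv ℝ Y x (Z x)

/-- The iterated Lie brackets of the family `X₁, …, X_d` (the bracket monomials of the
Lie algebra of vector fields generated by the family). -/
inductive IsIteratedBracket {n d : ℕ}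
    (X : Fin d → EuclideanSpace ℝ (Fin n) → EuclideanSpace ℝ (Fin n)) :
    (EuclideanSpace ℝ (Fin n) → EuclideanSpace ℝ (Fin n)) → Prop
  | base (i : Fin d) : IsIteratedBracket X (X i)
  | bracket (Y Z : EuclideanSpace ℝ (Fin n) → EuclideanSpace ℝ (Fin n)) :
      IsIteratedBracket X Y → IsIteratedBracket X Z →
      IsIteratedBracket X (lieBracketVF Y Z)

/-- The family `X₁, …, X_d` is bracket generating: at every point the values of its
iterated Lie brackets span `ℝⁿ`. -/
def BracketGenerating {n d : ℕ}
    (X : Fin d → EuclideanSpace ℝ (Fin n) → EuclideanSpace ℝ (Fin n)) : Prop :=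
  ∀ x : EuclideanSpace ℝ (Fin n),
    Submodule.span ℝ {v | ∃ Y, IsIteratedBracket X Y ∧ Y x = v} = ⊤

/-- Trajectory on `[0,∞)` of a control `u` starting at `x` for the (driftless) control
system determined by `X₁, …, X_d`. -/
def IsTrajectoryInf {n d : ℕ}
    (X : Fin d → EuclideanSpace ℝ (Fin n) → EuclideanSpace ℝ (Fin n))
    (x : EuclideanSpace ℝ (Fin n))
    (u : ℝ → EuclideanSpace ℝ (Fin d))
    (γ : ℝ → EuclideanSpace ℝ (Fin n)) : Prop :=
  ContinuousOn γ (Set.Ici 0) ∧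
    ∀ t ∈ Set.Ici (0:ℝ),
      γ t = x + ∫ s in (0:ℝ)..t, ∑ i, u s i • X i (γ s)

open Filter Topology
open scoped NNReal ENNReal ContDiff

section Flow

variable {E : Type*} [NormedAddCommGroup E] [NormedSpace ℝ E]

/-- `F` is the flow of `V` for times in `[0,1]`. -/
structure IsFlow (V : E → E) (C : ℝ) (F : ℝ → E → E) : Prop where
  cont : Continuous (fun q : ℝ × E => F q.1 q.2)
  zero : ∀ x, F 0 x = x
  deriv : ∀ x, ∀ s ∈ Icc (0:ℝ) 1,
    HasDerivWithinAt (fun r => F r x) (V (F s x)) (Icc 0 1) s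
  dist_le : ∀ x, ∀ s ∈ Icc (0:ℝ) 1, ‖F s x - x‖ ≤ C * s

theorem exists_isFlow [CompleteSpace E] (V : E → E) (C : ℝ) (K : ℝ≥0)
    (hV : ∀ x, ‖V x‖ ≤ C) (hK : LipschitzWith K V) : ∃ F, IsFlow V C F := by
  have hC : 0 ≤ C := (norm_nonneg _).trans (hV 0)
  have h1 : ∀ x : E, ∃ α : ℝ → E, α 0 = x ∧
      ∀ t ∈ Icc (0:ℝ) 1, HasDerivWithinAt α (V (α t)) (Icc 0 1) t := by
    intro x
    have := IsPicardLindelof.of_time_independent (f := V) (tmin := 0) (tmax := 1)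
      (t₀ := ⟨0, by simp⟩) (x₀ := x) (a := C.toNNReal) (r := 0) (L := C.toNNReal) (K := K)
      (fun y _ => by simpa [hC] using hV y) hK.lipschitzOnWith (by simp)
    obtain ⟨α, h0, h⟩ := this.exists_eq_forall_mem_Icc_hasDerivWithinAt₀
    exact ⟨α, h0, h⟩
  choose α h0 hd using h1
  have hcont : ∀ x, ContinuousOn (α x) (Icc 0 1) := fun x =>
    HasDerivWithinAt.continuousOn (hd x)
  refine ⟨fun s x => α x (projIcc 0 1 zero_le_one s), ?_, ?_, ?_, ?_⟩
  · refine continuous_prod_of_continuous_lipschitzWith' _ (Real.exp K).toNNReal ?_ ?_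
    · intro s
      refine LipschitzWith.of_dist_le_mul ?_
      intro x y
      have := dist_le_of_trajectories_ODE (v := fun _ => V) (K := K) (f := α x) (g := α y)
        (a := 0) (b := 1) (δ := dist x y) (fun _ => hK) (hcont x)
        (fun t ht => ((hd x t (Ico_subset_Icc_self ht)).mono_of_mem_nhdsWithin
          (Icc_mem_nhdsGE_of_mem ht)))
        (hcont y)
        (fun t ht => ((hd y t (Ico_subset_Icc_self ht)).mono_of_mem_nhdsWithin
          (Icc_mem_nhdsGE_of_mem ht)))
        (by rw [h0, h0]) (projIcc 0 1 zero_le_one s) (projIcc 0 1 zero_le_one s).2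
      refine this.trans ?_
      rw [Real.coe_toNNReal _ (Real.exp_pos _).le, mul_comm]
      gcongr
      have := (projIcc (0:ℝ) 1 zero_le_one s).2.2
      nlinarith [K.2]
    · intro x
      exact (hcont x).comp_continuous (continuous_subtype_val.comp continuous_projIcc)
        (fun s => (projIcc 0 1 zero_le_one s).2)
  · intro x
    simp [h0]
  · intro x s hs
    refine HasDerivWithinAt.congr_of_mem (f := α x) ?_ ?_ hs
    · simpa [projIcc_of_mem _ hs] using hd x s hs
    · intro r hr
      simp [projIcc_of_mem _ hr]
  · intro x s hs
    have := (convex_Icc (0:ℝ) 1).norm_image_sub_le_of_norm_hasDerivWithin_le (f := α x) (C := C)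
      (hd x) (fun t _ => hV _) (x := 0) (y := s) (by simp) hs
    simpa [projIcc_of_mem _ hs, h0, abs_of_nonneg hs.1] using this

variable (E) in
/-- Smooth maps `E → E`. -/
@[ext]
structure SM where
  /-- the underlying map -/
  val : E → E
  /-- smoothness -/
  contDiff : ContDiff ℝ (⊤ : ℕ∞) val

namespace SM

instance : Zero (SM E) := ⟨⟨fun _ => 0, contDiff_const⟩⟩
instance : Add (SM E) := ⟨fun f g => ⟨f.1 + g.1, f.2.add g.2⟩⟩
instance : Neg (SM E) := ⟨fun f => ⟨-f.1, f.2.neg⟩⟩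
instance : Sub (SM E) := ⟨fun f g => ⟨f.1 - g.1, f.2.sub g.2⟩⟩
instance : SMul ℕ (SM E) := ⟨fun c f => ⟨c • f.1, f.2.const_smul c⟩⟩
instance : SMul ℤ (SM E) := ⟨fun c f => ⟨c • f.1, f.2.const_smul c⟩⟩
instance : SMul ℝ (SM E) := ⟨fun c f => ⟨c • f.1, f.2.const_smul c⟩⟩

theorem val_injective : Function.Injective (SM.val : SM E → E → E) := fun _ _ h => SM.ext h

instance : AddCommGroup (SM E) :=
  val_injective.addCommGroup SM.val rfl (fun _ _ => rfl) (fun _ => rfl) (fun _ _ => rfl)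
    (fun _ _ => rfl) (fun _ _ => rfl)

@[simp] theorem add_val (f g : SM E) : (f + g).1 = f.1 + g.1 := rfl
@[simp] theorem neg_val (f : SM E) : (-f).1 = -f.1 := rfl
@[simp] theorem sub_val (f g : SM E) : (f - g).1 = f.1 - g.1 := rfl
@[simp] theorem smul_val (c : ℝ) (f : SM E) : (c • f).1 = c • f.1 := rfl
@[simp] theorem zero_val : (0 : SM E).1 = 0 := rfl

/-- The underlying map, as an additive homomorphism. -/
def valHom : SM E →+ (E → E) where
  toFun := SM.val
  map_zero' := rfl
  map_add' _ _ := rfl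

theorem sum_val {κ : Type*} (s : Finset κ) (f : κ → SM E) :
    (∑ i ∈ s, f i).1 = ∑ i ∈ s, (f i).1 := map_sum valHom f s

instance : Module ℝ (SM E) :=
  val_injective.module ℝ valHom (fun _ _ => rfl)

end SM

theorem SM.differentiable (f : SM E) : Differentiable ℝ f.1 :=
  (SM.contDiff f).differentiable (by simp)

theorem SM.contDiff_fderiv (f : SM E) : ContDiff ℝ (⊤ : ℕ∞) (fderiv ℝ f.1) :=
  (SM.contDiff f).fderiv_right (by simp)

/-- Differentiation along a smooth vector field. -/
def LD (Y : SM E) : Module.End ℝ (SM E) where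
  toFun f := ⟨fun x => fderiv ℝ f.1 x (Y.1 x), (SM.contDiff_fderiv f).clm_apply (SM.contDiff Y)⟩
  map_add' f g := by
    ext x
    have := fderiv_add (SM.differentiable f x) (SM.differentiable g x)
    simp [this]
  map_smul' c f := by
    ext x
    have := fderiv_const_smul (SM.differentiable f x) c
    simp [this]

theorem LD_apply (Y f : SM E) (x : E) : (LD Y f).1 x = fderiv ℝ f.1 x (Y.1 x) := rfl

/-- Bracket of smooth vector fields. -/
def brk (Y Z : SM E) : SM E :=
  ⟨fun x => fderiv ℝ Z.1 x (Y.1 x) - fderiv ℝ Y.1 x (Z.1 x),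
    ((SM.contDiff_fderiv Z).clm_apply (SM.contDiff Y)).sub
      ((SM.contDiff_fderiv Y).clm_apply (SM.contDiff Z))⟩

theorem LD_brk (Y Z : SM E) : LD (brk Y Z) = LD Y * LD Z - LD Z * LD Y := by
  refine LinearMap.ext fun f => SM.ext (funext fun x => ?_)
  exact VectorField.fderiv_apply_lieBracket (n := (⊤ : ℕ∞)) (SM.contDiff f).contDiffAt
    (by
      simp only [minSmoothness_of_isRCLikeNormedField]
      exact WithTop.coe_le_coe.2 (le_top : (2 : ℕ∞) ≤ ⊤)) (SM.differentiable Z x) (SM.differentiable Y x)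

theorem LD_neg (Y : SM E) : LD (-Y) = - LD Y := by
  refine LinearMap.ext fun f => SM.ext (funext fun x => ?_)
  exact map_neg _ _

/-- The identity map. -/
def idS : SM E := ⟨id, (contDiff_id : ContDiff ℝ (⊤ : ℕ∞) (id : E → E))⟩

theorem LD_idS (Y : SM E) : LD Y idS = Y := by
  ext x
  simp [LD_apply, idS]

/-- Taylor expansion along a flow. -/
theorem flow_taylor [FiniteDimensional ℝ E] {V : SM E} {C : ℝ} {F : ℝ → E → E}
    (hF : IsFlow V.1 C F) (M : ℕ) : ∀ (f : SM E) (R : ℝ), ∃ B : ℝ, 0 ≤ B ∧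
      ∀ x, ‖x‖ ≤ R → ∀ s ∈ Icc (0:ℝ) 1,
      ‖f.1 (F s x) - ∑ m ∈ Finset.range M, (s ^ m * ((m.factorial : ℝ)⁻¹)) • (((LD V) ^ m) f).1 x‖
        ≤ B * s ^ M := by
  induction M with
  | zero =>
    intro f R
    have hK : IsCompact ((fun q : ℝ × E => F q.1 q.2) '' (Icc (0:ℝ) 1 ×ˢ Metric.closedBall 0 R)) :=
      (isCompact_Icc.prod (isCompact_closedBall 0 R)).image hF.cont
    obtain ⟨B, hB⟩ := hK.exists_bound_of_continuousOn (SM.contDiff f).continuous.continuousOn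
    refine ⟨max B 0, le_max_right _ _, fun x hx s hs => ?_⟩
    simp only [Finset.range_zero, Finset.sum_empty, sub_zero, pow_zero, mul_one]
    refine (hB _ ⟨(s, x), ⟨hs, by simpa using hx⟩, rfl⟩).trans (le_max_left _ _)
  | succ M ih =>
    intro f R
    obtain ⟨B, hB0, hB⟩ := ih (LD V f) R
    refine ⟨B, hB0, fun x hx s hs => ?_⟩
    set D : ℝ → E := fun s => f.1 (F s x) - ∑ m ∈ Finset.range (M+1),
      (s ^ m * ((m.factorial : ℝ)⁻¹)) • (((LD V) ^ m) f).1 x with hD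
    have hD0 : D 0 = 0 := by
      simp [hD, Finset.sum_range_succ', hF.zero]
    have hder : ∀ r ∈ Icc (0:ℝ) 1, HasDerivWithinAt D ((LD V f).1 (F r x) -
        ∑ m ∈ Finset.range M, (r ^ m * ((m.factorial : ℝ)⁻¹)) • (((LD V) ^ m) (LD V f)).1 x)
        (Icc 0 1) r := by
      intro r hr
      refine HasDerivWithinAt.sub ?_ ?_
      · exact ((SM.differentiable f (F r x)).hasFDerivAt).comp_hasDerivWithinAt r (hF.deriv x r hr)
      · have h2 : HasDerivWithinAt (fun s : ℝ => ∑ m ∈ Finset.range (M+1),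
          (s ^ m * ((m.factorial : ℝ)⁻¹)) • (((LD V) ^ m) f).1 x) (∑ m ∈ Finset.range (M+1),
            (((m:ℝ) * r ^ (m-1)) * ((m.factorial : ℝ)⁻¹)) • (((LD V) ^ m) f).1 x) (Icc 0 1) r := by
          refine HasDerivWithinAt.fun_sum fun m _ => ?_
          exact (((hasDerivAt_pow m r).mul_const _).smul_const _).hasDerivWithinAt
        convert h2 using 1
        rw [Finset.sum_range_succ']
        simp only [Nat.cast_zero, zero_mul, zero_smul, add_zero]
        refine Finset.sum_congr rfl fun m _ => ?_
        rw [pow_succ, Module.End.mul_apply]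
        congr 1
        rw [Nat.factorial_succ]
        have : (m.factorial : ℝ) ≠ 0 := by positivity
        have : ((m:ℝ) + 1) ≠ 0 := by positivity
        push_cast
        field_simp
    have hsub : Icc 0 s ⊆ Icc (0:ℝ) 1 := Icc_subset_Icc le_rfl hs.2
    have := (convex_Icc (0:ℝ) s).norm_image_sub_le_of_norm_hasDerivWithin_le (f := D)
      (C := B * s ^ M)
      (fun r hr => (hder r (hsub hr)).mono hsub)
      (fun r hr => (hB x hx r (hsub hr)).trans (by
        have := hr.1
        have := hr.2
        gcongr))
      (x := 0) (y := s) (by simp [hs.1]) (by simp [hs.1])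
    rw [hD0, sub_zero, sub_zero, Real.norm_of_nonneg hs.1] at this
    refine this.trans (le_of_eq (by ring))

end Flow

section Words

variable {E : Type*} [NormedAddCommGroup E] [NormedSpace ℝ E] {ι : Type*}

/-- Formal exponential of an element of a (noncommutative) real algebra. -/
def fexp {A : Type*} [Ring A] [Algebra ℝ A] (a : A) : PowerSeries A :=
  PowerSeries.mk fun m => ((m.factorial : ℝ)⁻¹) • a ^ m

theorem fexp_mul_neg {A : Type*} [Ring A] [Algebra ℝ A] (a : A) : fexp a * fexp (-a) = 1 := by
  have h := PowerSeries.exp_mul_exp_eq_exp_add (A := Polynomial ℝ) Polynomial.X (-Polynomial.X)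
  have h2 := congrArg (PowerSeries.map ((Polynomial.aeval a).toRingHom : Polynomial ℝ →+* A)) h
  rw [map_mul] at h2
  have h3 : ∀ q : Polynomial ℝ, PowerSeries.map ((Polynomial.aeval a).toRingHom)
      (PowerSeries.rescale q (PowerSeries.exp (Polynomial ℝ))) = fexp (Polynomial.aeval a q) := by
    intro q
    ext m
    simp only [PowerSeries.coeff_map, PowerSeries.coeff_rescale, PowerSeries.coeff_exp, fexp,
      PowerSeries.coeff_mk, AlgHom.toRingHom_eq_coe, RingHom.coe_coe, map_mul, map_pow]
    have : (algebraMap ℚ (Polynomial ℝ)) (1 / (m.factorial : ℚ))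
        = algebraMap ℝ (Polynomial ℝ) ((m.factorial : ℝ)⁻¹) := by
      rw [IsScalarTower.algebraMap_apply ℚ ℝ (Polynomial ℝ)]
      simp
    rw [this, AlgHom.commutes, Algebra.smul_def, Algebra.commutes]
  rw [h3, h3, h3] at h2
  simp only [Polynomial.aeval_X, map_neg, map_zero, add_neg_cancel] at h2
  rw [h2]
  ext m
  rcases Nat.eq_zero_or_pos m with rfl | hm
  · simp [fexp]
  · simp [fexp, PowerSeries.coeff_one, hm.ne']

theorem fexp_eq {A : Type*} [Ring A] [Algebra ℝ A] (a : A) :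
    ∃ e : PowerSeries A, fexp a = 1 + PowerSeries.X ^ 1 * e ∧ PowerSeries.constantCoeff e = a := by
  refine ⟨PowerSeries.mk fun m => (((m+1).factorial : ℝ)⁻¹) • a ^ (m+1), ?_, ?_⟩
  · ext m
    rw [pow_one]
    rcases m with _ | m
    · simp [fexp]
    · rw [map_add, PowerSeries.coeff_succ_X_mul]
      simp [fexp, PowerSeries.coeff_one]
  · rw [← PowerSeries.coeff_zero_eq_constantCoeff_apply]
    simp

/-- Inverse of a power series `1 + X^k e`. -/
theorem ps_inv {A : Type*} [Ring A] {k : ℕ} {a a' e : PowerSeries A} (h2 : a' * a = 1)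
    (he : a = 1 + PowerSeries.X ^ k * e) : a' = 1 + PowerSeries.X ^ k * (-(a' * e)) := by
  rw [he, mul_add, mul_one, ← mul_assoc,
      ← (PowerSeries.X_pow_mul : PowerSeries.X ^ k * a' = _)] at h2
  rw [mul_neg, ← mul_assoc, ← h2]
  abel

/-- Commutator of two power series. -/
theorem ps_comm {A : Type*} [Ring A] {k l : ℕ} {a b e f : PowerSeries A}
    (he : a = 1 + PowerSeries.X ^ k * e) (hf : b = 1 + PowerSeries.X ^ l * f) :
    a * b = b * a + PowerSeries.X ^ (k + l) * (e * f - f * e) := by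
  have x1 : (PowerSeries.X ^ k * e) * (PowerSeries.X ^ l * f)
      = PowerSeries.X ^ (k + l) * (e * f) := by
    rw [pow_add, mul_assoc, ← mul_assoc e, ← (PowerSeries.X_pow_mul (φ := e) (n := l))]
    simp only [mul_assoc]
  have x2 : (PowerSeries.X ^ l * f) * (PowerSeries.X ^ k * e)
      = PowerSeries.X ^ (k + l) * (f * e) := by
    rw [add_comm k l, pow_add, mul_assoc, ← mul_assoc f,
      ← (PowerSeries.X_pow_mul (φ := f) (n := k))]
    simp only [mul_assoc]
  rw [he, hf, mul_sub, ← x1, ← x2]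
  simp only [mul_add, add_mul, mul_one, one_mul]
  abel

theorem ps_comm_coeff {A : Type*} [Ring A] {e f a b : PowerSeries A}
    (ha : PowerSeries.constantCoeff a = 1) (hb : PowerSeries.constantCoeff b = 1) :
    PowerSeries.constantCoeff ((e * f - f * e) * a * b) =
      PowerSeries.constantCoeff e * PowerSeries.constantCoeff f -
      PowerSeries.constantCoeff f * PowerSeries.constantCoeff e := by
  simp [ha, hb]

theorem ps_neg_coeff {A : Type*} [Ring A] {e a : PowerSeries A}
    (ha : PowerSeries.constantCoeff a = 1) :
    PowerSeries.constantCoeff (-(a * e)) = - PowerSeries.constantCoeff e := by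
  simp [ha]

theorem fexp_neg_mul {A : Type*} [Ring A] [Algebra ℝ A] (a : A) : fexp (-a) * fexp a = 1 := by
  simpa using fexp_mul_neg (-a)

/-- Formal expansions of the composition of flows along a word. -/
def wE (V : ι → SM E) (w : List ι) : PowerSeries (Module.End ℝ (SM E)) :=
  (w.map fun a => fexp (LD (V a))).prod

/-- Composition of the flows along a word. -/
def wP (F : ι → ℝ → E → E) (w : List ι) (s : ℝ) (x : E) : E :=
  w.foldl (fun x a => F a s x) x

theorem wE_append (V : ι → SM E) (w w' : List ι) : wE V (w ++ w') = wE V w * wE V w' := by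
  simp [wE]

theorem word_taylor [FiniteDimensional ℝ E] {V : ι → SM E} {C : ℝ} {F : ι → ℝ → E → E}
    (hF : ∀ a, IsFlow (V a).1 C (F a)) (w : List ι) (M : ℕ) : ∀ (f : SM E) (R : ℝ),
      ∃ B : ℝ, 0 ≤ B ∧ ∀ x, ‖x‖ ≤ R → ∀ s ∈ Icc (0:ℝ) 1,
      ‖f.1 (wP F w s x) -
        ∑ m ∈ Finset.range M, s ^ m • ((PowerSeries.coeff m (wE V w)) f).1 x‖ ≤ B * s ^ M := by
  induction w with
  | nil =>
    intro f R
    rcases M with _ | M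
    · obtain ⟨B, hB⟩ := (isCompact_closedBall (0:E) R).exists_bound_of_continuousOn
        (SM.contDiff f).continuous.continuousOn
      refine ⟨max B 0, le_max_right _ _, fun x hx s hs => ?_⟩
      simp only [Finset.range_zero, Finset.sum_empty, sub_zero, pow_zero, mul_one]
      exact (hB x (by simpa using hx)).trans (le_max_left _ _)
    · refine ⟨0, le_rfl, fun x hx s hs => ?_⟩
      rw [Finset.sum_range_succ']
      simp [wE, wP, PowerSeries.coeff_one]
  | cons a w ih =>
    intro f R
    obtain ⟨B0, hB00, hB0⟩ := ih f (R + |C|)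
    have key := fun m : ℕ => flow_taylor (hF a) (M - m) ((PowerSeries.coeff m (wE V w)) f) R
    choose B hBn hB using key
    refine ⟨B0 + ∑ m ∈ Finset.range M, B m, add_nonneg hB00 (Finset.sum_nonneg fun m _ => hBn m),
      fun x hx s hs => ?_⟩
    set y := F a s x with hy
    have hyR : ‖y‖ ≤ R + |C| := by
      have h1 := (hF a).dist_le x s hs
      have h2 : C * s ≤ |C| := by
        calc C * s ≤ |C| * s := by gcongr; exacts [hs.1, le_abs_self _]
          _ ≤ |C| * 1 := by gcongr; exact hs.2
          _ = |C| := mul_one _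
      calc ‖y‖ = ‖x + (y - x)‖ := by congr 1; abel
        _ ≤ ‖x‖ + ‖y - x‖ := norm_add_le _ _
        _ ≤ _ := by linarith
    have e1 : wP F (a :: w) s x = wP F w s y := rfl
    have e2 : ∑ m ∈ Finset.range M, s ^ m • ((PowerSeries.coeff m (wE V (a :: w))) f).1 x
        = ∑ m ∈ Finset.range M, s ^ m • ∑ k ∈ Finset.range (M - m),
          (s ^ k * ((k.factorial : ℝ)⁻¹)) •
            (((LD (V a)) ^ k) ((PowerSeries.coeff m (wE V w)) f)).1 x := by
      have e3 := Finset.sum_range_diag_flip M (fun m k => s ^ m • (s ^ k * ((k.factorial : ℝ)⁻¹)) •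
            (((LD (V a)) ^ k) ((PowerSeries.coeff m (wE V w)) f)).1 x)
      simp only [Finset.smul_sum]
      rw [← e3]
      refine Finset.sum_congr rfl fun m _ => ?_
      have : wE V (a :: w) = fexp (LD (V a)) * wE V w := by simp [wE]
      rw [this, PowerSeries.coeff_mul, ← Finset.Nat.sum_antidiagonal_swap,
        Finset.Nat.sum_antidiagonal_eq_sum_range_succ_mk]
      simp only [LinearMap.sum_apply, SM.sum_val, Finset.sum_apply, Finset.smul_sum]
      refine Finset.sum_congr rfl fun k hk => ?_
      have hk' : k ≤ m := by simpa [Nat.lt_succ_iff] using hk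
      simp only [Prod.swap, fexp, PowerSeries.coeff_mk, Module.End.mul_apply,
        LinearMap.smul_apply, SM.smul_val, Pi.smul_apply, smul_smul]
      congr 1
      rw [← mul_assoc, ← pow_add, Nat.add_sub_cancel' hk']
    rw [e1, e2]
    calc _ = ‖(f.1 (wP F w s y) -
        ∑ m ∈ Finset.range M, s ^ m • ((PowerSeries.coeff m (wE V w)) f).1 y) +
          ∑ m ∈ Finset.range M, s ^ m • (((PowerSeries.coeff m (wE V w)) f).1 y -
          ∑ k ∈ Finset.range (M - m), (s ^ k * ((k.factorial : ℝ)⁻¹)) •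
            (((LD (V a)) ^ k) ((PowerSeries.coeff m (wE V w)) f)).1 x)‖ := by
          congr 1
          simp only [smul_sub, Finset.sum_sub_distrib]
          abel
      _ ≤ B0 * s ^ M + ∑ m ∈ Finset.range M, B m * s ^ M := by
          refine (norm_add_le _ _).trans (add_le_add (hB0 y hyR s hs) ?_)
          refine (norm_sum_le _ _).trans (Finset.sum_le_sum fun m hm => ?_)
          rw [norm_smul, norm_pow, Real.norm_of_nonneg hs.1]
          calc _ ≤ s ^ m * (B m * s ^ (M - m)) := by
                have := hs.1
                gcongr
                exact hB m x hx s hs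
            _ = B m * s ^ M := by
                rw [mul_left_comm, ← pow_add, Nat.add_sub_cancel' (Finset.mem_range.1 hm).le]
      _ = _ := by rw [add_mul, Finset.sum_mul]

/-- The word `w` realizes the vector field `Y` at order `k`, with inverse word `w'`. -/
def Good (V : ι → SM E) (Y : SM E) (k : ℕ) (w w' : List ι) : Prop :=
  0 < k ∧ wE V w * wE V w' = 1 ∧ wE V w' * wE V w = 1 ∧
    ∃ e, wE V w = 1 + PowerSeries.X ^ k * e ∧ PowerSeries.constantCoeff e = LD Y

theorem Good.symm {V : ι → SM E} {Y : SM E} {k : ℕ} {w w' : List ι} (h : Good V Y k w w') :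
    Good V (-Y) k w' w := by
  obtain ⟨hk, h1, h2, e, he, hc⟩ := h
  refine ⟨hk, h2, h1, -(wE V w' * e), ?_, ?_⟩
  · exact ps_inv h2 he
  · have h0 : PowerSeries.constantCoeff (wE V w) = 1 := by
      rw [he]
      simp [hk.ne']
    have h3 := congrArg PowerSeries.constantCoeff h2
    rw [map_mul, h0, mul_one, map_one] at h3
    rw [ps_neg_coeff h3, hc, LD_neg]

theorem Good.const {V : ι → SM E} {Y : SM E} {k : ℕ} {w w' : List ι} (h : Good V Y k w w') :
    PowerSeries.constantCoeff (wE V w) = 1 := by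
  obtain ⟨hk, h1, h2, e, he, hc⟩ := h
  rw [he]
  simp [hk.ne']

theorem Good.brk {V : ι → SM E} {Y Z : SM E} {k l : ℕ} {w w' v v' : List ι}
    (h : Good V Y k w w') (g : Good V Z l v v') :
    Good V (brk Y Z) (k + l) (w ++ v ++ w' ++ v') (v ++ w ++ v' ++ w') := by
  have c1 := h.symm.const
  have c2 := g.symm.const
  obtain ⟨hk, h1, h2, e, he, hc⟩ := h
  obtain ⟨hl, g1, g2, f, hf, hd⟩ := g
  simp only [Good, wE_append]
  set a := wE V w
  set a' := wE V w'
  set b := wE V v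
  set b' := wE V v'
  have hbaab : b * a * a' * b' = 1 := by
    rw [mul_assoc b a a', h1, mul_one, g1]
  refine ⟨by omega, ?_, ?_, (e * f - f * e) * a' * b', ?_, ?_⟩
  · calc a * b * a' * b' * (b * a * b' * a') = a * b * a' * (b' * b) * a * b' * a' := by
          simp only [mul_assoc]
      _ = a * b * (a' * a) * b' * a' := by rw [g2, mul_one]; simp only [mul_assoc]
      _ = a * (b * b') * a' := by rw [h2, mul_one]; simp only [mul_assoc]
      _ = 1 := by rw [g1, mul_one, h1]
  · calc b * a * b' * a' * (a * b * a' * b') = b * a * b' * (a' * a) * b * a' * b' := by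
          simp only [mul_assoc]
      _ = b * a * (b' * b) * a' * b' := by rw [h2, mul_one]; simp only [mul_assoc]
      _ = b * (a * a') * b' := by rw [g2, mul_one]; simp only [mul_assoc]
      _ = 1 := by rw [h1, mul_one, g1]
  · have key := ps_comm he hf
    rw [key]
    calc (b * a + PowerSeries.X ^ (k + l) * (e * f - f * e)) * a' * b'
        = b * a * a' * b' + PowerSeries.X ^ (k + l) * (e * f - f * e) * a' * b' := by
          simp only [add_mul]
      _ = _ := by rw [hbaab]; simp only [mul_assoc]
  · rw [LD_brk, ps_comm_coeff c1 c2, hc, hd]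

theorem good_letter {V : ι → SM E} {a a' : ι} (h : V a' = - V a) : Good V (V a) 1 [a] [a'] := by
  have e1 : wE V [a] = fexp (LD (V a)) := by simp [wE]
  have e2 : wE V [a'] = fexp (-LD (V a)) := by simp [wE, h, LD_neg]
  refine ⟨one_pos, ?_, ?_, ?_⟩
  · rw [e1, e2, fexp_mul_neg]
  · rw [e1, e2]
    exact fexp_neg_mul _
  · rw [e1]
    exact fexp_eq _

theorem Good.estimate [FiniteDimensional ℝ E] {V : ι → SM E} {C : ℝ} {F : ι → ℝ → E → E}
    (hF : ∀ a, IsFlow (V a).1 C (F a)) {Y : SM E} {k : ℕ} {w w' : List ι} (h : Good V Y k w w')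
    (R : ℝ) : ∃ B : ℝ, 0 ≤ B ∧ ∀ x, ‖x‖ ≤ R → ∀ s ∈ Icc (0:ℝ) 1,
      ‖wP F w s x - x - s ^ k • Y.1 x‖ ≤ B * s ^ (k + 1) := by
  obtain ⟨B, hB0, hB⟩ := word_taylor hF w (k + 1) idS R
  refine ⟨B, hB0, fun x hx s hs => ?_⟩
  have := hB x hx s hs
  obtain ⟨hk, h1, h2, e, he, hc⟩ := h
  obtain ⟨j, rfl⟩ : ∃ j, k = j + 1 := ⟨k - 1, by omega⟩
  rw [Finset.sum_range_succ, Finset.sum_range_succ', Finset.sum_eq_zero] at this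
  · have c0 : PowerSeries.coeff 0 (wE V w) = 1 := by simp [he]
    have c1 : PowerSeries.coeff (j + 1) (wE V w) = LD Y := by
      rw [he, map_add, PowerSeries.coeff_X_pow_mul', if_pos le_rfl, Nat.sub_self,
        PowerSeries.coeff_zero_eq_constantCoeff_apply, hc, PowerSeries.coeff_one,
        if_neg (by omega), zero_add]
    rw [c0, c1, LD_idS] at this
    simpa [idS, sub_sub] using this
  · intro m hm
    have hm' : m < j := by simpa using hm
    rw [he, map_add, PowerSeries.coeff_X_pow_mul', if_neg (by omega), PowerSeries.coeff_one,
      if_neg (by omega)]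
    simp

/-- First order form of the estimate. -/
theorem Good.littleO [FiniteDimensional ℝ E] {V : ι → SM E} {C : ℝ} {F : ι → ℝ → E → E}
    (hF : ∀ a, IsFlow (V a).1 C (F a)) {Y : SM E} {k : ℕ} {w w' : List ι} (h : Good V Y k w w')
    (x₀ : E) (ε : ℝ) (hε : 0 < ε) : ∃ δ : ℝ, 0 < δ ∧ δ ≤ 1 ∧ ∀ x, ‖x - x₀‖ ≤ δ → ∀ c, 0 ≤ c →
      c ≤ δ → ‖wP F w (c ^ ((k:ℝ)⁻¹)) x - x - c • Y.1 x₀‖ ≤ ε * c := by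
  obtain ⟨B, hB0, hB⟩ := h.estimate hF (‖x₀‖ + 1)
  have hk := h.1
  have hk' : (k:ℝ) ≠ 0 := by exact_mod_cast hk.ne'
  have hcY : ContinuousAt Y.1 x₀ := (SM.contDiff Y).continuous.continuousAt
  obtain ⟨δ1, hδ1, h1⟩ := Metric.continuousAt_iff.1 hcY (ε / 2) (by positivity)
  have hcs : ContinuousAt (fun c : ℝ => B * c ^ ((k:ℝ)⁻¹)) 0 :=
    (continuousAt_const.mul (Real.continuousAt_rpow_const _ _ (Or.inr (by positivity))))
  obtain ⟨δ2, hδ2, h2⟩ := Metric.continuousAt_iff.1 hcs (ε / 2) (by positivity)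
  refine ⟨min 1 (min (δ1 / 2) (δ2 / 2)), by positivity, min_le_left _ _, fun x hx c hc0 hc => ?_⟩
  simp only [le_min_iff] at hx hc
  set s := c ^ ((k:ℝ)⁻¹) with hs
  have hs0 : 0 ≤ s := Real.rpow_nonneg hc0 _
  have hs1 : s ≤ 1 := Real.rpow_le_one hc0 hc.1 (by positivity)
  have hsk : s ^ k = c := by
    rw [hs, ← Real.rpow_natCast, ← Real.rpow_mul hc0, inv_mul_cancel₀ hk', Real.rpow_one]
  have hxR : ‖x‖ ≤ ‖x₀‖ + 1 := by
    calc ‖x‖ = ‖x₀ + (x - x₀)‖ := by congr 1; abel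
      _ ≤ _ := (norm_add_le _ _).trans (by linarith [hx.1])
  have a1 := hB x hxR s ⟨hs0, hs1⟩
  have a2 : ‖Y.1 x - Y.1 x₀‖ ≤ ε / 2 := by
    rw [← dist_eq_norm]
    exact (h1 (by rw [dist_eq_norm]; linarith [hx.2.1])).le
  have a3 : B * s ≤ ε / 2 := by
    have := h2 (x := c) (by rw [dist_zero_right, Real.norm_of_nonneg hc0]; linarith [hc.2.2])
    rw [Real.zero_rpow (by positivity), mul_zero, dist_zero_right, Real.norm_of_nonneg
      (by positivity)] at this
    exact this.le
  calc ‖wP F w s x - x - c • Y.1 x₀‖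
      = ‖(wP F w s x - x - s ^ k • Y.1 x) + c • (Y.1 x - Y.1 x₀)‖ := by
        rw [hsk, smul_sub]; congr 1; abel
    _ ≤ B * s ^ (k + 1) + c * (ε / 2) := by
        refine (norm_add_le _ _).trans (add_le_add a1 ?_)
        rw [norm_smul, Real.norm_of_nonneg hc0]
        gcongr
    _ = (B * s) * c + c * (ε / 2) := by rw [pow_succ, hsk]; ring
    _ ≤ (ε / 2) * c + c * (ε / 2) := by gcongr
    _ = ε * c := by ring

end Words

section Step

variable {E : Type*} [NormedAddCommGroup E] [NormedSpace ℝ E] {ι : Type*}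

/-- Run a list of bangs, with durations depending on the parameter `v`. -/
def runL (F : ι → ℝ → E → E) (L : List (ι × (E → ℝ))) (v x : E) : E :=
  L.foldl (fun x b => F b.1 (b.2 v) x) x

/-- A direction together with the word that realizes it. -/
structure Item (V : ι → SM E) where
  /-- the vector field -/
  Y : SM E
  /-- the order -/
  k : ℕ
  /-- the word -/
  w : List ι
  /-- the coefficient -/
  c : E → ℝ
  /-- the bound -/
  A : ℝ
  good : ∃ w', Good V Y k w w'
  c_cont : Continuous c
  c_nonneg : ∀ v, 0 ≤ c v
  A_pos : 0 < A
  c_le : ∀ v, c v ≤ A * ‖v‖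

/-- The bangs of an item. -/
def Item.bangs {V : ι → SM E} (j : Item V) : List (ι × (E → ℝ)) :=
  j.w.map fun a => (a, fun v => j.c v ^ ((j.k : ℝ)⁻¹))

theorem Item.run {V : ι → SM E} (j : Item V) (F : ι → ℝ → E → E) (v x : E) :
    runL F j.bangs v x = wP F j.w (j.c v ^ ((j.k : ℝ)⁻¹)) x := by
  simp [runL, Item.bangs, wP, List.foldl_map]

theorem runL_append (F : ι → ℝ → E → E) (L L' : List (ι × (E → ℝ))) (v x : E) :
    runL F (L ++ L') v x = runL F L' v (runL F L v x) := by
  simp [runL]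

theorem items_estimate [FiniteDimensional ℝ E] {V : ι → SM E} {C : ℝ} {F : ι → ℝ → E → E}
    (hF : ∀ a, IsFlow (V a).1 C (F a)) (x₀ : E) (J : List (Item V)) : ∀ ε : ℝ, 0 < ε →
    ∃ δ : ℝ, 0 < δ ∧ ∀ x, ‖x - x₀‖ ≤ δ → ∀ v, ‖v‖ ≤ δ →
      ‖runL F (J.flatMap Item.bangs) v x - x - (J.map fun j => j.c v • j.Y.1 x₀).sum‖
        ≤ ε * ‖v‖ := by
  induction J with
  | nil =>
    intro ε hε
    refine ⟨1, one_pos, fun x _ v _ => ?_⟩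
    simp [runL]
    positivity
  | cons j J ih =>
    intro ε hε
    obtain ⟨δ', hδ', h'⟩ := ih (ε / 2) (by positivity)
    obtain ⟨w', hg⟩ := j.good
    have hA := j.A_pos
    obtain ⟨δ1, hδ1, hδ1', h1⟩ := hg.littleO hF x₀ (ε / 2 / j.A) (by positivity)
    set Q : ℝ := 1 + ε / 2 + j.A * ‖j.Y.1 x₀‖ with hQ
    have hQ1 : 0 < Q := by positivity
    refine ⟨min δ' (min (δ' / Q) (min δ1 (δ1 / j.A))), by positivity, fun x hx v hv => ?_⟩
    simp only [le_min_iff] at hx hv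
    set x1 := runL F j.bangs v x with hx1
    have hc := j.c_le v
    have hc0 := j.c_nonneg v
    have hvA : j.A * ‖v‖ ≤ δ1 := by
      have := hv.2.2.2
      rw [le_div_iff₀ hA] at this
      linarith
    have a1 : ‖x1 - x - j.c v • j.Y.1 x₀‖ ≤ ε / 2 * ‖v‖ := by
      have := h1 x hx.2.2.1 (j.c v) hc0 (hc.trans hvA)
      rw [hx1, Item.run]
      refine this.trans ?_
      calc ε / 2 / j.A * j.c v ≤ ε / 2 / j.A * (j.A * ‖v‖) := by gcongr
        _ = ε / 2 * ‖v‖ := by field_simp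
    have a2 : ‖x1 - x₀‖ ≤ δ' := by
      set μ := min (δ' / Q) δ' with hμ
      have hQx := hx.2.1
      have hQv := hv.2.1
      rw [le_div_iff₀ hQ1] at hQx hQv
      have : x1 - x₀ = (x - x₀) + (x1 - x - j.c v • j.Y.1 x₀) + j.c v • j.Y.1 x₀ := by abel
      rw [this]
      have n3 : ‖j.c v • j.Y.1 x₀‖ ≤ j.A * ‖v‖ * ‖j.Y.1 x₀‖ := by
        rw [norm_smul, Real.norm_of_nonneg hc0]
        gcongr
      have n4 := norm_add₃_le (a := x - x₀) (b := x1 - x - j.c v • j.Y.1 x₀)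
        (c := j.c v • j.Y.1 x₀)
      have hxle := hx.2.1
      have hvle := hv.2.1
      calc _ ≤ ‖x - x₀‖ + ε / 2 * ‖v‖ + j.A * ‖v‖ * ‖j.Y.1 x₀‖ := by linarith
        _ ≤ δ' / Q + ε / 2 * (δ' / Q) + j.A * (δ' / Q) * ‖j.Y.1 x₀‖ := by gcongr
        _ = (δ' / Q) * Q := by rw [hQ]; ring
        _ = δ' := by field_simp
    have a3 := h' x1 a2 v hv.1
    rw [List.flatMap_cons, runL_append, ← hx1, List.map_cons, List.sum_cons]
    calc _ = ‖(x1 - x - j.c v • j.Y.1 x₀) + (runL F (J.flatMap Item.bangs) v x1 - x1 -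
          (J.map fun j => j.c v • j.Y.1 x₀).sum)‖ := by congr 1; abel
      _ ≤ ε / 2 * ‖v‖ + ε / 2 * ‖v‖ := (norm_add_le _ _).trans (add_le_add a1 a3)
      _ = ε * ‖v‖ := by ring

theorem items_duration {V : ι → SM E} (J : List (Item V)) :
    ∃ D α : ℝ, 0 ≤ D ∧ 0 < α ∧ ∀ b ∈ J.flatMap Item.bangs, ∀ v, ‖v‖ ≤ 1 →
      b.2 v ≤ D * ‖v‖ ^ α := by
  induction J with
  | nil => exact ⟨0, 1, le_rfl, one_pos, by simp⟩
  | cons j J ih =>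
    obtain ⟨D, α, hD, hα, h⟩ := ih
    obtain ⟨w', hg⟩ := j.good
    have hk : (0:ℝ) < (j.k : ℝ)⁻¹ := by have := hg.1; positivity
    have hA := j.A_pos
    refine ⟨D + j.A ^ ((j.k : ℝ)⁻¹), min α ((j.k : ℝ)⁻¹), by positivity, lt_min hα hk, ?_⟩
    intro b hb v hv
    have hv0 := norm_nonneg v
    rw [List.flatMap_cons, List.mem_append] at hb
    have hm : 0 < min α ((j.k : ℝ)⁻¹) := lt_min hα hk
    rcases hb with hb | hb
    · simp only [Item.bangs, List.mem_map] at hb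
      obtain ⟨a, _, rfl⟩ := hb
      have hc0 := j.c_nonneg v
      calc j.c v ^ ((j.k : ℝ)⁻¹) ≤ (j.A * ‖v‖) ^ ((j.k : ℝ)⁻¹) :=
            Real.rpow_le_rpow hc0 (j.c_le v) hk.le
        _ = j.A ^ ((j.k : ℝ)⁻¹) * ‖v‖ ^ ((j.k : ℝ)⁻¹) := Real.mul_rpow hA.le hv0
        _ ≤ (D + j.A ^ ((j.k : ℝ)⁻¹)) * ‖v‖ ^ (min α ((j.k : ℝ)⁻¹)) := by
            refine mul_le_mul ?_ (Real.rpow_le_rpow_of_exponent_ge' hv0 hv hm.le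
              (min_le_right _ _)) (Real.rpow_nonneg hv0 _) (by positivity)
            linarith
    · refine (h b hb v hv).trans ?_
      refine mul_le_mul ?_ (Real.rpow_le_rpow_of_exponent_ge' hv0 hv hm.le
        (min_le_left _ _)) (Real.rpow_nonneg hv0 _) (by positivity)
      have := Real.rpow_nonneg hA.le ((j.k : ℝ)⁻¹)
      linarith

/-- The basic approximate steering step. -/
theorem exists_step [FiniteDimensional ℝ E] {V : ι → SM E} {C : ℝ} {F : ι → ℝ → E → E}
    (hF : ∀ a, IsFlow (V a).1 C (F a)) (x₀ : E)
    (hspan : Submodule.span ℝ {y | ∃ (Y : SM E) (k : ℕ) (w w' : List ι),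
      Good V Y k w w' ∧ Y.1 x₀ = y} = ⊤) :
    ∃ (L : List (ι × (E → ℝ))) (D α ρ : ℝ), 0 ≤ D ∧ 0 < α ∧ 0 < ρ ∧
      (∀ b ∈ L, Continuous b.2 ∧ ∀ v, 0 ≤ b.2 v) ∧
      (∀ b ∈ L, ∀ v, ‖v‖ ≤ ρ → b.2 v ≤ D * ‖v‖ ^ α ∧ b.2 v ≤ 1) ∧
      ∀ x, ‖x - x₀‖ ≤ ρ → ∀ v, ‖v‖ ≤ ρ → ‖runL F L v x - (x + v)‖ ≤ 1 / 2 * ‖v‖ := by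
  have hJ : ∃ J : List (Item V), ∀ v, (J.map fun j => j.c v • j.Y.1 x₀).sum = v := by
    let b := Module.Basis.ofSpan hspan.ge
    have hb : ∀ i, ∃ (Y : SM E) (k : ℕ) (w w' : List ι), Good V Y k w w' ∧ Y.1 x₀ = b i :=
      fun i => Module.Basis.ofSpan_subset hspan.ge ⟨i, rfl⟩
    choose Y k w w' hg hY using hb
    haveI := FiniteDimensional.fintypeBasisIndex b
    have hlin : ∀ i, ∃ A : ℝ, 0 < A ∧ ∀ v, |b.repr v i| ≤ A * ‖v‖ := by
      intro i
      let ℓ : E →L[ℝ] ℝ := LinearMap.toContinuousLinearMap (b.coord i)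
      refine ⟨‖ℓ‖ + 1, by positivity, fun v => ?_⟩
      have := ℓ.le_opNorm v
      have h2 : ℓ v = b.repr v i := rfl
      rw [h2, Real.norm_eq_abs] at this
      nlinarith [norm_nonneg v]
    choose A hA hAle using hlin
    have hcont : ∀ i, Continuous fun v => b.repr v i := fun i =>
      (LinearMap.toContinuousLinearMap (b.coord i)).continuous
    let plus : _ → Item V := fun i => ⟨Y i, k i, w i, fun v => max (b.repr v i) 0, A i,
      ⟨w' i, hg i⟩, (hcont i).max continuous_const, fun v => le_max_right _ _, hA i, fun v =>
        max_le ((le_abs_self _).trans (hAle i v)) (mul_nonneg (hA i).le (norm_nonneg v))⟩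
    let minus : _ → Item V := fun i => ⟨-Y i, k i, w' i, fun v => max (-b.repr v i) 0, A i,
      ⟨w i, (hg i).symm⟩, (hcont i).neg.max continuous_const, fun v => le_max_right _ _, hA i,
      fun v => max_le ((neg_le_abs _).trans (hAle i v)) (mul_nonneg (hA i).le (norm_nonneg v))⟩
    refine ⟨Finset.univ.toList.flatMap fun i => [plus i, minus i], fun v => ?_⟩
    have h1 : ∀ l : List _, ((l.flatMap fun i => [plus i, minus i]).map
        fun j => j.c v • j.Y.1 x₀).sum = (l.map fun i => b.repr v i • b i).sum := by
      intro l
      induction l with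
      | nil => simp
      | cons i l ih =>
        rw [List.flatMap_cons, List.map_append, List.sum_append, ih, List.map_cons, List.sum_cons]
        congr 1
        simp only [plus, minus, List.map_cons, List.map_nil, List.sum_cons, List.sum_nil, add_zero,
          SM.neg_val, Pi.neg_apply, hY, smul_neg, ← sub_eq_add_neg, ← sub_smul]
        congr 1
        rcases le_total 0 (b.repr v i) with h | h
        · simp [h]
        · simp [h]
    rw [h1, Finset.sum_map_toList]
    exact b.sum_repr v
  obtain ⟨J, hJ⟩ := hJ
  obtain ⟨δ, hδ, hest⟩ := items_estimate hF x₀ J (1/2) (by norm_num)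
  obtain ⟨D, α, hD, hα, hdur⟩ := items_duration J
  have hcs : ContinuousAt (fun c : ℝ => D * c ^ α) 0 :=
    (continuousAt_const.mul (Real.continuousAt_rpow_const _ _ (Or.inr hα.le)))
  obtain ⟨δ2, hδ2, h2⟩ := Metric.continuousAt_iff.1 hcs 1 one_pos
  refine ⟨J.flatMap Item.bangs, D, α, min δ (min 1 (δ2 / 2)), hD, hα, by positivity, ?_, ?_, ?_⟩
  · intro b hb
    obtain ⟨j, _, hb⟩ := List.mem_flatMap.1 hb
    simp only [Item.bangs, List.mem_map] at hb
    obtain ⟨a, _, rfl⟩ := hb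
    exact ⟨j.c_cont.rpow_const fun v => Or.inr (by positivity), fun v =>
      Real.rpow_nonneg (j.c_nonneg v) _⟩
  · intro b hb v hv
    simp only [le_min_iff] at hv
    have := hdur b hb v hv.2.1
    refine ⟨this, this.trans ?_⟩
    have h3 := h2 (x := ‖v‖) (by rw [dist_zero_right, norm_norm]; linarith [hv.2.2])
    rw [Real.zero_rpow hα.ne', mul_zero, dist_zero_right] at h3
    exact (le_abs_self _).trans h3.le
  · intro x hx v hv
    simp only [le_min_iff] at hv hx
    have := hest x hx.1 v hv.1
    rwa [hJ v, sub_sub] at this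

end Step

section Bang

variable {E : Type*} [NormedAddCommGroup E] [NormedSpace ℝ E] {ι : Type*}
  {U : Type*} [NormedAddCommGroup U] [NormedSpace ℝ U]

/-- switching times -/
def bS (s : ℕ → ℝ) (M : ℕ) : ℝ := ∑ k ∈ Finset.range M, s k

theorem bS_succ (s : ℕ → ℝ) (M : ℕ) : bS s (M + 1) = bS s M + s M := Finset.sum_range_succ _ _

/-- control after `M` bangs -/
def bu (ev : ℕ → U) (s : ℕ → ℝ) : ℕ → ℝ → U
  | 0, _ => 0
  | M + 1, t => (Ico (bS s M) (bS s (M + 1))).indicator (fun _ => ev M) t + bu ev s M t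

/-- trajectory after `M` bangs -/
def bg (F : ℕ → ℝ → E → E) (x : E) (s : ℕ → ℝ) : ℕ → ℝ → E
  | 0, _ => x
  | M + 1, t => F M (max 0 (min (t - bS s M) (s M))) (bg F x s M t)

theorem bu_zero {ev : ℕ → U} {s : ℕ → ℝ} (hs : ∀ k, 0 ≤ s k) (M : ℕ) (t : ℝ)
    (ht : bS s M ≤ t) : bu ev s M t = 0 := by
  induction M with
  | zero => rfl
  | succ M ih =>
    have h1 := bS_succ s M
    have h2 := hs M
    rw [bu, ih (by linarith), add_zero, indicator_of_notMem]
    exact fun h => absurd h.2 (not_lt.2 ht)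

theorem bu_eq {ev : ℕ → U} {s : ℕ → ℝ} (hs : ∀ k, 0 ≤ s k) (M : ℕ) (t : ℝ) :
    bu ev s (M + 1) t = if t ∈ Ico (bS s M) (bS s (M + 1)) then ev M else bu ev s M t := by
  rw [bu]
  split_ifs with h
  · rw [bu_zero hs M t h.1, indicator_of_mem h, add_zero]
  · rw [indicator_of_notMem h, zero_add]

theorem bu_norm {ev : ℕ → U} {s : ℕ → ℝ} (hs : ∀ k, 0 ≤ s k) (hev : ∀ k, ‖ev k‖ ≤ 1)
    (M : ℕ) (t : ℝ) : ‖bu ev s M t‖ ≤ 1 := by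
  induction M with
  | zero => simp [bu]
  | succ M ih =>
    rw [bu_eq hs]
    split_ifs
    · exact hev M
    · exact ih

theorem bu_meas (ev : ℕ → U) (s : ℕ → ℝ) (M : ℕ) : StronglyMeasurable (bu ev s M) := by
  induction M with
  | zero => exact stronglyMeasurable_const
  | succ M ih =>
    exact (stronglyMeasurable_const.indicator measurableSet_Ico).add ih

variable {F : ℕ → ℝ → E → E} {V : ℕ → E → E} {C : ℝ}

theorem bg_cont (hF : ∀ k, IsFlow (V k) C (F k)) (x : E) (s : ℕ → ℝ) (M : ℕ) :
    Continuous (bg F x s M) := by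
  induction M with
  | zero => exact continuous_const
  | succ M ih =>
    exact (hF M).cont.comp (f := fun t => (max 0 (min (t - bS s M) (s M)), bg F x s M t))
      (by fun_prop)

theorem bg_of_le (hF : ∀ k, IsFlow (V k) C (F k)) (x : E) {s : ℕ → ℝ} (M : ℕ) (t : ℝ)
    (ht : t ≤ bS s M) : bg F x s (M + 1) t = bg F x s M t := by
  rw [bg, max_eq_left, (hF M).zero]
  exact (min_le_left _ _).trans (by linarith)

theorem bg_of_ge {x : E} {s : ℕ → ℝ} (hs : ∀ k, 0 ≤ s k) {z : ℕ → E} (hz0 : z 0 = x)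
    (hz : ∀ k, z (k + 1) = F k (s k) (z k)) (M : ℕ) (t : ℝ)
    (ht : bS s M ≤ t) : bg F x s M t = z M := by
  induction M with
  | zero => exact hz0.symm
  | succ M ih =>
    have h1 := bS_succ s M
    have h2 := hs M
    rw [bg, ih (by linarith), hz, min_eq_right (by linarith), max_eq_right h2]

theorem bg_dist (hF : ∀ k, IsFlow (V k) C (F k)) (hC : 0 ≤ C) (x : E) {s : ℕ → ℝ}
    (hs : ∀ k, 0 ≤ s k)
    (hs1 : ∀ k, s k ≤ 1) (M : ℕ) (t : ℝ) :
    dist (bg F x s M t) (bg F x s (M + 1) t) ≤ C * s M := by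
  have h2 := hs M
  rw [bg, dist_comm, dist_eq_norm]
  have h3 : max 0 (min (t - bS s M) (s M)) ≤ s M := max_le h2 (min_le_right _ _)
  exact ((hF M).dist_le _ _ ⟨le_max_left _ _, h3.trans (hs1 M)⟩).trans (by gcongr)

theorem bS_nonneg {s : ℕ → ℝ} (hs : ∀ k, 0 ≤ s k) (M : ℕ) : 0 ≤ bS s M :=
  Finset.sum_nonneg fun k _ => hs k

theorem bg_aux [CompleteSpace E] (hF : ∀ k, IsFlow (V k) C (F k)) (hV : ∀ k, Continuous (V k))
    {s : ℕ → ℝ} (hs : ∀ k, 0 ≤ s k) (hs1 : ∀ k, s k ≤ 1) {x : E} {z : ℕ → E} (hz0 : z 0 = x)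
    (hz : ∀ k, z (k + 1) = F k (s k) (z k)) (M : ℕ) (t : ℝ) (ht : 0 ≤ t) :
    ∫ r in (0:ℝ)..t, (Ico (bS s M) (bS s (M + 1))).indicator
      (fun r => V M (bg F x s (M + 1) r)) r = bg F x s (M + 1) t - bg F x s M t := by
  have hS := bS_succ s M
  have hsM := hs M
  have hS0 := bS_nonneg hs M
  rcases le_total t (bS s M) with h | h
  · rw [bg_of_le hF x M t h, sub_self]
    rw [intervalIntegral.integral_congr_Ioo_of_le ht (g := fun _ => (0:E))]
    · simp
    · intro r hr
      exact indicator_of_notMem (fun h' => by linarith [h'.1, hr.2]) _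
  · set e := min t (bS s (M + 1)) with he
    have he1 : bS s M ≤ e := le_min h (by linarith)
    have he2 : e ≤ t := min_le_left _ _
    have h1 : ∫ r in (0:ℝ)..t, (Ico (bS s M) (bS s (M + 1))).indicator
      (fun r => V M (bg F x s (M + 1) r)) r = ∫ r in (bS s M)..e, V M (bg F x s (M + 1) r) := by
      rw [intervalIntegral.integral_of_le ht, intervalIntegral.integral_of_le he1,
        ← integral_Icc_eq_integral_Ioc, ← integral_Ico_eq_integral_Ioc,
        integral_Icc_eq_integral_Ico, setIntegral_indicator measurableSet_Ico]
      congr 2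
      ext r
      simp only [mem_inter_iff, mem_Ico, he, lt_min_iff]
      constructor
      · rintro ⟨⟨_, h2⟩, h3, h4⟩; exact ⟨h3, h2, h4⟩
      · rintro ⟨h3, h2, h4⟩; exact ⟨⟨by linarith, h2⟩, h3, h4⟩
    have hes : e - bS s M ≤ s M := by
      have := min_le_right t (bS s (M + 1)); linarith
    have h2 : ∀ r ∈ Icc (bS s M) e, bg F x s (M + 1) r = F M (r - bS s M) (z M) := by
      intro r hr
      rw [bg, bg_of_ge hs hz0 hz M r hr.1, min_eq_left (by linarith [hr.2]),
        max_eq_right (by linarith [hr.1])]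
    have h3 : bg F x s (M + 1) t = bg F x s (M + 1) e := by
      rcases le_total t (bS s (M + 1)) with h' | h'
      · rw [he, min_eq_left h']
      · rw [he, min_eq_right h', bg_of_ge hs hz0 hz _ _ h', bg_of_ge hs hz0 hz _ _ le_rfl]
    rw [h1, h3, bg_of_ge hs hz0 hz M t h, ← bg_of_ge hs hz0 hz M (bS s M) le_rfl,
      ← bg_of_le hF x M (bS s M) le_rfl]
    refine intervalIntegral.integral_eq_sub_of_hasDeriv_right_of_le he1
      (bg_cont hF x s (M + 1)).continuousOn ?_
      (((hV M).comp (bg_cont hF x s (M + 1))).intervalIntegrable _ _)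
    intro r hr
    have hr1 : r - bS s M ∈ Ioo (0:ℝ) 1 := ⟨by linarith [hr.1], by linarith [hr.2, hs1 M]⟩
    have hd := ((hF M).deriv (z M) (r - bS s M) ⟨hr1.1.le, hr1.2.le⟩).hasDerivAt
      (Icc_mem_nhds hr1.1 hr1.2)
    have hd2 := hd.comp_sub_const r (bS s M)
    rw [← h2 r ⟨hr.1.le, hr.2.le⟩] at hd2
    refine (hd2.congr_of_eventuallyEq ?_).hasDerivWithinAt
    filter_upwards [Icc_mem_nhds hr.1 hr.2] with r' hr'
    exact h2 r' hr'

theorem bg_int [CompleteSpace E] (hF : ∀ k, IsFlow (V k) C (F k)) (hV : ∀ k, Continuous (V k))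
    {Φ : U → E → E} (hΦc : Continuous (fun q : U × E => Φ q.1 q.2)) (hΦ0 : ∀ y, Φ 0 y = 0)
    {B : ℝ} (hΦB : ∀ w y, ‖Φ w y‖ ≤ B * ‖w‖)
    {ev : ℕ → U} (hev : ∀ k, ‖ev k‖ ≤ 1) (hevV : ∀ k y, Φ (ev k) y = V k y)
    {s : ℕ → ℝ} (hs : ∀ k, 0 ≤ s k) (hs1 : ∀ k, s k ≤ 1) {x : E} {z : ℕ → E} (hz0 : z 0 = x)
    (hz : ∀ k, z (k + 1) = F k (s k) (z k)) (M : ℕ) (t : ℝ) (ht : 0 ≤ t) :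
    bg F x s M t = x + ∫ r in (0:ℝ)..t, Φ (bu ev s M r) (bg F x s M r) := by
  induction M generalizing t with
  | zero => simp [bg, bu, hΦ0]
  | succ M ih =>
    have hsplit : ∀ r, Φ (bu ev s (M + 1) r) (bg F x s (M + 1) r) =
        Φ (bu ev s M r) (bg F x s M r) + (Ico (bS s M) (bS s (M + 1))).indicator
          (fun r => V M (bg F x s (M + 1) r)) r := by
      intro r
      rw [bu_eq hs]
      split_ifs with h
      · rw [bu_zero hs M r h.1, hΦ0, zero_add, indicator_of_mem h, hevV]
      · rw [indicator_of_notMem h, add_zero]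
        rcases le_total r (bS s M) with h' | h'
        · rw [bg_of_le hF x M r h']
        · rw [bu_zero hs M r h', hΦ0, hΦ0]
    have hB : 0 ≤ B ∨ ∀ w y, Φ w y = 0 := by
      by_cases hB : 0 ≤ B
      · exact Or.inl hB
      · right
        intro w y
        have := hΦB w y
        have h2 : ‖Φ w y‖ ≤ 0 := this.trans
          (mul_nonpos_of_nonpos_of_nonneg (not_le.1 hB).le (norm_nonneg _))
        exact norm_le_zero_iff.1 h2
    have hint : IntervalIntegrable (fun r => Φ (bu ev s M r) (bg F x s M r)) volume 0 t := by
      refine (intervalIntegrable_const (c := |B|)).mono_fun ?_ ?_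
      · exact (hΦc.comp_stronglyMeasurable ((bu_meas ev s M).prodMk
          (bg_cont hF x s M).stronglyMeasurable)).aestronglyMeasurable
      · refine Eventually.of_forall fun r => (hΦB _ _).trans ?_
        have := bu_norm hs hev M r
        simp only [Real.norm_eq_abs, abs_abs]
        calc B * ‖bu ev s M r‖ ≤ |B| * 1 := mul_le_mul (le_abs_self _) this (norm_nonneg _)
              (abs_nonneg _)
          _ = |B| := mul_one _
    have hint2 : IntervalIntegrable ((Ico (bS s M) (bS s (M + 1))).indicator
          (fun r => V M (bg F x s (M + 1) r))) volume 0 t := by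
      have := ((hV M).comp (bg_cont hF x s (M + 1))).intervalIntegrable (μ := volume) 0 t
      exact ⟨this.1.indicator measurableSet_Ico, this.2.indicator measurableSet_Ico⟩
    simp only [hsplit]
    rw [intervalIntegral.integral_add hint hint2, bg_aux hF hV hs hs1 hz0 hz M t ht, ← add_assoc,
      ← ih t ht]
    abel

end Bang
section Inf

variable {E : Type*} [NormedAddCommGroup E] [NormedSpace ℝ E]
  {U : Type*} [NormedAddCommGroup U] [NormedSpace ℝ U]

theorem half_fin (a b : ℝ) : (volume.restrict (Ici (0:ℝ))) (Ico a b) ≠ ⊤ := by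
  refine ne_top_of_le_ne_top ?_ (Measure.restrict_apply_le _ _)
  simp

/-- A single bang, as an element of `L^p`. -/
def bang (p : ℝ≥0∞) (c : U) (a b : ℝ) : Lp U p (volume.restrict (Ici (0:ℝ))) :=
  indicatorConstLp p measurableSet_Ico (half_fin a b) c

theorem bang_cont (p : ℝ≥0∞) [Fact (1 ≤ p)] (hp : p ≠ ⊤) (c : U) :
    Continuous (fun q : ℝ × ℝ => bang p c q.1 q.2) := by
  refine continuous_indicatorConstLp_set hp fun q => ?_
  have hb : ∀ q' : ℝ × ℝ, (volume.restrict (Ici (0:ℝ))) (symmDiff (Ico q'.1 q'.2) (Ico q.1 q.2)) ≤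
      ENNReal.ofReal |q.1 - q'.1| + ENNReal.ofReal |q.2 - q'.2| := by
    intro q'
    have hsub : symmDiff (Ico q'.1 q'.2) (Ico q.1 q.2) ⊆ uIcc q'.1 q.1 ∪ uIcc q'.2 q.2 := by
      intro r hr
      simp only [mem_union, mem_uIcc]
      rcases hr with ⟨⟨h1, h2⟩, h3⟩ | ⟨⟨h1, h2⟩, h3⟩
      · by_cases h4 : q.1 ≤ r
        · right; right
          refine ⟨?_, h2.le⟩
          by_contra h5
          exact h3 ⟨h4, not_le.1 h5⟩
        · left; left
          exact ⟨h1, (not_le.1 h4).le⟩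
      · by_cases h4 : q'.1 ≤ r
        · right; left
          refine ⟨?_, h2.le⟩
          by_contra h5
          exact h3 ⟨h4, not_le.1 h5⟩
        · left; right
          exact ⟨h1, (not_le.1 h4).le⟩
    refine (Measure.restrict_apply_le _ _).trans ((measure_mono hsub).trans
      ((measure_union_le _ _).trans ?_))
    rw [Real.volume_interval, Real.volume_interval]
  refine tendsto_of_tendsto_of_tendsto_of_le_of_le tendsto_const_nhds ?_ (fun _ => zero_le) hb
  have : Continuous fun q' : ℝ × ℝ =>
      ENNReal.ofReal |q.1 - q'.1| + ENNReal.ofReal |q.2 - q'.2| :=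
    (ENNReal.continuous_ofReal.comp (by fun_prop)).add (ENNReal.continuous_ofReal.comp (by fun_prop))
  have h := this.tendsto q
  simpa using h

theorem bang_norm (p : ℝ≥0∞) {c : U} (hc : ‖c‖ ≤ 1) {a b : ℝ} (hab : a ≤ b) :
    ‖bang p c a b‖ ≤ (b - a) ^ (1 / p.toReal) := by
  refine norm_indicatorConstLp_le.trans ?_
  have h1 : (volume.restrict (Ici (0:ℝ))).real (Ico a b) ≤ b - a := by
    refine ENNReal.toReal_le_of_le_ofReal (by linarith) ?_
    refine (Measure.restrict_apply_le _ _).trans ?_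
    simp
  have h2 : (volume.restrict (Ici (0:ℝ))).real (Ico a b) ^ (1 / p.toReal) ≤
      (b - a) ^ (1 / p.toReal) :=
    Real.rpow_le_rpow measureReal_nonneg h1 (by positivity)
  calc ‖c‖ * _ ≤ 1 * _ := mul_le_mul hc h2 (Real.rpow_nonneg measureReal_nonneg _) zero_le_one
    _ = _ := one_mul _

theorem bang_self (p : ℝ≥0∞) (c : U) (a : ℝ) : bang p c a a = 0 := by
  unfold bang
  simp only [Ico_self, indicatorConstLp_empty]

theorem bang_sum (p : ℝ≥0∞) (ev : ℕ → U) (s : ℕ → ℝ) (M : ℕ) :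
    ⇑(∑ k ∈ Finset.range M, bang p (ev k) (bS s k) (bS s (k + 1)))
      =ᵐ[volume.restrict (Ici (0:ℝ))] bu ev s M := by
  induction M with
  | zero => exact Lp.coeFn_zero _ _ _
  | succ M ih =>
    rw [Finset.sum_range_succ]
    filter_upwards [Lp.coeFn_add (∑ k ∈ Finset.range M, bang p (ev k) (bS s k) (bS s (k + 1)))
      (bang p (ev M) (bS s M) (bS s (M + 1))), ih,
      indicatorConstLp_coeFn (p := p) (hs := measurableSet_Ico)
        (hμs := half_fin (bS s M) (bS s (M + 1))) (c := ev M)] with t h1 h2 h3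
    rw [h1, Pi.add_apply, h2, bu, add_comm]
    congr 1

variable {F : ℕ → ℝ → E → E} {V : ℕ → E → E} {C : ℝ}

theorem inf_traj [CompleteSpace E] (p : ℝ≥0∞) [Fact (1 ≤ p)]
    (hF : ∀ k, IsFlow (V k) C (F k)) (hC : 0 ≤ C) (hV : ∀ k, Continuous (V k))
    {Φ : U → E → E} (hΦc : Continuous (fun q : U × E => Φ q.1 q.2)) (hΦ0 : ∀ y, Φ 0 y = 0)
    {B : ℝ} (hB : 0 ≤ B) (hΦB : ∀ w y, ‖Φ w y‖ ≤ B * ‖w‖)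
    {ev : ℕ → U} (hev : ∀ k, ‖ev k‖ ≤ 1) (hevV : ∀ k y, Φ (ev k) y = V k y)
    {s : ℕ → ℝ} (hs : ∀ k, 0 ≤ s k) (hs1 : ∀ k, s k ≤ 1) (hsum : Summable s)
    {x : E} {z : ℕ → E} (hz0 : z 0 = x)
    (hz : ∀ k, z (k + 1) = F k (s k) (z k)) {y : E} {φ : ℕ → ℕ} (hφ : Tendsto φ atTop atTop)
    (hy : Tendsto (fun k => z (φ k)) atTop (𝓝 y))
    {σ : Lp U p (volume.restrict (Ici (0:ℝ)))}
    (hσ : HasSum (fun k => bang p (ev k) (bS s k) (bS s (k + 1))) σ) :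
    ∃ γ : ℝ → E, ContinuousOn γ (Ici 0) ∧
      (∀ t ∈ Ici (0:ℝ), γ t = x + ∫ r in (0:ℝ)..t, Φ (σ r) (γ r)) ∧ γ (∑' k, s k) = y := by
  have hCs : Summable fun k => C * s k := hsum.mul_left C
  have hlim : ∀ t, ∃ g, Tendsto (fun M => bg F x s M t) atTop (𝓝 g) := fun t =>
    cauchySeq_tendsto_of_complete
      (cauchySeq_of_dist_le_of_summable _ (fun M => bg_dist hF hC x hs hs1 M t) hCs)
  choose γ hγ using hlim
  have hunif : TendstoUniformly (fun M => bg F x s M) γ atTop := by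
    rw [Metric.tendstoUniformly_iff]
    intro ε hε
    have h0 := tendsto_sum_nat_add fun k => C * s k
    filter_upwards [h0.eventually (gt_mem_nhds hε)] with M hM t
    rw [dist_comm]
    refine (dist_le_tsum_of_dist_le_of_tendsto _ (fun M => bg_dist hF hC x hs hs1 M t) hCs
      (hγ t) M).trans_lt ?_
    simpa only [add_comm] using hM
  have hγc : Continuous γ := hunif.continuous (Frequently.of_forall fun M => bg_cont hF x s M)
  refine ⟨γ, hγc.continuousOn, ?_, ?_⟩
  · intro t ht
    obtain ⟨ns, hns, hae⟩ :=
      (tendstoInMeasure_of_tendsto_Lp hσ.tendsto_sum_nat).exists_seq_tendsto_ae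
    have hall : ∀ᵐ r ∂(volume.restrict (Ici (0:ℝ))), ∀ M : ℕ,
        (∑ k ∈ Finset.range M, bang p (ev k) (bS s k) (bS s (k + 1)) : Lp U p _) r
          = bu ev s M r := ae_all_iff.2 fun M => bang_sum p ev s M
    have hae2 : ∀ᵐ r ∂volume, r ∈ Ici (0:ℝ) →
        Tendsto (fun i => bu ev s (ns i) r) atTop (𝓝 (σ r)) := by
      rw [← ae_restrict_iff' measurableSet_Ici]
      filter_upwards [hae, hall] with r h1 h2
      simpa only [h2] using h1
    have hdct : Tendsto (fun i => ∫ r in (0:ℝ)..t, Φ (bu ev s (ns i) r) (bg F x s (ns i) r)) atTop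
        (𝓝 (∫ r in (0:ℝ)..t, Φ (σ r) (γ r))) := by
      refine intervalIntegral.tendsto_integral_filter_of_dominated_convergence (fun _ => B)
        (Eventually.of_forall fun i => ?_) (Eventually.of_forall fun i => ?_)
        intervalIntegrable_const ?_
      · exact (hΦc.comp_stronglyMeasurable ((bu_meas ev s (ns i)).prodMk
          (bg_cont hF x s (ns i)).stronglyMeasurable)).aestronglyMeasurable
      · refine Eventually.of_forall fun r _ => (hΦB _ _).trans ?_
        have := bu_norm hs hev (ns i) r
        nlinarith
      · filter_upwards [hae2] with r hr hr'
        rw [uIoc_of_le ht] at hr'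
        exact (hΦc.tendsto (σ r, γ r)).comp ((hr hr'.1.le).prodMk_nhds
          ((hγ r).comp hns.tendsto_atTop))
    have h1 := hdct.const_add x
    simp only [← bg_int hF hV hΦc hΦ0 hΦB hev hevV hs hs1 hz0 hz _ t ht] at h1
    exact tendsto_nhds_unique ((hγ t).comp hns.tendsto_atTop) h1
  · have h1 : ∀ M, bg F x s M (∑' k, s k) = z M := fun M =>
      bg_of_ge hs hz0 hz M _ (hsum.sum_le_tsum _ fun k _ => hs k)
    have h2 := (hγ (∑' k, s k)).comp hφ
    simp only [Function.comp_def, h1] at h2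
    exact tendsto_nhds_unique h2 hy

end Inf
section Block

variable {E : Type*} [NormedAddCommGroup E] [NormedSpace ℝ E] {ι : Type*}

theorem runL_cont {V : ι → E → E} {C : ℝ} {F : ι → ℝ → E → E} (hF : ∀ a, IsFlow (V a) C (F a))
    (L : List (ι × (E → ℝ))) (hL : ∀ b ∈ L, Continuous b.2) {Z : Type*} [TopologicalSpace Z]
    {v x : Z → E} (hv : Continuous v) (hx : Continuous x) :
    Continuous fun q => runL F L (v q) (x q) := by
  induction L generalizing x with
  | nil => exact hx
  | cons b L ih =>
    have h1 : Continuous fun q => F b.1 (b.2 (v q)) (x q) :=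
      (hF b.1).cont.comp (((hL b (by simp)).comp hv).prodMk hx)
    exact ih (fun b' hb' => hL b' (by simp [hb'])) h1

theorem runL_take_succ (F : ι → ℝ → E → E) (L : List (ι × (E → ℝ))) (v x : E) (m : ℕ)
    (hm : m < L.length) :
    runL F (L.take (m + 1)) v x = F (L[m]).1 ((L[m]).2 v) (runL F (L.take m) v x) := by
  rw [List.take_succ_eq_append_getElem hm]
  simp only [runL, List.foldl_append, List.foldl_cons, List.foldl_nil]

theorem runL_zero {V : ι → E → E} {C : ℝ} {F : ι → ℝ → E → E} (hF : ∀ a, IsFlow (V a) C (F a))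
    (L : List (ι × (E → ℝ))) (v x : E) (h : ∀ b ∈ L, b.2 v = 0) : runL F L v x = x := by
  induction L generalizing x with
  | nil => rfl
  | cons b L ih =>
    have h1 : runL F (b :: L) v x = runL F L v (F b.1 (b.2 v) x) := rfl
    rw [h1, h b (by simp), (hF b.1).zero, ih x fun b' hb' => h b' (by simp [hb'])]

/-- iterated approximate steering -/
def itr (F : ι → ℝ → E → E) (L : List (ι × (E → ℝ))) : ℕ → E × E → E
  | 0, q => q.1
  | k + 1, q => runL F L (q.2 - itr F L k q) (itr F L k q)

theorem half_pow_div (N : ℕ) (hN : 0 < N) :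
    ∃ b : ℝ, 0 < b ∧ b < 1 ∧ ∀ m : ℕ, (1 / 2 : ℝ) ^ (m / N) ≤ 2 * b ^ m := by
  have hN' : (0:ℝ) < (N:ℝ)⁻¹ := by positivity
  refine ⟨(1 / 2 : ℝ) ^ ((N : ℝ)⁻¹), by positivity,
    Real.rpow_lt_one (by norm_num) (by norm_num) hN', fun m => ?_⟩
  set b := (1 / 2 : ℝ) ^ ((N : ℝ)⁻¹) with hb
  have hb0 : 0 < b := by positivity
  have hb1 : b < 1 := Real.rpow_lt_one (by norm_num) (by norm_num) hN'
  have hbN : b ^ N = 1 / 2 := Real.rpow_inv_natCast_pow (by norm_num) hN.ne'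
  have h1 : b ^ m = (1 / 2) ^ (m / N) * b ^ (m % N) := by
    rw [← hbN, ← pow_mul, ← pow_add, Nat.div_add_mod]
  have h2 : (1 / 2 : ℝ) ≤ b ^ (m % N) := by
    rw [← hbN]
    exact pow_le_pow_of_le_one hb0.le hb1.le (Nat.mod_lt _ hN).le
  rw [h1]
  have h3 : (0:ℝ) < (1 / 2) ^ (m / N) := by positivity
  nlinarith

theorem exists_blocks {V : ι → E → E} {C : ℝ} {F : ι → ℝ → E → E}
    (hF : ∀ a, IsFlow (V a) C (F a)) (x₀ : E)
    (L : List (ι × (E → ℝ))) (hne : L ≠ []) (D α ρ : ℝ) (hD : 0 ≤ D) (hα : 0 < α) (hρ : 0 < ρ)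
    (hL : ∀ b ∈ L, Continuous b.2 ∧ ∀ v, 0 ≤ b.2 v)
    (hL1 : ∀ b ∈ L, ∀ v, ‖v‖ ≤ ρ → b.2 v ≤ D * ‖v‖ ^ α ∧ b.2 v ≤ 1)
    (hrun : ∀ x, ‖x - x₀‖ ≤ ρ → ∀ v, ‖v‖ ≤ ρ → ‖runL F L v x - (x + v)‖ ≤ 1 / 2 * ‖v‖) :
    ∃ (a : ℕ → ι) (s : ℕ → E × E → ℝ) (z : ℕ → E × E → E) (φ : ℕ → ℕ) (A c r : ℝ),
      0 ≤ A ∧ 0 < c ∧ c < 1 ∧ 0 < r ∧ Tendsto φ atTop atTop ∧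
      (∀ m, Continuous (s m)) ∧ (∀ m q, 0 ≤ s m q) ∧
      (∀ q, z 0 q = q.1) ∧ (∀ m q, z (m + 1) q = F (a m) (s m q) (z m q)) ∧
      (∀ q ∈ Metric.ball x₀ r ×ˢ Metric.ball x₀ r, (∀ m, s m q ≤ 1 ∧ s m q ≤ A * c ^ m) ∧
        Tendsto (fun k => z (φ k) q) atTop (𝓝 q.2)) ∧
      (∀ x m, s m (x, x) = 0) := by
  set N := L.length with hN
  have hN0 : 0 < N := List.length_pos_iff.2 hne
  have hmod : ∀ m, m % N < L.length := fun m => Nat.mod_lt _ hN0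
  obtain ⟨b, hb0, hb1, hb⟩ := half_pow_div N hN0
  have hcont : ∀ k, Continuous (itr F L k) := by
    intro k
    induction k with
    | zero => exact continuous_fst
    | succ k ih => exact runL_cont hF L (fun b hb => (hL b hb).1) (continuous_snd.sub ih) ih
  have hz0 : ∀ l ∈ L, l.2 0 = 0 := by
    intro l hl
    have h1 := (hL1 l hl 0 (by simpa using hρ.le)).1
    rw [norm_zero, Real.zero_rpow hα.ne', mul_zero] at h1
    exact le_antisymm h1 ((hL l hl).2 0)
  have hself : ∀ k x, itr F L k (x, x) = x := by
    intro k x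
    induction k with
    | zero => rfl
    | succ k ih =>
      rw [itr, ih, sub_self]
      exact runL_zero hF L 0 x hz0
  have hdist : ∀ q ∈ Metric.ball x₀ (ρ / 3) ×ˢ Metric.ball x₀ (ρ / 3), ∀ k,
      ‖q.2 - itr F L k q‖ ≤ (1 / 2) ^ k * (2 * (ρ / 3)) := by
    rintro ⟨x, y⟩ ⟨hx, hy⟩ k
    simp only [mem_ball_iff_norm] at hx hy
    induction k with
    | zero =>
      simp only [itr, pow_zero, one_mul]
      calc ‖y - x‖ = ‖(y - x₀) - (x - x₀)‖ := by congr 1; abel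
        _ ≤ ‖y - x₀‖ + ‖x - x₀‖ := norm_sub_le _ _
        _ ≤ _ := by linarith
    | succ k ih =>
      simp only at ih
      have hk1 : (1 / 2 : ℝ) ^ k ≤ 1 := pow_le_one₀ (by norm_num) (by norm_num)
      have h1 : ‖y - itr F L k (x, y)‖ ≤ 2 * (ρ / 3) := ih.trans (by nlinarith)
      have h2 : ‖itr F L k (x, y) - x₀‖ ≤ ρ := by
        calc ‖itr F L k (x, y) - x₀‖ = ‖(y - x₀) - (y - itr F L k (x, y))‖ := by congr 1; abel
          _ ≤ ‖y - x₀‖ + ‖y - itr F L k (x, y)‖ := norm_sub_le _ _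
          _ ≤ _ := by linarith
      have h3 := hrun _ h2 _ (h1.trans (by linarith))
      rw [add_sub_cancel, norm_sub_rev] at h3
      simp only [itr]
      refine h3.trans ?_
      rw [pow_succ]
      linarith
  refine ⟨fun m => (L[m % N]'(hmod m)).1, fun m q => (L[m % N]'(hmod m)).2 (q.2 - itr F L (m / N) q),
    fun m q => runL F (L.take (m % N)) (q.2 - itr F L (m / N) q) (itr F L (m / N) q),
    fun k => k * N, D * (4 * (ρ / 3)) ^ α, b ^ α, ρ / 3, by positivity, by positivity,
    Real.rpow_lt_one hb0.le hb1 hα, by positivity, ?_, ?_, ?_, ?_, ?_, ?_, ?_⟩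
  · exact tendsto_id.atTop_mul_const' hN0
  · intro m
    exact (hL _ (List.getElem_mem _)).1.comp (continuous_snd.sub (hcont _))
  · intro m q
    exact (hL _ (List.getElem_mem _)).2 _
  · intro q
    simp [runL, itr]
  · intro m q
    beta_reduce
    rw [← runL_take_succ F L _ _ _ (hmod m)]
    by_cases h : (m + 1) % N = 0
    · have h1 : (m + 1) / N = m / N + 1 := by
        rw [Nat.succ_div, if_pos (Nat.dvd_of_mod_eq_zero h)]
      have h2 : m % N + 1 = N := by
        have := Nat.div_add_mod m N
        have h4 := Nat.div_add_mod (m + 1) N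
        rw [h, h1, Nat.mul_add] at h4
        omega
      rw [h, h1, h2, hN, List.take_length, List.take_zero]
      rfl
    · have h1 : (m + 1) / N = m / N := by
        rw [Nat.succ_div, if_neg fun h' => h (Nat.mod_eq_zero_of_dvd h'), add_zero]
      have h2 : (m + 1) % N = m % N + 1 := by
        have := Nat.div_add_mod m N
        have h4 := Nat.div_add_mod (m + 1) N
        rw [h1] at h4
        omega
      rw [h1, h2]
  · intro q hq
    constructor
    · intro m
      have h1 := hdist q hq (m / N)
      have hk1 : (1 / 2 : ℝ) ^ (m / N) ≤ 1 := pow_le_one₀ (by norm_num) (by norm_num)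
      have h2 : ‖q.2 - itr F L (m / N) q‖ ≤ ρ := h1.trans (by nlinarith)
      obtain ⟨h3, h4⟩ := hL1 _ (List.getElem_mem (hmod m)) _ h2
      refine ⟨h4, h3.trans ?_⟩
      have h5 : ‖q.2 - itr F L (m / N) q‖ ≤ 4 * (ρ / 3) * b ^ m := by
        have := hb m
        refine h1.trans ?_
        nlinarith
      calc D * ‖q.2 - itr F L (m / N) q‖ ^ α ≤ D * (4 * (ρ / 3) * b ^ m) ^ α := by
            refine mul_le_mul_of_nonneg_left (Real.rpow_le_rpow (norm_nonneg _) h5 hα.le) hD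
        _ = D * (4 * (ρ / 3)) ^ α * (b ^ α) ^ m := by
            rw [Real.mul_rpow (by positivity) (by positivity), mul_assoc, ← Real.rpow_natCast_mul
              hb0.le, ← Real.rpow_mul_natCast hb0.le, mul_comm (m:ℝ)]
    · have h1 : ∀ k, runL F (L.take (k * N % N)) (q.2 - itr F L (k * N / N) q)
          (itr F L (k * N / N) q) = itr F L k q := by
        intro k
        rw [Nat.mul_mod_left, Nat.mul_div_cancel _ hN0]
        simp [runL]
      simp only [h1]
      rw [tendsto_iff_norm_sub_tendsto_zero]
      refine squeeze_zero (fun _ => norm_nonneg _) (fun k => (norm_sub_rev _ _).trans_le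
        (hdist q hq k)) ?_
      have := (tendsto_pow_atTop_nhds_zero_of_lt_one (r := (1 / 2 : ℝ)) (by norm_num)
        (by norm_num)).mul_const (2 * (ρ / 3))
      simpa using this
  · intro x m
    simp only [hself, sub_self]
    exact hz0 _ (List.getElem_mem _)

end Block
section Main

/-- signed control directions -/
def evv {d : ℕ} (a : Fin d × Bool) : EuclideanSpace ℝ (Fin d) :=
  if a.2 then EuclideanSpace.single a.1 1 else -EuclideanSpace.single a.1 1

/-- signed vector fields -/
def VV {n d : ℕ} (X : Fin d → EuclideanSpace ℝ (Fin n) → EuclideanSpace ℝ (Fin n))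
    (hX : ∀ i, ContDiff ℝ (⊤ : ℕ∞) (X i)) (a : Fin d × Bool) : SM (EuclideanSpace ℝ (Fin n)) :=
  if a.2 then ⟨X a.1, hX a.1⟩ else -⟨X a.1, hX a.1⟩

theorem evv_norm {d : ℕ} (a : Fin d × Bool) : ‖evv a‖ ≤ 1 := by
  unfold evv
  split_ifs <;> simp

theorem evv_VV {n d : ℕ} (X : Fin d → EuclideanSpace ℝ (Fin n) → EuclideanSpace ℝ (Fin n))
    (hX : ∀ i, ContDiff ℝ (⊤ : ℕ∞) (X i)) (a : Fin d × Bool) (y : EuclideanSpace ℝ (Fin n)) :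
    ∑ i, evv a i • X i y = (VV X hX a).1 y := by
  unfold evv VV
  split_ifs
  · simp [Finset.sum_ite_eq', ite_smul, Pi.single_apply]
  · simp [Finset.sum_ite_eq', ite_smul, Pi.single_apply]

theorem good_of_iter {n d : ℕ}
    (X : Fin d → EuclideanSpace ℝ (Fin n) → EuclideanSpace ℝ (Fin n))
    (hX : ∀ i, ContDiff ℝ (⊤ : ℕ∞) (X i))
    (Y : EuclideanSpace ℝ (Fin n) → EuclideanSpace ℝ (Fin n)) (hY : IsIteratedBracket X Y) :
    ∃ (Ys : SM (EuclideanSpace ℝ (Fin n))) (k : ℕ) (w w' : List (Fin d × Bool)),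
      Good (VV X hX) Ys k w w' ∧ Ys.1 = Y := by
  induction hY with
  | base i => exact ⟨VV X hX (i, true), 1, [(i, true)], [(i, false)],
      good_letter (by simp [VV]), by simp [VV]⟩
  | bracket Y Z _ _ ihY ihZ =>
    obtain ⟨Ys, k, w, w', hg, rfl⟩ := ihY
    obtain ⟨Zs, l, v, v', hg', rfl⟩ := ihZ
    exact ⟨brk Ys Zs, k + l, _, _, hg.brk hg', rfl⟩

end Main

set_option maxHeartbeats 1000000 in
/-- the cross-section: for a bounded, globally Lipschitz, smooth,
bracket-generating family `X₁, …, X_d`, every point of `ℝⁿ` has an open neighborhood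
`W` with continuous maps `σ : W × W → L^p([0,∞),ℝ^d)` and `τ : W × W → [0,∞)` such
that the trajectory of `σ(x,y)` starting at `x` reaches `y` at time `τ(x,y)`, and
`σ(x,x) = 0`, `τ(x,x) = 0`. -/
theorem stmt14 (n d : ℕ) (p : ℝ) (hp : 1 ≤ p) [Fact (1 ≤ ENNReal.ofReal p)]
    (X : Fin d → EuclideanSpace ℝ (Fin n) → EuclideanSpace ℝ (Fin n))
    (hXsmooth : ∀ i, ContDiff ℝ (⊤ : ℕ∞) (X i))
    (hXbdd : ∃ C, ∀ i y, ‖X i y‖ ≤ C)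
    (hXder : ∃ C, ∀ i y, ‖fderiv ℝ (X i) y‖ ≤ C)
    (hbg : BracketGenerating X)
    (x₀ : EuclideanSpace ℝ (Fin n)) :
    ∃ W : Set (EuclideanSpace ℝ (Fin n)), IsOpen W ∧ x₀ ∈ W ∧
      ∃ (σ : EuclideanSpace ℝ (Fin n) × EuclideanSpace ℝ (Fin n) →
          Lp (EuclideanSpace ℝ (Fin d)) (ENNReal.ofReal p)
            (volume.restrict (Set.Ici (0:ℝ))))
        (τ : EuclideanSpace ℝ (Fin n) × EuclideanSpace ℝ (Fin n) → ℝ),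
        ContinuousOn σ (W ×ˢ W) ∧ ContinuousOn τ (W ×ˢ W) ∧
        (∀ x ∈ W, ∀ y ∈ W, 0 ≤ τ (x, y) ∧
          ∃ γ, IsTrajectoryInf X x (⇑(σ (x, y))) γ ∧ γ (τ (x, y)) = y) ∧
        (∀ x ∈ W, σ (x, x) = 0 ∧ τ (x, x) = 0) := by
  obtain ⟨C₀, hC₀⟩ := hXbdd
  obtain ⟨K₀, hK₀⟩ := hXder
  set C := max C₀ 0 with hCdef
  set K := max K₀ 0 with hKdef
  have hC : 0 ≤ C := le_max_right _ _
  have hK : 0 ≤ K := le_max_right _ _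
  have hXC : ∀ i y, ‖X i y‖ ≤ C := fun i y => (hC₀ i y).trans (le_max_left _ _)
  have hXK : ∀ i, LipschitzWith K.toNNReal (X i) := by
    intro i
    refine lipschitzWith_of_nnnorm_fderiv_le ((hXsmooth i).differentiable (by simp)) fun y => ?_
    rw [← NNReal.coe_le_coe, coe_nnnorm, Real.coe_toNNReal _ hK]
    exact (hK₀ i y).trans (le_max_left _ _)
  have hfl : ∀ a, ∃ F, IsFlow (VV X hXsmooth a).1 C F := by
    intro a
    refine exists_isFlow _ C K.toNNReal ?_ ?_
    · intro y
      unfold VV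
      split_ifs
      · exact hXC _ _
      · simpa using hXC a.1 y
    · unfold VV
      split_ifs
      · exact hXK a.1
      · exact (hXK a.1).neg
  choose F hF using hfl
  have hspan : Submodule.span ℝ {y | ∃ (Y : SM (EuclideanSpace ℝ (Fin n))) (k : ℕ)
      (w w' : List (Fin d × Bool)), Good (VV X hXsmooth) Y k w w' ∧ Y.1 x₀ = y} = ⊤ := by
    rw [eq_top_iff, ← hbg x₀]
    refine Submodule.span_mono ?_
    rintro _ ⟨Y, hY, rfl⟩
    obtain ⟨Ys, k, w, w', hg, rfl⟩ := good_of_iter X hXsmooth Y hY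
    exact ⟨Ys, k, w, w', hg, rfl⟩
  obtain ⟨L, D, α, ρ, hD, hα, hρ, hL, hL1, hrun⟩ := exists_step hF x₀ hspan
  have hp0 : 0 < p := by linarith
  by_cases hne : L = []
  · subst hne
    have hsub : ∀ v : EuclideanSpace ℝ (Fin n), v = 0 := by
      intro v
      by_contra hv
      have hv' : 0 < ‖v‖ := norm_pos_iff.2 hv
      have hw : ‖(ρ / ‖v‖) • v‖ = ρ := by
        rw [norm_smul, Real.norm_eq_abs, abs_of_pos (by positivity)]
        field_simp
      have h1 := hrun x₀ (by simpa using hρ.le) ((ρ / ‖v‖) • v) hw.le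
      simp only [runL, List.foldl_nil, sub_add_cancel_left, norm_neg] at h1
      rw [hw] at h1
      linarith
    have hss : Subsingleton (EuclideanSpace ℝ (Fin n)) :=
      ⟨fun a b => (hsub a).trans (hsub b).symm⟩
    refine ⟨univ, isOpen_univ, mem_univ _, fun _ => 0, fun _ => 0, continuousOn_const,
      continuousOn_const, fun x _ y _ => ⟨le_rfl, fun _ => x, ⟨continuousOn_const,
        fun t _ => Subsingleton.elim _ _⟩, Subsingleton.elim _ _⟩, fun x _ => ⟨rfl, rfl⟩⟩
  obtain ⟨a, s, z, φ, A, c, r, hA, hc0, hc1, hr, hφ, hsc, hs0, hz0, hz, hq, hsxx⟩ :=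
    exists_blocks hF x₀ L hne D α ρ hD hα hρ hL hL1 hrun
  set P := ENNReal.ofReal p with hP
  have hPtop : P ≠ ⊤ := ENNReal.ofReal_ne_top
  have hPr : P.toReal = p := ENNReal.toReal_ofReal hp0.le
  have hAc : Summable fun m : ℕ => A * c ^ m :=
    (summable_geometric_of_lt_one hc0.le hc1).mul_left A
  have hAcp : Summable fun m : ℕ => (A * c ^ m) ^ (1 / P.toReal) := by
    have h1 : ∀ m : ℕ, (A * c ^ m) ^ (1 / P.toReal) =
        A ^ (1 / P.toReal) * (c ^ (1 / P.toReal)) ^ m := by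
      intro m
      rw [Real.mul_rpow hA (by positivity), ← Real.rpow_natCast_mul hc0.le,
        ← Real.rpow_mul_natCast hc0.le, mul_comm (m : ℝ)]
    simp only [h1]
    refine (summable_geometric_of_lt_one (by positivity) (Real.rpow_lt_one hc0.le hc1 ?_)).mul_left _
    rw [hPr]
    positivity
  have hbS : ∀ k, Continuous fun q => bS (fun m => s m q) k := fun k =>
    continuous_finsetSum _ fun m _ => hsc m
  set W := Metric.ball x₀ r with hW
  have hbn : ∀ k, ∀ q ∈ W ×ˢ W, ‖bang P (evv (a k)) (bS (fun m => s m q) k)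
      (bS (fun m => s m q) (k + 1))‖ ≤ (A * c ^ k) ^ (1 / P.toReal) := by
    intro k q hqW
    have h1 := bS_succ (fun m => s m q) k
    have h2 := hs0 k q
    refine (bang_norm P (evv_norm _) (by linarith)).trans ?_
    rw [h1, add_sub_cancel_left]
    exact Real.rpow_le_rpow h2 ((hq q hqW).1 k).2 (by positivity)
  refine ⟨W, Metric.isOpen_ball, Metric.mem_ball_self hr,
    fun q => ∑' k, bang P (evv (a k)) (bS (fun m => s m q) k) (bS (fun m => s m q) (k + 1)),
    fun q => ∑' k, s k q, ?_, ?_, ?_, ?_⟩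
  · refine continuousOn_tsum (fun k => ?_) hAcp hbn
    exact ((bang_cont P hPtop (evv (a k))).comp ((hbS k).prodMk (hbS (k + 1)))).continuousOn
  · refine continuousOn_tsum (fun k => (hsc k).continuousOn) hAc fun k q hqW => ?_
    rw [Real.norm_eq_abs, abs_of_nonneg (hs0 k q)]
    exact ((hq q hqW).1 k).2
  · intro x hx y hy
    have hqW : (x, y) ∈ W ×ˢ W := ⟨hx, hy⟩
    refine ⟨tsum_nonneg fun k => hs0 k _, ?_⟩
    have hsum : Summable fun k => s k (x, y) :=
      hAc.of_nonneg_of_le (fun k => hs0 k _) fun k => ((hq _ hqW).1 k).2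
    have hσ : HasSum (fun k => bang P (evv (a k)) (bS (fun m => s m (x, y)) k)
        (bS (fun m => s m (x, y)) (k + 1)))
        (∑' k, bang P (evv (a k)) (bS (fun m => s m (x, y)) k)
          (bS (fun m => s m (x, y)) (k + 1))) :=
      (hAcp.of_norm_bounded fun k => hbn k _ hqW).hasSum
    let Φ : EuclideanSpace ℝ (Fin d) → EuclideanSpace ℝ (Fin n) → EuclideanSpace ℝ (Fin n) :=
      fun w y => ∑ i, w i • X i y
    let B : ℝ := d * C
    have hB0 : 0 ≤ B := by positivity
    have hΦ0 : ∀ y, Φ 0 y = 0 := fun y => by simp [Φ]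
    have hΦc : Continuous (fun q : EuclideanSpace ℝ (Fin d) × EuclideanSpace ℝ (Fin n) =>
        Φ q.1 q.2) := by
      simp only [Φ]
      have := fun i => (hXsmooth i).continuous
      fun_prop
    have hΦB : ∀ (w : EuclideanSpace ℝ (Fin d)) (y : EuclideanSpace ℝ (Fin n)),
        ‖Φ w y‖ ≤ B * ‖w‖ := by
      intro w y
      refine (norm_sum_le _ _).trans ?_
      calc ∑ i, ‖w i • X i y‖ ≤ ∑ _i : Fin d, ‖w‖ * C := by
            refine Finset.sum_le_sum fun i _ => ?_
            rw [norm_smul]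
            exact mul_le_mul (PiLp.norm_apply_le w i) (hXC i y) (norm_nonneg _) (norm_nonneg _)
        _ = B * ‖w‖ := by simp [B]; ring
    obtain ⟨γ, h1, h2, h3⟩ := inf_traj P (U := EuclideanSpace ℝ (Fin d))
      (E := EuclideanSpace ℝ (Fin n)) (F := fun k => F (a k))
      (V := fun k => (VV X hXsmooth (a k)).1) (fun k => hF (a k)) hC
      (fun k => (VV X hXsmooth (a k)).contDiff.continuous) (Φ := Φ)
      hΦc hΦ0 (B := B) hB0 hΦB (ev := fun k => evv (a k))
      (fun k => evv_norm _) (fun k y => evv_VV X hXsmooth (a k) y)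
      (s := fun k => s k (x, y)) (fun k => hs0 k _) (fun k => ((hq _ hqW).1 k).1) hsum
      (z := fun k => z k (x, y)) (hz0 _) (fun k => hz k _) hφ (hq _ hqW).2 hσ
    exact ⟨γ, ⟨h1, h2⟩, h3⟩
  · intro x hx
    constructor
    · have h1 : ∀ k, bS (fun m => s m (x, x)) k = 0 := fun k => by simp [bS, hsxx]
      simp only [h1, bang_self, tsum_zero]
    · simp only [hsxx, tsum_zero]
end
end

section
/- Fix n, d ∈ ℕ, 1 ≤ p < ∞, x ∈ ℝ^n, and smooth vector fields X_1, …, X_d : ℝ^n → ℝ^n that are bounded, have bounded first derivatives, and are bracket generating. Let F : L^p([0,1], ℝ^d) → ℝ^n be the endpoint map F(u) = γ_u(1), where γ_u is the trajectory of u starting at x. Then F is a Hurewicz fibration: for every topological space Z, every continuous map g : Z × [0,1] → ℝ^n, and every continuous map g̃_0 : Z → L^p([0,1], ℝ^d) with F(g̃_0(z)) = g(z,0) for all z ∈ Z, there exists a continuous map g̃ : Z × [0,1] → L^p([0,1], ℝ^d) such that g̃(z,0) = g̃_0(z) and F(g̃(z,s)) = g(z,s) for all (z,s) ∈ Z ×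 [0,1]. -/
open MeasureTheory Set Filter Topology

noncomputable section

/-- Trajectory on `[0,1]` of a control `u` starting at `x` for the (driftless) control
system determined by `X₁, …, X_d`. -/
def IsTrajectory {n d : ℕ}
    (X : Fin d → EuclideanSpace ℝ (Fin n) → EuclideanSpace ℝ (Fin n))
    (x : EuclideanSpace ℝ (Fin n))
    (u : ℝ → EuclideanSpace ℝ (Fin d))
    (γ : ℝ → EuclideanSpace ℝ (Fin n)) : Prop :=
  ContinuousOn γ (Set.Icc 0 1) ∧
    ∀ t ∈ Set.Icc (0:ℝ) 1,
      γ t = x + ∫ s in (0:ℝ)..t, ∑ i, u s i • X i (γ s)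

section Helpers
open scoped ContDiff unitInterval

/-- Pointwise application of a continuous family of operators. -/
def superApp (E F : Type) [NormedAddCommGroup E] [NormedSpace ℝ E] [NormedAddCommGroup F]
    [NormedSpace ℝ F] : C(I, E →L[ℝ] F) →L[ℝ] C(I, E) →L[ℝ] C(I, F) :=
  LinearMap.mkContinuous₂
    (LinearMap.mk₂ ℝ
      (fun (A : C(I, E →L[ℝ] F)) (h : C(I, E)) => (⟨fun t => A t (h t), by fun_prop⟩ : C(I, F)))
      (by intros; ext; simp) (by intros; ext; simp) (by intros; ext; simp)
      (by intros; ext; simp)) 1 (by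
    intro A h
    rw [ContinuousMap.norm_le _ (by positivity)]
    intro t
    simp only [LinearMap.mk₂_apply, ContinuousMap.coe_mk, one_mul]
    exact (A t).le_of_opNorm_le_of_le (A.norm_coe_le_norm t) (h.norm_coe_le_norm t))

lemma superApp_apply {E F : Type} [NormedAddCommGroup E] [NormedSpace ℝ E] [NormedAddCommGroup F]
    [NormedSpace ℝ F] (A : C(I, E →L[ℝ] F)) (h : C(I, E)) (t : I) :
    superApp E F A h t = A t (h t) := rfl

lemma contDiff_superposition_nat {E : Type} [NormedAddCommGroup E] [NormedSpace ℝ E] (m : ℕ) :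
    ∀ {F : Type} [NormedAddCommGroup F] [NormedSpace ℝ F] (f : C(E, F)),
      ContDiff ℝ m f → ContDiff ℝ m (fun γ : C(I, E) => f.comp γ) := by
  induction m with
  | zero =>
    intro F _ _ f _
    exact contDiff_zero.2 (ContinuousMap.continuous_postcomp f)
  | succ m ih =>
    intro F _ _ f hf
    obtain ⟨f', hf', hd⟩ := contDiff_succ_iff_hasFDerivAt.1 (by exact_mod_cast hf)
    let g : C(E, E →L[ℝ] F) := ⟨f', hf'.continuous⟩
    have hg := ih g hf'
    have hB : ContDiff ℝ m (fun A : C(I, E →L[ℝ] F) => superApp E F A) :=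
      ContinuousLinearMap.contDiff (𝕜 := ℝ) (E := C(I, E →L[ℝ] F)) (F := C(I, E) →L[ℝ] C(I, F))
        (superApp E F)
    push_cast
    refine contDiff_succ_iff_hasFDerivAt.2
      ⟨fun γ => superApp E F (g.comp γ), hB.comp hg, fun γ => ?_⟩
    refine HasFDerivAt.of_isLittleO ?_
    rw [Asymptotics.isLittleO_iff]
    intro c hc
    have hcont := (ContinuousMap.continuous_postcomp (X := I) g).continuousAt (x := γ)
    obtain ⟨δ, hδ, hball⟩ := (Metric.continuousAt_iff (α := C(I, E))
      (β := C(I, E →L[ℝ] F)) (f := fun γ => g.comp γ) (a := γ)).1 hcont c hc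
    filter_upwards [Metric.ball_mem_nhds γ hδ] with γ' hγ'
    rw [ContinuousMap.norm_le _ (by positivity)]
    intro t
    have h1 : ‖(γ' - γ) t‖ ≤ ‖γ' - γ‖ := (γ' - γ).norm_coe_le_norm t
    have key : ‖f (γ' t) - f (γ t) - f' (γ t) (γ' t - γ t)‖ ≤ c * ‖γ' t - γ t‖ := by
      refine Convex.norm_image_sub_le_of_norm_hasFDerivWithin_le' (s := Metric.ball (γ t) δ)
        (f' := f') (fun v _ => (hd v).hasFDerivWithinAt) ?_ (convex_ball _ _)
        (Metric.mem_ball_self hδ) ?_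
      · intro v hv
        have h2 : dist (γ + ContinuousMap.const I (v - γ t)) γ < δ := by
          rw [dist_eq_norm, add_sub_cancel_left]
          refine lt_of_le_of_lt ((ContinuousMap.norm_le _ (norm_nonneg (v - γ t))).2 ?_)
            (by simpa [dist_eq_norm] using hv)
          intro s; simp
        have h3 := hball h2
        have h4 := ContinuousMap.dist_apply_le_dist (f := g.comp (γ + ContinuousMap.const I (v - γ t)))
          (g := g.comp γ) t
        rw [dist_eq_norm] at h4
        simpa [g] using h4.trans h3.le
      · rw [Metric.mem_ball, dist_eq_norm]
        refine lt_of_le_of_lt h1 ?_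
        simpa [dist_eq_norm] using hγ'
    calc _ = ‖f (γ' t) - f (γ t) - f' (γ t) (γ' t - γ t)‖ := rfl
      _ ≤ c * ‖γ' t - γ t‖ := key
      _ ≤ _ := by gcongr; exact h1

lemma contDiff_superposition {E F : Type} [NormedAddCommGroup E] [NormedSpace ℝ E]
    [NormedAddCommGroup F] [NormedSpace ℝ F] (f : C(E, F)) (hf : ContDiff ℝ ∞ f) :
    ContDiff ℝ ∞ (fun γ : C(I, E) => f.comp γ) :=
  contDiff_infty.2 fun m => contDiff_superposition_nat m f (contDiff_infty.1 hf m)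

/-- Primitive as a continuous linear map on `C(I, F)`. -/
def primCLM (F : Type) [NormedAddCommGroup F] [NormedSpace ℝ F] : C(I, F) →L[ℝ] C(I, F) :=
  LinearMap.mkContinuous
    { toFun := fun γ => ⟨fun t => ∫ s in (0:ℝ)..t, γ (projIcc 0 1 zero_le_one s), by
        have : Continuous fun t : ℝ => ∫ s in (0:ℝ)..t, γ (projIcc 0 1 zero_le_one s) :=
          intervalIntegral.continuous_primitive
            (fun a b => (γ.continuous.comp continuous_projIcc).intervalIntegrable a b) 0
        fun_prop⟩
      map_add' := by
        intro γ γ'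
        ext t
        simp only [ContinuousMap.coe_mk, ContinuousMap.add_apply]
        exact intervalIntegral.integral_add
          ((γ.continuous.comp continuous_projIcc).intervalIntegrable _ _)
          ((γ'.continuous.comp continuous_projIcc).intervalIntegrable _ _)
      map_smul' := by
        intro c γ
        ext t
        simp } 1 (by
    intro γ
    rw [ContinuousMap.norm_le _ (by positivity)]
    intro t
    simp only [LinearMap.coe_mk, AddHom.coe_mk, ContinuousMap.coe_mk]
    refine (intervalIntegral.norm_integral_le_of_norm_le_const
      (fun s _ => γ.norm_coe_le_norm _)).trans ?_
    rw [sub_zero, abs_of_nonneg t.2.1, one_mul]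
    exact mul_le_of_le_one_right (norm_nonneg _) t.2.2)

lemma primCLM_apply {F : Type} [NormedAddCommGroup F] [NormedSpace ℝ F] (γ : C(I, F)) (t : I) :
    primCLM F γ t = ∫ s in (0:ℝ)..t, γ (projIcc 0 1 zero_le_one s) := rfl

lemma primCLM_norm_le {F : Type} [NormedAddCommGroup F] [NormedSpace ℝ F] : ‖primCLM F‖ ≤ 1 :=
  LinearMap.mkContinuous_norm_le _ zero_le_one _

/-- Hadamard lemma. -/
lemma hadamard_smooth {E F : Type} [NormedAddCommGroup E] [NormedSpace ℝ E]
    [NormedAddCommGroup F] [NormedSpace ℝ F] [CompleteSpace F] (f : ℝ × E → F)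
    (hf : ContDiff ℝ ∞ f) (h0 : ∀ y, f (0, y) = 0) :
    ∃ g : ℝ × E → F, ContDiff ℝ ∞ g ∧ (∀ s y, f (s, y) = s • g (s, y)) ∧
      ∀ y, g (0, y) = fderiv ℝ f (0, y) (1, 0) := by
  let D : C(ℝ × E, F) := ⟨fun q => fderiv ℝ f q (1, 0), by
    have := hf.continuous_fderiv (by simp)
    fun_prop⟩
  have hD : ContDiff ℝ ∞ D := by
    have := hf.fderiv_right (m := ∞) (by simp)
    exact this.clm_apply contDiff_const
  let θ : C(I, ℝ) := ⟨fun t => (t : ℝ), by fun_prop⟩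
  let L : ℝ × E →L[ℝ] C(I, ℝ × E) :=
    LinearMap.mkContinuous
    { toFun := fun q => ⟨fun t => ((t:ℝ) * q.1, q.2), by fun_prop⟩
      map_add' := by intro a b; ext t <;> simp [mul_add]
      map_smul' := by intro c a; ext t <;> simp [mul_left_comm] } 1 (by
    intro q
    rw [ContinuousMap.norm_le _ (by positivity)]
    intro t
    simp only [LinearMap.coe_mk, AddHom.coe_mk, ContinuousMap.coe_mk, one_mul, Prod.norm_def]
    refine max_le_max ?_ le_rfl
    rw [norm_mul]
    refine mul_le_of_le_one_left (norm_nonneg _) ?_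
    rw [Real.norm_eq_abs, abs_of_nonneg t.2.1]; exact t.2.2)
  have hL : ∀ q t, L q t = ((t:ℝ) * q.1, q.2) := fun _ _ => rfl
  refine ⟨fun q => primCLM F (D.comp (L q)) 1, ?_, ?_, ?_⟩
  · have h1 := (contDiff_superposition D hD).comp L.contDiff
    have h2 := (primCLM F).contDiff (n := ∞) |>.comp h1
    exact (ContinuousMap.evalCLM ℝ (1 : I) : C(I, F) →L[ℝ] F).contDiff.comp h2
  · intro s y
    simp only [primCLM_apply]
    have hderiv : ∀ r ∈ uIcc (0:ℝ) 1, HasDerivAt (fun r : ℝ => f (r * s, y))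
        (s • D (r * s, y)) r := by
      intro r _
      have h1 := (hf.differentiable (by simp) (r * s, y)).hasFDerivAt
      have h2 : HasDerivAt (fun r : ℝ => (r * s, y)) (s, (0:E)) r := by
        simpa using ((hasDerivAt_id r).mul_const s).prodMk (hasDerivAt_const r y)
      have h3 := h1.comp_hasDerivAt r h2
      have : (s, (0:E)) = s • ((1:ℝ), (0:E)) := by simp
      rw [this, map_smul] at h3
      exact h3
    have h_intg : IntervalIntegrable (fun r : ℝ => s • D (r * s, y)) volume 0 1 := by
      apply Continuous.intervalIntegrable; fun_prop
    have := intervalIntegral.integral_eq_sub_of_hasDerivAt hderiv h_intg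
    simp only [one_mul, zero_mul, h0, sub_zero] at this
    rw [← this, intervalIntegral.integral_smul]
    congr 1
    refine intervalIntegral.integral_congr fun r hr => ?_
    rw [uIcc_of_le (by simp)] at hr
    simp only [ContinuousMap.comp_apply, hL]
    rw [projIcc_of_mem _ hr]
  · intro y
    simp only [primCLM_apply]
    have : ∀ r : ℝ, (D.comp (L (0, y))) (projIcc 0 1 zero_le_one r) = D (0, y) := by
      intro r; simp [hL]
    simp [this, D]


lemma flow_exists {V : Type} [NormedAddCommGroup V] [NormedSpace ℝ V] [CompleteSpace V]
    (X : V → V) (hX : ContDiff ℝ ∞ X) (C : ℝ) (hC : ∀ y, ‖fderiv ℝ X y‖ ≤ C) :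
    ∃ (h : ℝ → ℝ) (Γ : ℝ × V → C(I, V)), ContDiff ℝ ∞ h ∧ h 0 = 0 ∧ HasDerivAt h 1 0 ∧
      ContDiff ℝ ∞ Γ ∧
      (∀ a y (t : I), Γ (a, y) t
        = y + h a • ∫ s in (0:ℝ)..t, X (Γ (a, y) (projIcc 0 1 zero_le_one s))) ∧
      ∀ a y, Γ (-a, Γ (a, y) 1) 1 = y := by
  set K : ℝ := max C 0 + 1 with hK
  have hKpos : 0 < K := by positivity
  set T : ℝ := 1 / (2 * K) with hT
  have hTpos : 0 < T := by positivity
  let h : ℝ → ℝ := fun a => T * Real.sin (a / T)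
  have hh : ContDiff ℝ ∞ h := by
    have := Real.contDiff_sin (n := ∞)
    exact contDiff_const.mul (this.comp (contDiff_id.div_const T))
  have hhT : ∀ a, |h a| ≤ T := by
    intro a
    simp only [h, abs_mul, abs_of_pos hTpos]
    exact mul_le_of_le_one_right hTpos.le (Real.abs_sin_le_one _)
  have hhneg : ∀ a, h (-a) = - h a := by
    intro a; simp [h, neg_div]
  have hXlip : ∀ a b, ‖X a - X b‖ ≤ K * ‖a - b‖ := by
    intro a b
    refine Convex.norm_image_sub_le_of_norm_fderiv_le (s := univ) (𝕜 := ℝ)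
      (fun v _ => hX.differentiable (by simp) v) (fun v _ => ?_) convex_univ (mem_univ _) (mem_univ _)
    exact (hC v).trans ((le_max_left C 0).trans (by simp [hK]))
  let Xc : C(V, V) := ⟨X, hX.continuous⟩
  let Φ : ℝ × V → C(I, V) → C(I, V) := fun q γ =>
    ContinuousMap.const I q.2 + h q.1 • primCLM V (Xc.comp γ)
  have hcontr : ∀ q, ContractingWith (1/2) (Φ q) := by
    intro q
    refine ⟨by rw [← NNReal.coe_lt_coe]; push_cast; norm_num, LipschitzWith.of_dist_le_mul fun γ γ' => ?_⟩
    have e : Φ q γ - Φ q γ' = h q.1 • primCLM V (Xc.comp γ - Xc.comp γ') := by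
      simp only [Φ, map_sub, smul_sub]; abel
    rw [dist_eq_norm, e, norm_smul, dist_eq_norm]
    have h1 : ‖Xc.comp γ - Xc.comp γ'‖ ≤ K * ‖γ - γ'‖ := by
      rw [ContinuousMap.norm_le _ (by positivity)]
      intro t
      refine (hXlip (γ t) (γ' t)).trans ?_
      gcongr
      exact (γ - γ').norm_coe_le_norm t
    have h2 : ‖primCLM V (Xc.comp γ - Xc.comp γ')‖ ≤ K * ‖γ - γ'‖ := by
      refine ((primCLM V).le_of_opNorm_le primCLM_norm_le _).trans ?_
      rwa [one_mul]
    calc _ ≤ T * (K * ‖γ - γ'‖) := by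
          gcongr; exact hhT _
      _ = _ := by
          rw [hT]; push_cast; field_simp
  let Γ : ℝ × V → C(I, V) := fun q => ContractingWith.fixedPoint (Φ q) (hcontr q)
  have hΓ : ∀ q, Φ q (Γ q) = Γ q := fun q => (hcontr q).fixedPoint_isFixedPt
  have hΓu : ∀ q γ, Φ q γ = γ → γ = Γ q := fun q γ hγ => (hcontr q).fixedPoint_unique hγ
  have hconst : ContDiff ℝ ∞ (fun y : V => ContinuousMap.const I y) := by
    let L : V →L[ℝ] C(I, V) := LinearMap.mkContinuous
      { toFun := fun y => ContinuousMap.const I y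
        map_add' := by intros; ext; simp
        map_smul' := by intros; ext; simp } 1 (by
          intro y
          rw [ContinuousMap.norm_le _ (by positivity)]
          intro t; simp)
    exact L.contDiff
  have hsup := contDiff_superposition Xc hX
  have hprim : ContDiff ℝ ∞ (fun γ : C(I, V) => primCLM V (Xc.comp γ)) :=
    (ContinuousLinearMap.contDiff (𝕜 := ℝ) (E := C(I, V)) (F := C(I, V)) (primCLM V)).comp hsup
  have hΦ : ContDiff ℝ ∞ (fun z : (ℝ × V) × C(I, V) => Φ z.1 z.2) := by
    refine ContDiff.add (hconst.comp (contDiff_snd.comp contDiff_fst)) ?_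
    exact (hh.comp (contDiff_fst.comp contDiff_fst)).smul (hprim.comp contDiff_snd)
  have hΓsm : ContDiff ℝ ∞ Γ := by
    rw [contDiff_iff_contDiffAt]
    intro q
    let f : (ℝ × V) × C(I, V) → C(I, V) := fun z => z.2 - Φ z.1 z.2
    have hf : ContDiff ℝ ∞ f := contDiff_snd.sub hΦ
    have hfu : f (q, Γ q) = 0 := by simp only [f]; rw [hΓ, sub_self]
    have hinv : (fderiv ℝ f (q, Γ q) ∘L .inr ℝ (ℝ × V) C(I, V)).IsInvertible := by
      have hM : DifferentiableAt ℝ (Φ q) (Γ q) := by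
        have : ContDiff ℝ ∞ (fun γ => Φ q γ) := hΦ.comp (contDiff_const.prodMk contDiff_id)
        exact this.differentiable (by simp) _
      set M := fderiv ℝ (Φ q) (Γ q) with hMdef
      have hMn : ‖M‖ < 1 := by
        refine lt_of_le_of_lt (hM.hasFDerivAt.le_of_lipschitz (hcontr q).2) ?_
        push_cast; norm_num
      have e1 : HasFDerivAt (fun γ => f (q, γ)) (fderiv ℝ f (q, Γ q) ∘L .inr ℝ (ℝ × V) C(I, V))
          (Γ q) := by
        have := (hf.differentiable (by simp) (q, Γ q)).hasFDerivAt
        exact this.comp (Γ q) (hasFDerivAt_prodMk_right q (Γ q))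
      have e2 : HasFDerivAt (fun γ => f (q, γ)) (ContinuousLinearMap.id ℝ _ - M) (Γ q) :=
        (hasFDerivAt_id _).sub hM.hasFDerivAt
      rw [e1.unique e2]
      exact ⟨ContinuousLinearEquiv.unitsEquiv ℝ _ (Units.oneSub M hMn), rfl⟩
    have cdf : ContDiffAt ℝ ∞ f (q, Γ q) := hf.contDiffAt
    have hev := cdf.eventually_apply_implicitFunction (by simp) hinv
    refine (cdf.contDiffAt_implicitFunction (by simp) hinv).congr_of_eventuallyEq ?_
    filter_upwards [hev] with q' hq'
    refine (hΓu _ _ ?_).symm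
    rw [hfu] at hq'
    exact (sub_eq_zero.1 hq').symm
  have heq : ∀ a y (t : I), Γ (a, y) t
        = y + h a • ∫ s in (0:ℝ)..t, X (Γ (a, y) (projIcc 0 1 zero_le_one s)) := by
    intro a y t
    conv_lhs => rw [← hΓ]
    rfl
  refine ⟨h, Γ, hh, by simp [h], ?_, hΓsm, heq, ?_⟩
  · have h1 : HasDerivAt (fun a : ℝ => a / T) (1 / T) 0 := (hasDerivAt_id (0:ℝ)).div_const T
    have h2 := ((Real.hasDerivAt_sin ((0:ℝ) / T)).comp (0:ℝ) h1).const_mul T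
    refine h2.congr_deriv ?_
    simp [hTpos.ne']
  · intro a y
    set γ := Γ (a, y) with hγ
    let γ' : C(I, V) := ⟨fun t => γ (unitInterval.symm t), by fun_prop⟩
    have : γ' = Γ (-a, γ 1) := by
      apply hΓu
      ext t
      change γ 1 + h (-a) • (∫ s in (0:ℝ)..t, X (γ' (projIcc 0 1 zero_le_one s))) =
        γ (unitInterval.symm t)
      have hc : Continuous fun s : ℝ => X (γ (projIcc 0 1 zero_le_one s)) :=
        hX.continuous.comp (γ.continuous.comp continuous_projIcc)
      have i1 : (∫ s in (0:ℝ)..t, X (γ' (projIcc 0 1 zero_le_one s)))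
          = ∫ s in (0:ℝ)..t, X (γ (projIcc 0 1 zero_le_one (1 - s))) := by
        refine intervalIntegral.integral_congr fun s hs => ?_
        rw [uIcc_of_le t.2.1] at hs
        have hs' : s ∈ Icc (0:ℝ) 1 := ⟨hs.1, hs.2.trans t.2.2⟩
        have hs'' : 1 - s ∈ Icc (0:ℝ) 1 := ⟨by linarith [hs'.2], by linarith [hs'.1]⟩
        simp only [γ', ContinuousMap.coe_mk]
        rw [projIcc_of_mem _ hs', projIcc_of_mem _ hs'']
        rfl
      have i2 := intervalIntegral.integral_comp_sub_left (a := 0) (b := (t:ℝ))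
        (fun s : ℝ => X (γ (projIcc 0 1 zero_le_one s))) 1
      have e1 := heq a y 1
      have e2 := heq a y (unitInterval.symm t)
      rw [i1, i2, hhneg, hγ, e1, e2, ← hγ]
      have i3 := intervalIntegral.integral_add_adjacent_intervals
        (hc.intervalIntegrable (μ := volume) 0 (1 - t)) (hc.intervalIntegrable (1 - t) 1)
      simp only [Icc.coe_one, unitInterval.coe_symm_eq, sub_zero]
      rw [← i3, smul_add, neg_smul]
      abel
    rw [← this]
    change γ (unitInterval.symm 1) = y
    rw [unitInterval.symm_one, hγ, heq]
    simp


lemma hadamard_shift {V : Type} [NormedAddCommGroup V] [NormedSpace ℝ V] [CompleteSpace V]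
    (R : ℝ × V → V) (hR : ContDiff ℝ ∞ R) :
    ∃ r : ℝ × (ℝ × V × V) → V, ContDiff ℝ ∞ r ∧
      (∀ ς s z v, R (s, z + ς • v) = R (s, z) + ς • r (ς, s, z, v)) ∧
      ∀ s z v, r (0, s, z, v) = fderiv ℝ (fun z => R (s, z)) z v := by
  let f : ℝ × (ℝ × V × V) → V := fun q =>
    R (q.2.1, q.2.2.1 + q.1 • q.2.2.2) - R (q.2.1, q.2.2.1)
  have hf : ContDiff ℝ ∞ f := by
    have h1 : ContDiff ℝ ∞ (fun q : ℝ × (ℝ × V × V) => (q.2.1, q.2.2.1 + q.1 • q.2.2.2)) := by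
      fun_prop
    have h2 : ContDiff ℝ ∞ (fun q : ℝ × (ℝ × V × V) => (q.2.1, q.2.2.1)) := by fun_prop
    exact (hR.comp h1).sub (hR.comp h2)
  obtain ⟨r, hr, hfr, hr0⟩ := hadamard_smooth f hf (by intro y; simp [f])
  refine ⟨r, hr, ?_, ?_⟩
  · intro ς s z v
    rw [← hfr]; simp [f]
  · intro s z v
    rw [hr0]
    have h1 : HasDerivAt (fun ς : ℝ => f (ς, s, z, v)) (fderiv ℝ f (0, s, z, v) (1, 0)) 0 := by
      have := (hf.differentiable (by simp) (0, s, z, v)).hasFDerivAt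
      exact this.comp_hasDerivAt (0:ℝ) ((hasDerivAt_id (0:ℝ)).prodMk (hasDerivAt_const 0 (s, z, v)))
    have h2 : HasDerivAt (fun ς : ℝ => f (ς, s, z, v)) (fderiv ℝ (fun z => R (s, z)) z v) 0 := by
      have hd : HasFDerivAt (fun z => R (s, z)) (fderiv ℝ (fun z => R (s, z)) z) (z + (0:ℝ) • v) := by
        have : ContDiff ℝ ∞ (fun z => R (s, z)) := hR.comp (contDiff_const.prodMk contDiff_id)
        simpa using (this.differentiable (by simp) z).hasFDerivAt
      have h3 : HasDerivAt (fun ς : ℝ => z + ς • v) v 0 := by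
        simpa using ((hasDerivAt_id (0:ℝ)).smul_const v).const_add z
      exact (hd.comp_hasDerivAt (0:ℝ) h3).sub_const (R (s, z))
    exact h1.unique h2

/-- A parametrized family of self-maps of `V` is realizable if it lifts to `E` along `F`. -/
def Realizable {E V W : Type*} [TopologicalSpace E] [TopologicalSpace W] [Zero W]
    (F : E → V) (P : W × V → V) : Prop :=
  ∃ S : E × W → E, Continuous S ∧ (∀ u, S (u, 0) = u) ∧ ∀ u w, F (S (u, w)) = P (w, F u)

lemma Realizable.comp {E V W : Type*} [TopologicalSpace E] [TopologicalSpace W] [Zero W]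
    {F : E → V} {P Q : W × V → V} (hQ : Realizable F Q) (hP : Realizable F P) :
    Realizable F (fun q => Q (q.1, P q)) := by
  obtain ⟨S, hS, hS0, hSF⟩ := hP
  obtain ⟨S', hS', hS0', hSF'⟩ := hQ
  refine ⟨fun q => S' (S q, q.2), by fun_prop, fun u => by simp [hS0, hS0'], fun u w => ?_⟩
  simp only [hSF', hSF]

lemma Realizable.reparam {E V W W' : Type*} [TopologicalSpace E] [TopologicalSpace W] [Zero W]
    [TopologicalSpace W'] [Zero W']
    {F : E → V} {P : W × V → V} (hP : Realizable F P) (h : W' → W) (hh : Continuous h)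
    (h0 : h 0 = 0) :
    Realizable F (fun q : W' × V => P (h q.1, q.2)) := by
  obtain ⟨S, hS, hS0, hSF⟩ := hP
  refine ⟨fun q => S (q.1, h q.2), by fun_prop, fun u => by simp [hS0, h0], fun u w => ?_⟩
  simp only [hSF]

/-- One-parameter realizable family of diffeomorphisms with leading term `s ^ k • Y`. -/
structure Fam {E V : Type} [TopologicalSpace E] [NormedAddCommGroup V] [NormedSpace ℝ V]
    (F : E → V) (k : ℕ) (Y : V → V) (P P' A : ℝ × V → V) : Prop where
  hk : k ≠ 0
  hP : ContDiff ℝ ∞ P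
  hP' : ContDiff ℝ ∞ P'
  hA : ContDiff ℝ ∞ A
  eqP : ∀ s y, P (s, y) = y + s ^ k • A (s, y)
  A0 : ∀ y, A (0, y) = Y y
  left : ∀ s y, P' (s, P (s, y)) = y
  right : ∀ s y, P (s, P' (s, y)) = y
  real : Realizable F P
  real' : Realizable F P'

/-- `Y` is the leading field of a realizable family. -/
def GoodField {E V : Type} [TopologicalSpace E] [NormedAddCommGroup V] [NormedSpace ℝ V]
    (F : E → V) (Y : V → V) : Prop := ∃ k P P' A, Fam F k Y P P' A

section
variable {E V : Type} [TopologicalSpace E] [NormedAddCommGroup V] [NormedSpace ℝ V]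

lemma Fam.P0 {F : E → V} {k : ℕ} {Y : V → V} {P P' A : ℝ × V → V} (h : Fam F k Y P P' A) (y : V) :
    P (0, y) = y := by
  rw [h.eqP, zero_pow h.hk, zero_smul, add_zero]

lemma Fam.P'0 {F : E → V} {k : ℕ} {Y : V → V} {P P' A : ℝ × V → V} (h : Fam F k Y P P' A) (y : V) :
    P' (0, y) = y := by
  have := h.left 0 y
  rwa [h.P0] at this

lemma GoodField.bracket [CompleteSpace V] {F : E → V} {Y Z : V → V}
    (hY : GoodField F Y) (hZ : GoodField F Z) :
    GoodField F (fun x => fderiv ℝ Z x (Y x) - fderiv ℝ Y x (Z x)) := by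
  obtain ⟨k, P, P', A, hP⟩ := hY
  obtain ⟨l, Q, Q', B, hQ⟩ := hZ
  obtain ⟨b, hb, hbe, hb0⟩ := hadamard_shift B hQ.hA
  obtain ⟨a, ha, hae, ha0⟩ := hadamard_shift A hP.hA
  have hPs := hP.hP
  have hP's := hP.hP'
  have hQs := hQ.hP
  have hQ's := hQ.hP'
  have hAs := hP.hA
  have hBs := hQ.hA
  let D : ℝ × V → V := fun q =>
    b (q.1 ^ k, q.1, q.2, A q) - a (q.1 ^ l, q.1, q.2, B q)
  have hD : ContDiff ℝ ∞ D := by fun_prop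
  have hQP : ∀ s y, Q (s, P (s, y)) = P (s, Q (s, y)) + s ^ (k + l) • D (s, y) := by
    intro s y
    rw [hQ.eqP s (P (s, y)), hP.eqP s (Q (s, y)), hP.eqP s y, hQ.eqP s y, hbe, hae]
    simp only [D, smul_sub, smul_add, smul_smul]
    rw [pow_add, mul_comm (s ^ l) (s ^ k)]
    abel
  have hD0 : ∀ y, D (0, y) = fderiv ℝ Z y (Y y) - fderiv ℝ Y y (Z y) := by
    intro y
    simp only [D, zero_pow hP.hk, zero_pow hQ.hk, hb0, ha0, hP.A0, hQ.A0]
  let R : ℝ × V → V := fun q => Q' (q.1, P' q)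
  have hR : ContDiff ℝ ∞ R := by fun_prop
  obtain ⟨r, hr, hre, hr0⟩ := hadamard_shift R hR
  let C : ℝ × V → V := fun q => Q' (q.1, P' (q.1, Q (q.1, P q)))
  let C' : ℝ × V → V := fun q => P' (q.1, Q' (q.1, P (q.1, Q q)))
  let G : ℝ × V → V := fun q => r (q.1 ^ (k + l), q.1, P (q.1, Q q), D q)
  refine ⟨k + l, C, C', G, ⟨by have := hP.hk; omega, by fun_prop, by fun_prop, by fun_prop,
    ?_, ?_, ?_, ?_, ?_, ?_⟩⟩
  · intro s y
    have : C (s, y) = R (s, P (s, Q (s, y)) + s ^ (k + l) • D (s, y)) := by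
      simp only [C, R]; rw [hQP]
    rw [this, hre]
    simp only [R, G]
    rw [hP.left, hQ.left]
  · intro y
    have hkl : k + l ≠ 0 := by have := hP.hk; omega
    simp only [G, zero_pow hkl, hr0]
    have : (fun z => R (0, z)) = id := by
      funext z; simp only [R, hP.P'0, hQ.P'0, id]
    rw [this, hD0]
    simp
  · intro s y
    simp only [C, C']
    rw [hQ.right, hP.right, hQ.left, hP.left]
  · intro s y
    simp only [C, C']
    rw [hP.right, hQ.right, hP.left, hQ.left]
  · exact hQ.real'.comp (hP.real'.comp (hQ.real.comp hP.real))
  · exact hP.real'.comp (hQ.real'.comp (hP.real.comp hQ.real))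

lemma goodField_of_flow [CompleteSpace V] {F : E → V} (X : V → V) (hX : ContDiff ℝ ∞ X)
    (h : ℝ → ℝ) (Γ : ℝ × V → C(I, V)) (hh : ContDiff ℝ ∞ h) (h0 : h 0 = 0)
    (h1 : HasDerivAt h 1 0) (hΓ : ContDiff ℝ ∞ Γ)
    (heq : ∀ a y (t : I), Γ (a, y) t
        = y + h a • ∫ s in (0:ℝ)..t, X (Γ (a, y) (projIcc 0 1 zero_le_one s)))
    (hinv : ∀ a y, Γ (-a, Γ (a, y) 1) 1 = y)
    (hreal : Realizable F (fun q : ℝ × V => Γ q 1)) : GoodField F X := by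
  let Xc : C(V, V) := ⟨X, hX.continuous⟩
  let g : ℝ × V → V := fun q => primCLM V (Xc.comp (Γ q)) 1
  have hev : ContDiff ℝ ∞ (fun γ : C(I, V) => γ 1) :=
    (ContinuousMap.evalCLM ℝ (1 : I) : C(I, V) →L[ℝ] V).contDiff
  have hg : ContDiff ℝ ∞ g := by
    have e1 := (contDiff_superposition Xc hX).comp hΓ
    have e2 := (ContinuousLinearMap.contDiff (𝕜 := ℝ) (E := C(I, V)) (F := C(I, V)) (n := ∞)
      (primCLM V)).comp e1
    exact hev.comp e2
  obtain ⟨h', hh', hhe, hh0⟩ := hadamard_smooth (E := ℝ) (F := ℝ) (fun q => h q.1)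
    (hh.comp contDiff_fst) (by intro y; exact h0)
  have hh'0 : h' (0, 0) = 1 := by
    rw [hh0]
    have : HasFDerivAt (fun q : ℝ × ℝ => h q.1)
        ((ContinuousLinearMap.toSpanSingleton ℝ (1:ℝ)).comp (ContinuousLinearMap.fst ℝ ℝ ℝ)) (0, 0) :=
      HasFDerivAt.comp (g := h) (f := Prod.fst) ((0:ℝ), (0:ℝ)) h1.hasFDerivAt hasFDerivAt_fst
    rw [this.fderiv]; simp
  have hP : ContDiff ℝ ∞ (fun q : ℝ × V => Γ q 1) := hev.comp hΓ
  refine ⟨1, fun q => Γ q 1, fun q => Γ (-q.1, q.2) 1, fun q => h' (q.1, 0) • g q,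
    ⟨one_ne_zero, hP, hP.comp (contDiff_fst.neg.prodMk contDiff_snd), by fun_prop, ?_, ?_, hinv, ?_,
      hreal, ?_⟩⟩
  · intro s y
    simp only []
    rw [heq, pow_one, smul_smul, ← smul_eq_mul, ← hhe s 0]
    rfl
  · intro y
    have hy : ∀ t : I, Γ (0, y) t = y := by
      intro t; rw [heq, h0, zero_smul, add_zero]
    simp only [g, hh'0, primCLM_apply, one_smul]
    simp [Xc, hy]
  · intro s y
    have := hinv (-s) y
    rwa [neg_neg] at this
  · exact hreal.reparam (fun a : ℝ => -a) continuous_neg neg_zero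

end

section
variable {E V : Type} [TopologicalSpace E] [NormedAddCommGroup V] [NormedSpace ℝ V]

/-- `k`-th root of the absolute value. -/
def rootAbs (k : ℕ) (t : ℝ) : ℝ := |t| ^ ((k : ℝ)⁻¹)

lemma rootAbs_nonneg (k : ℕ) (t : ℝ) : 0 ≤ rootAbs k t := Real.rpow_nonneg (abs_nonneg _) _

lemma rootAbs_pow {k : ℕ} (hk : k ≠ 0) (t : ℝ) : rootAbs k t ^ k = |t| :=
  Real.rpow_inv_natCast_pow (abs_nonneg _) hk

lemma rootAbs_zero {k : ℕ} (hk : k ≠ 0) : rootAbs k 0 = 0 := by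
  unfold rootAbs
  rw [abs_zero, Real.zero_rpow]
  simpa using hk

lemma rootAbs_continuous (k : ℕ) : Continuous (rootAbs k) := by
  unfold rootAbs
  exact (Real.continuous_rpow_const (by positivity)).comp continuous_abs

lemma pow_mul_abs_sub_le {k : ℕ} (hk : k ≠ 0) {s s' : ℝ} (hs : 0 ≤ s) (hs' : 0 ≤ s') :
    s ^ k * |s - s'| ≤ s * |s ^ k - s' ^ k| := by
  obtain ⟨m, rfl⟩ := Nat.exists_eq_succ_of_ne_zero hk
  rcases le_total s' s with h | h
  · have h1 : s' ^ (m + 1) ≤ s ^ (m + 1) := pow_le_pow_left₀ hs' h _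
    have h2 : s' ^ m ≤ s ^ m := pow_le_pow_left₀ hs' h _
    rw [abs_of_nonneg (by linarith), abs_of_nonneg (by simpa using h1), Nat.succ_eq_add_one, pow_succ,
      pow_succ]
    nlinarith [mul_nonneg hs (mul_nonneg hs' (sub_nonneg.2 h2))]
  · have h1 : s ^ (m + 1) ≤ s' ^ (m + 1) := pow_le_pow_left₀ hs h _
    have h2 : s ^ m ≤ s' ^ m := pow_le_pow_left₀ hs h _
    rw [abs_of_nonpos (by linarith), abs_of_nonpos (by simpa using h1), Nat.succ_eq_add_one, pow_succ,
      pow_succ]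
    nlinarith [mul_nonneg hs (mul_nonneg hs' (sub_nonneg.2 h2))]

lemma strict_aux {k : ℕ} (hk : k ≠ 0) (Rp Rm : ℝ × V → V) (y₀ Y₀ : V)
    (hRp : ContDiff ℝ ∞ Rp) (hRm : ContDiff ℝ ∞ Rm) (hp : Rp (0, y₀) = Y₀) (hm : Rm (0, y₀) = Y₀) :
    HasStrictFDerivAt
      (fun q : ℝ × V => q.2 + q.1 • (if 0 ≤ q.1 then Rp (rootAbs k q.1, q.2)
        else Rm (rootAbs k q.1, q.2)))
      (ContinuousLinearMap.snd ℝ ℝ V + (ContinuousLinearMap.fst ℝ ℝ V).smulRight Y₀) (0, y₀) := by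
  refine HasStrictFDerivAt.of_isLittleO ?_
  rw [Asymptotics.isLittleO_iff]
  intro c hc
  obtain ⟨Kp, tp, htp, hKp⟩ := ((hRp.of_le (by simp) : ContDiff ℝ 1 _).contDiffAt (x := ((0:ℝ), y₀))).exists_lipschitzOnWith
  obtain ⟨Km, tm, htm, hKm⟩ := ((hRm.of_le (by simp) : ContDiff ℝ 1 _).contDiffAt (x := ((0:ℝ), y₀))).exists_lipschitzOnWith
  set K : ℝ := max Kp Km with hK
  have hK0 : 0 ≤ K := le_max_of_le_left Kp.2
  let ψ : ℝ × V → ℝ × V := fun q => (rootAbs k q.1, q.2)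
  have hψ : Continuous ψ := by
    have := rootAbs_continuous k
    fun_prop
  have hψ0 : ψ (0, y₀) = (0, y₀) := by simp [ψ, rootAbs_zero hk]
  have hψt : Tendsto ψ (𝓝 (0, y₀)) (𝓝 (0, y₀)) := by
    have := hψ.tendsto (0, y₀)
    rwa [hψ0] at this
  have ev : ∀ᶠ q in 𝓝 ((0:ℝ), y₀), ψ q ∈ tp ∧ ψ q ∈ tm ∧ ‖Rp (ψ q) - Y₀‖ < c / 4 ∧
      ‖Rm (ψ q) - Y₀‖ < c / 4 ∧ K * rootAbs k q.1 < c / 4 ∧ K * |q.1| < c / 4 := by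
    have e1 : Tendsto (fun q => ‖Rp (ψ q) - Y₀‖) (𝓝 (0, y₀)) (𝓝 0) := by
      have : Continuous fun q => ‖Rp (ψ q) - Y₀‖ := by
        have := hRp.continuous; fun_prop
      have h := this.tendsto (0, y₀)
      simpa [hψ0, hp] using h
    have e2 : Tendsto (fun q => ‖Rm (ψ q) - Y₀‖) (𝓝 (0, y₀)) (𝓝 0) := by
      have : Continuous fun q => ‖Rm (ψ q) - Y₀‖ := by
        have := hRm.continuous; fun_prop
      have h := this.tendsto (0, y₀)
      simpa [hψ0, hm] using h
    have e3 : Tendsto (fun q : ℝ × V => K * rootAbs k q.1) (𝓝 (0, y₀)) (𝓝 0) := by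
      have : Continuous fun q : ℝ × V => K * rootAbs k q.1 := by
        have := rootAbs_continuous k; fun_prop
      have h := this.tendsto (0, y₀)
      simpa [rootAbs_zero hk] using h
    have e4 : Tendsto (fun q : ℝ × V => K * |q.1|) (𝓝 (0, y₀)) (𝓝 0) := by
      have : Continuous fun q : ℝ × V => K * |q.1| := by fun_prop
      have h := this.tendsto (0, y₀)
      simpa using h
    have hc4 : 0 < c / 4 := by positivity
    filter_upwards [hψt htp, hψt htm, e1.eventually (gt_mem_nhds hc4),
      e2.eventually (gt_mem_nhds hc4), e3.eventually (gt_mem_nhds hc4),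
      e4.eventually (gt_mem_nhds hc4)] with q h1 h2 h3 h4 h5 h6
    exact ⟨h1, h2, h3, h4, h5, h6⟩
  have same : ∀ (R : ℝ × V → V) (N : Set (ℝ × V)), (∀ a ∈ N, ∀ b ∈ N, ‖R a - R b‖ ≤ K * ‖a - b‖) →
      ∀ t y t' y', ψ (t, y) ∈ N → ψ (t', y') ∈ N → ‖R (ψ (t', y')) - Y₀‖ < c / 4 →
      K * rootAbs k t < c / 4 → K * |t| < c / 4 → (|t| - |t'| = t - t' ∨ |t| - |t'| = t' - t) →
      ‖t • R (ψ (t, y)) - t' • R (ψ (t', y')) - (t - t') • Y₀‖ ≤ c * max |t - t'| ‖y - y'‖ := by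
    intro R N hN t y t' y' h1 h2 h3 h4 h5 h6
    have e : t • R (ψ (t, y)) - t' • R (ψ (t', y')) - (t - t') • Y₀
      = (t - t') • (R (ψ (t', y')) - Y₀) + t • (R (ψ (t, y)) - R (ψ (t', y'))) := by module
    have hd := hN _ h1 _ h2
    have hs : |t| * |rootAbs k t - rootAbs k t'| ≤ rootAbs k t * |t - t'| := by
      have := pow_mul_abs_sub_le hk (rootAbs_nonneg k t) (rootAbs_nonneg k t')
      rw [rootAbs_pow hk, rootAbs_pow hk] at this
      refine this.trans (le_of_eq ?_)
      rcases h6 with h6 | h6 <;> rw [h6]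
      rw [abs_sub_comm]
    have hmax : ‖ψ (t, y) - ψ (t', y')‖ ≤ |rootAbs k t - rootAbs k t'| + ‖y - y'‖ := by
      simp only [ψ, Prod.mk_sub_mk, Prod.norm_def, Real.norm_eq_abs]
      exact max_le (by linarith [norm_nonneg (y - y')])
        (by linarith [abs_nonneg (rootAbs k t - rootAbs k t')])
    set M := max |t - t'| ‖y - y'‖ with hM
    have hM1 : |t - t'| ≤ M := le_max_left _ _
    have hM2 : ‖y - y'‖ ≤ M := le_max_right _ _
    have hM0 : 0 ≤ M := (abs_nonneg _).trans hM1
    rw [e]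
    calc _ ≤ |t - t'| * ‖R (ψ (t', y')) - Y₀‖ + |t| * ‖R (ψ (t, y)) - R (ψ (t', y'))‖ := by
          refine (norm_add_le _ _).trans ?_
          rw [norm_smul, norm_smul, Real.norm_eq_abs, Real.norm_eq_abs]
      _ ≤ |t - t'| * (c / 4) + |t| * (K * (|rootAbs k t - rootAbs k t'| + ‖y - y'‖)) := by
          gcongr
          exact hd.trans (by gcongr)
      _ = |t - t'| * (c / 4) + K * (|t| * |rootAbs k t - rootAbs k t'|) + (K * |t|) * ‖y - y'‖ := by
          ring
      _ ≤ |t - t'| * (c / 4) + K * (rootAbs k t * |t - t'|) + (c / 4) * ‖y - y'‖ := by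
          gcongr
      _ = |t - t'| * (c / 4) + (K * rootAbs k t) * |t - t'| + (c / 4) * ‖y - y'‖ := by ring
      _ ≤ M * (c / 4) + (c / 4) * M + (c / 4) * M := by gcongr
      _ ≤ c * M := by nlinarith
  have lipP : ∀ a ∈ tp, ∀ b ∈ tp, ‖Rp a - Rp b‖ ≤ K * ‖a - b‖ := by
    intro a ha b hb
    have := hKp.dist_le_mul a ha b hb
    rw [dist_eq_norm, dist_eq_norm] at this
    exact this.trans (by gcongr; exact le_max_left _ _)
  have lipM : ∀ a ∈ tm, ∀ b ∈ tm, ‖Rm a - Rm b‖ ≤ K * ‖a - b‖ := by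
    intro a ha b hb
    have := hKm.dist_le_mul a ha b hb
    rw [dist_eq_norm, dist_eq_norm] at this
    exact this.trans (by gcongr; exact le_max_right _ _)
  have opp : ∀ (t t' : ℝ) (r r' y y' : V), ‖r - Y₀‖ < c / 4 → ‖r' - Y₀‖ < c / 4 →
      |t| ≤ |t - t'| → |t'| ≤ |t - t'| →
      ‖t • r - t' • r' - (t - t') • Y₀‖ ≤ c * max |t - t'| ‖y - y'‖ := by
    intro t t' r r' y y' h1 h2 h3 h4
    have e : t • r - t' • r' - (t - t') • Y₀ = t • (r - Y₀) - t' • (r' - Y₀) := by module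
    rw [e]
    set M := max |t - t'| ‖y - y'‖ with hM
    have hM1 : |t - t'| ≤ M := le_max_left _ _
    have hM0 : 0 ≤ M := (abs_nonneg _).trans hM1
    calc _ ≤ |t| * ‖r - Y₀‖ + |t'| * ‖r' - Y₀‖ := by
          refine (norm_sub_le _ _).trans ?_
          rw [norm_smul, norm_smul, Real.norm_eq_abs, Real.norm_eq_abs]
      _ ≤ M * (c / 4) + M * (c / 4) := by
          gcongr <;> linarith
      _ ≤ c * M := by nlinarith
  have ev2 : ∀ᶠ p in 𝓝 (((0:ℝ), y₀), ((0:ℝ), y₀)), _ :=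
    (continuous_fst.tendsto (((0:ℝ), y₀), ((0:ℝ), y₀))).eventually ev |>.and
      ((continuous_snd.tendsto (((0:ℝ), y₀), ((0:ℝ), y₀))).eventually ev)
  filter_upwards [ev2] with p hp2
  obtain ⟨⟨t, y⟩, ⟨t', y'⟩⟩ := p
  obtain ⟨⟨a1, a2, a3, a4, a5, a6⟩, ⟨b1, b2, b3, b4, b5, b6⟩⟩ := hp2
  have e : ∀ r r' : V, (y + t • r) - (y' + t' • r') -
      (ContinuousLinearMap.snd ℝ ℝ V + (ContinuousLinearMap.fst ℝ ℝ V).smulRight Y₀)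
        ((t, y) - (t', y')) = t • r - t' • r' - (t - t') • Y₀ := by
    intro r r'
    simp
    abel
  simp only [] at *
  rw [e, Prod.mk_sub_mk, Prod.norm_mk, Real.norm_eq_abs]
  by_cases h1 : 0 ≤ t <;> by_cases h2 : 0 ≤ t'
  · rw [if_pos h1, if_pos h2]
    exact same Rp tp lipP t y t' y' a1 b1 b3 a5 a6 (Or.inl (by rw [abs_of_nonneg h1, abs_of_nonneg h2]))
  · rw [if_pos h1, if_neg h2]
    push Not at h2
    refine opp t t' _ _ y y' a3 b4 ?_ ?_
    · rw [abs_of_nonneg h1, abs_of_nonneg (by linarith)]; linarith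
    · rw [abs_of_neg h2, abs_of_nonneg (by linarith)]; linarith
  · rw [if_neg h1, if_pos h2]
    push Not at h1
    refine opp t t' _ _ y y' a4 b3 ?_ ?_
    · rw [abs_of_neg h1, abs_of_nonpos (by linarith)]; linarith
    · rw [abs_of_nonneg h2, abs_of_nonpos (by linarith)]; linarith
  · rw [if_neg h1, if_neg h2]
    push Not at h1 h2
    exact same Rm tm lipM t y t' y' a2 b2 b4 a5 a6
      (Or.inr (by rw [abs_of_neg h1, abs_of_neg h2]; ring))

lemma GoodField.strict {F : E → V} {Y : V → V} (hY : GoodField F Y) (y₀ : V) :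
    ∃ G : ℝ × V → V, Realizable F G ∧ (∀ y, G (0, y) = y) ∧
      HasStrictFDerivAt G
      (ContinuousLinearMap.snd ℝ ℝ V + (ContinuousLinearMap.fst ℝ ℝ V).smulRight (Y y₀)) (0, y₀) := by
  obtain ⟨k, P, P', A, h⟩ := hY
  refine ⟨fun q => if 0 ≤ q.1 then P (rootAbs k q.1, q.2) else P' (rootAbs k q.1, q.2), ?_, ?_, ?_⟩
  · obtain ⟨S, hS, hS0, hSF⟩ := h.real
    obtain ⟨S', hS', hS0', hSF'⟩ := h.real'
    have hr := rootAbs_continuous k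
    refine ⟨fun q => if 0 ≤ q.2 then S (q.1, rootAbs k q.2) else S' (q.1, rootAbs k q.2), ?_, ?_, ?_⟩
    · refine Continuous.if_le (by fun_prop) (by fun_prop) continuous_const continuous_snd ?_
      rintro ⟨u, t⟩ ht
      simp only at ht
      simp [← ht, rootAbs_zero h.hk, hS0, hS0']
    · intro u
      simp [rootAbs_zero h.hk, hS0]
    · intro u t
      simp only
      split_ifs
      · exact hSF _ _
      · exact hSF' _ _
  · intro y
    simp [rootAbs_zero h.hk, h.P0]
  · have hA := h.hA
    have hP' := h.hP'
    have := strict_aux h.hk A (fun q => A (q.1, P' q)) y₀ (Y y₀) h.hA (by fun_prop) (h.A0 _)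
      (by simp only [h.P'0]; exact h.A0 _)
    convert this using 1
    funext q
    obtain ⟨t, y⟩ := q
    simp only
    split_ifs with ht
    · rw [h.eqP, rootAbs_pow h.hk, abs_of_nonneg ht]
    · push Not at ht
      have e := h.eqP (rootAbs k t) (P' (rootAbs k t, y))
      rw [h.right, rootAbs_pow h.hk, abs_of_neg ht] at e
      nth_rewrite 2 [e]
      module

/-- `L` is an achievable first order displacement at `y₀`. -/
def Ach (F : E → V) (y₀ : V) (L : V →L[ℝ] V) : Prop :=
  ∃ Φ : V × V → V, Realizable F Φ ∧ (∀ y, Φ (0, y) = y) ∧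
    HasStrictFDerivAt Φ (ContinuousLinearMap.snd ℝ V V + L.comp (ContinuousLinearMap.fst ℝ V V))
      (0, y₀)

lemma Ach.zero (F : E → V) (y₀ : V) : Ach F y₀ 0 := by
  refine ⟨fun q => q.2, ⟨fun q => q.1, continuous_fst, fun _ => rfl, fun _ _ => rfl⟩,
    fun _ => rfl, ?_⟩
  simpa using hasStrictFDerivAt_snd

lemma Ach.add {F : E → V} {y₀ : V} {L L' : V →L[ℝ] V} (h : Ach F y₀ L) (h' : Ach F y₀ L') :
    Ach F y₀ (L + L') := by
  obtain ⟨Φ, hr, h0, hd⟩ := h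
  obtain ⟨Φ', hr', h0', hd'⟩ := h'
  refine ⟨fun q => Φ' (q.1, Φ q), hr'.comp hr, fun y => by simp [h0, h0'], ?_⟩
  have h1 : HasStrictFDerivAt (fun q : V × V => (q.1, Φ q)) _ (0, y₀) :=
    hasStrictFDerivAt_fst.prodMk hd
  have h2 := HasStrictFDerivAt.comp (g := Φ') (f := fun q : V × V => (q.1, Φ q)) (0, y₀)
    (by simpa only [h0] using hd') h1
  refine h2.congr_fderiv ?_
  ext q <;> simp

lemma Ach.single {F : E → V} {Y : V → V} (hY : GoodField F Y) (y₀ : V) (ℓ : V →L[ℝ] ℝ) :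
    Ach F y₀ (ℓ.smulRight (Y y₀)) := by
  obtain ⟨G, hr, h0, hd⟩ := hY.strict y₀
  refine ⟨fun q => G (ℓ q.1, q.2), hr.reparam ℓ ℓ.continuous (map_zero _),
    fun y => by simp [h0], ?_⟩
  have h1 : HasStrictFDerivAt (fun q : V × V => (ℓ q.1, q.2)) _ (0, y₀) :=
    (ℓ.hasStrictFDerivAt.comp (0, y₀) hasStrictFDerivAt_fst).prodMk hasStrictFDerivAt_snd
  have h2 := HasStrictFDerivAt.comp (g := G) (f := fun q : V × V => (ℓ q.1, q.2)) (0, y₀)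
    (by simpa only [map_zero] using hd) h1
  refine h2.congr_fderiv ?_
  ext q <;> simp

lemma Ach.id_of_span [FiniteDimensional ℝ V] {F : E → V} (y₀ : V)
    (hspan : Submodule.span ℝ {v | ∃ Y, GoodField F Y ∧ Y y₀ = v} = ⊤) :
    Ach F y₀ (ContinuousLinearMap.id ℝ V) := by
  have key : ∀ v : V, ∀ ℓ : V →L[ℝ] ℝ, Ach F y₀ (ℓ.smulRight v) := by
    intro v
    have hv : v ∈ Submodule.span ℝ {v | ∃ Y, GoodField F Y ∧ Y y₀ = v} := by rw [hspan]; trivial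
    induction hv using Submodule.span_induction with
    | mem v hv =>
      obtain ⟨Y, hY, rfl⟩ := hv
      exact fun ℓ => Ach.single hY y₀ ℓ
    | zero =>
      intro ℓ
      have : ℓ.smulRight (0:V) = 0 := by ext; simp
      rw [this]; exact Ach.zero F y₀
    | add v w _ _ hv hw =>
      intro ℓ
      have : ℓ.smulRight (v + w) = ℓ.smulRight v + ℓ.smulRight w := by ext; simp
      rw [this]; exact (hv ℓ).add (hw ℓ)
    | smul c v _ hv =>
      intro ℓ
      have : ℓ.smulRight (c • v) = (c • ℓ).smulRight v := by ext; simp [smul_smul, mul_comm]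
      rw [this]; exact hv _
  let b := Module.finBasis ℝ V
  have hsum : ∀ s : Finset (Fin (Module.finrank ℝ V)),
      Ach F y₀ (∑ i ∈ s, (LinearMap.toContinuousLinearMap (b.coord i)).smulRight (b i)) := by
    intro s
    induction s using Finset.induction_on with
    | empty => simpa using Ach.zero F y₀
    | insert i s hi ih =>
      rw [Finset.sum_insert hi]
      exact (key _ _).add ih
  convert hsum Finset.univ using 1
  ext v
  simp [b.sum_repr]

lemma Ach.local_steer [CompleteSpace V] {F : E → V} {y₀ : V}
    (h : Ach F y₀ (ContinuousLinearMap.id ℝ V)) :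
    ∃ (W : Set V) (Λ : E × V × V → E), IsOpen W ∧ y₀ ∈ W ∧
      ContinuousOn Λ {q | q.2.1 ∈ W ∧ q.2.2 ∈ W} ∧ (∀ u, ∀ y ∈ W, Λ (u, y, y) = u) ∧
      ∀ u, F u ∈ W → ∀ y ∈ W, F (Λ (u, F u, y)) = y := by
  obtain ⟨Φ, ⟨S, hS, hS0, hSF⟩, h0, hd⟩ := h
  -- the coordinates are `(w, y) ↦ (y, Φ (w, y))`
  let e : (V × V) ≃L[ℝ] (V × V) := ContinuousLinearEquiv.equivOfInverse
    ((ContinuousLinearMap.snd ℝ V V).prod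
      (ContinuousLinearMap.snd ℝ V V + (ContinuousLinearMap.id ℝ V).comp
        (ContinuousLinearMap.fst ℝ V V)))
    ((ContinuousLinearMap.snd ℝ V V - ContinuousLinearMap.fst ℝ V V).prod
      (ContinuousLinearMap.fst ℝ V V))
    (by rintro ⟨a, b⟩; simp) (by rintro ⟨a, b⟩; simp)
  let Ψ : V × V → V × V := fun q => (q.2, Φ q)
  have hΨ : HasStrictFDerivAt Ψ (e : V × V →L[ℝ] V × V) (0, y₀) :=
    hasStrictFDerivAt_snd.prodMk hd
  let ρ := hΨ.toOpenPartialHomeomorph Ψ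
  have hρ : ∀ q, ρ q = Ψ q := fun q => rfl
  have hsrc : ((0:V), y₀) ∈ ρ.source := hΨ.mem_toOpenPartialHomeomorph_source
  have htgt : (y₀, y₀) ∈ ρ.target := by
    have := ρ.map_source hsrc
    rwa [hρ, show Ψ (0, y₀) = (y₀, y₀) by simp [Ψ, h0]] at this
  have n1 : ∀ᶠ y in 𝓝 y₀, ((0:V), y) ∈ ρ.source := by
    have : Tendsto (fun y : V => ((0:V), y)) (𝓝 y₀) (𝓝 (0, y₀)) := by
      exact (Continuous.prodMk_right (0:V)).tendsto y₀
    exact this.eventually (ρ.open_source.mem_nhds hsrc)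
  obtain ⟨W₁, hW₁, hW₁o, hy₁⟩ := eventually_nhds_iff.1 n1
  obtain ⟨W₂, hW₂o, hy₂, hW₂⟩ := exists_nhds_square (ρ.open_target.mem_nhds htgt)
  refine ⟨W₁ ∩ W₂, fun q => S (q.1, (ρ.symm q.2).1), hW₁o.inter hW₂o, ⟨hy₁, hy₂⟩, ?_, ?_, ?_⟩
  · refine hS.comp_continuousOn (continuousOn_fst.prodMk ?_)
    refine continuous_fst.comp_continuousOn (ρ.continuousOn_symm.comp continuousOn_snd ?_)
    rintro ⟨u, y, y'⟩ ⟨hq1, hq2⟩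
    exact hW₂ ⟨hq1.2, hq2.2⟩
  · intro u y hy
    have h1 := ρ.left_inv (hW₁ y hy.1)
    rw [hρ, show Ψ (0, y) = (y, y) by simp [Ψ, h0]] at h1
    simp only [h1, hS0]
  · intro u hu y hy
    have hm : (F u, y) ∈ ρ.target := hW₂ ⟨hu.2, hy.2⟩
    have h1 := ρ.right_inv hm
    rw [hρ] at h1
    simp only [hSF]
    have h2 := congrArg Prod.fst h1
    have h3 := congrArg Prod.snd h1
    simp only [Ψ] at h2 h3
    have h4 : ((ρ.symm (F u, y)).1, F u) = ρ.symm (F u, y) := Prod.ext rfl h2.symm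
    rw [h4]; exact h3

end

section
variable {E V : Type} [TopologicalSpace E] [NormedAddCommGroup V] [NormedSpace ℝ V]

/-- intermediate points of the patched steering -/
def interPt (ρ : ℕ → V → ℝ) (i : ℕ) (q : V × V) : V :=
  q.1 + (∑ j ∈ Finset.range i, ρ j q.1) • (q.2 - q.1)

open Classical in
/-- successive steering -/
def patchSteer (ρ : ℕ → V → ℝ) (Λ : ℕ → E × V × V → E) : ℕ → E × V × V → E
  | 0 => fun q => q.1
  | i + 1 => fun q => if q.2.1 ∈ tsupport (ρ i) then
      Λ i (patchSteer ρ Λ i q, interPt ρ i q.2, interPt ρ (i + 1) q.2) else patchSteer ρ Λ i q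

lemma interPt_continuous {ρ : ℕ → V → ℝ} (hρ : ∀ i, Continuous (ρ i)) (i : ℕ) :
    Continuous (interPt ρ i) := by
  unfold interPt
  fun_prop

lemma global_steer [SecondCountableTopology V] (F : E → V)
    (hloc : ∀ y₀ : V, ∃ (W : Set V) (Λ : E × V × V → E), IsOpen W ∧ y₀ ∈ W ∧
      ContinuousOn Λ {q | q.2.1 ∈ W ∧ q.2.2 ∈ W} ∧ (∀ u, ∀ y ∈ W, Λ (u, y, y) = u) ∧
      ∀ u, F u ∈ W → ∀ y ∈ W, F (Λ (u, F u, y)) = y) :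
    ∃ (D : Set (V × V)) (Λ : E × V × V → E), IsOpen D ∧ (∀ y, (y, y) ∈ D) ∧
      ContinuousOn Λ {q | q.2 ∈ D} ∧ (∀ u y, Λ (u, y, y) = u) ∧
      ∀ u y, (F u, y) ∈ D → F (Λ (u, F u, y)) = y := by
  choose W' Λ' hWo' hW' hc' hd' hF' using hloc
  obtain ⟨s, hs, hsU⟩ := TopologicalSpace.countable_cover_nhds
    (fun y => (hWo' y).mem_nhds (hW' y))
  have hsne : s.Nonempty := by
    by_contra h
    rw [Set.not_nonempty_iff_eq_empty] at h
    subst h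
    have : (0 : V) ∈ (Set.univ : Set V) := trivial
    rw [← hsU] at this
    simp at this
  obtain ⟨c, hcr⟩ := hs.exists_eq_range hsne
  obtain ⟨ρ, hρ⟩ := PartitionOfUnity.exists_isSubordinate (s := (Set.univ : Set V)) isClosed_univ
    (fun i => W' (c i)) (fun i => hWo' _) (by
      rw [← hsU, hcr]; simp)
  let r : ℕ → V → ℝ := fun i => ρ i
  have hrc : ∀ i, Continuous (r i) := fun i => (ρ i).continuous
  let W : ℕ → Set V := fun i => W' (c i)
  let Λ : ℕ → E × V × V → E := fun i => Λ' (c i)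
  have hsub : ∀ i, tsupport (r i) ⊆ W i := hρ
  have hlf : LocallyFinite fun i => tsupport (r i) := ρ.locallyFinite_tsupport
  let D : Set (V × V) := {q | ∀ i, q.1 ∈ tsupport (r i) →
    interPt r i q ∈ W i ∧ interPt r (i + 1) q ∈ W i}
  have hdiag : ∀ i y, interPt r i (y, y) = y := by intro i y; simp [interPt]
  have hDo : IsOpen D := by
    rw [isOpen_iff_mem_nhds]
    intro q hq
    obtain ⟨N, hN, hfin⟩ := hlf q.1
    have h1 : ∀ᶠ q' in 𝓝 q, q'.1 ∈ N := continuous_fst.continuousAt.eventually hN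
    have h2 : ∀ᶠ q' in 𝓝 q, ∀ i ∈ {i | (tsupport (r i) ∩ N).Nonempty},
        q'.1 ∈ tsupport (r i) → interPt r i q' ∈ W i ∧ interPt r (i + 1) q' ∈ W i := by
      rw [Filter.eventually_all_finite hfin]
      intro i _
      by_cases hi : q.1 ∈ tsupport (r i)
      · have := hq i hi
        filter_upwards [(interPt_continuous hrc i).continuousAt.eventually
          ((hWo' _).mem_nhds this.1), (interPt_continuous hrc (i+1)).continuousAt.eventually
          ((hWo' _).mem_nhds this.2)] with q' a b _
        exact ⟨a, b⟩
      · have : ∀ᶠ q' : V × V in 𝓝 q, q'.1 ∈ (tsupport (r i))ᶜ :=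
          continuous_fst.continuousAt.eventually ((isClosed_tsupport _).isOpen_compl.mem_nhds hi)
        filter_upwards [this] with q' a b
        exact absurd b a
    filter_upwards [h1, h2] with q' a b i hi
    exact b i ⟨_, hi, a⟩ hi
  let H : ℕ → E × V × V → E := patchSteer r Λ
  have hH1 : ∀ i q, q.2.1 ∈ tsupport (r i) →
      H (i + 1) q = Λ i (H i q, interPt r i q.2, interPt r (i + 1) q.2) := by
    intro i q hq
    simp only [H, patchSteer, if_pos hq]
  have hH2 : ∀ i q, q.2.1 ∉ tsupport (r i) → H (i + 1) q = H i q := by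
    intro i q hq
    simp only [H, patchSteer, if_neg hq]
  have hr0 : ∀ i y y', y ∉ tsupport (r i) → interPt r (i + 1) (y, y') = interPt r i (y, y') := by
    intro i y y' hy
    simp [interPt, Finset.sum_range_succ, image_eq_zero_of_notMem_tsupport hy]
  have hHc : ∀ i q, q.2 ∈ D → ContinuousAt (H i) q := by
    intro i
    induction i with
    | zero => exact fun q _ => continuousAt_fst
    | succ i ih =>
      intro q hq
      by_cases hi : q.2.1 ∈ tsupport (r i)
      · have hw := hq i hi
        have c1 : ContinuousAt (fun q : E × V × V => interPt r i q.2) q :=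
          ((interPt_continuous hrc i).comp continuous_snd).continuousAt
        have c2 : ContinuousAt (fun q : E × V × V => interPt r (i+1) q.2) q :=
          ((interPt_continuous hrc (i+1)).comp continuous_snd).continuousAt
        have e : H (i + 1) =ᶠ[𝓝 q]
            fun q => Λ i (H i q, interPt r i q.2, interPt r (i + 1) q.2) := by
          filter_upwards [c1.eventually ((hWo' _).mem_nhds hw.1)] with q' h1
          by_cases hi' : q'.2.1 ∈ tsupport (r i)
          · exact hH1 i q' hi'
          · rw [hH2 i q' hi', show q'.2 = (q'.2.1, q'.2.2) from rfl, hr0 i _ _ hi']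
            exact (hd' (c i) _ _ h1).symm
        refine ContinuousAt.congr ?_ e.symm
        have hΛ : ContinuousAt (Λ i) (H i q, interPt r i q.2, interPt r (i + 1) q.2) := by
          refine (hc' (c i)).continuousAt (IsOpen.mem_nhds ?_ hw)
          exact ((hWo' (c i)).preimage (by fun_prop : Continuous fun q : E × V × V => q.2.1)).inter
            ((hWo' (c i)).preimage (by fun_prop : Continuous fun q : E × V × V => q.2.2))
        exact ContinuousAt.comp (f := fun q => (H i q, interPt r i q.2, interPt r (i + 1) q.2))
          hΛ ((ih q hq).prodMk (c1.prodMk c2))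
      · have : ∀ᶠ q' : E × V × V in 𝓝 q, q'.2.1 ∈ (tsupport (r i))ᶜ :=
          (by fun_prop : Continuous fun q : E × V × V => q.2.1).continuousAt.eventually
            ((isClosed_tsupport _).isOpen_compl.mem_nhds hi)
        refine (ih q hq).congr ?_
        filter_upwards [this] with q' h
        exact (hH2 i q' h).symm
  have hHlf : LocallyFinite fun i => {q | H (i + 1) q ≠ H i q} := by
    refine (hlf.preimage_continuous (by fun_prop : Continuous fun q : E × V × V => q.2.1)).subset ?_
    intro i q hq
    by_contra h
    exact hq (hH2 i q h)
  obtain ⟨L, hL⟩ := hHlf.exists_forall_eventually_atTop_eventuallyEq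
  refine ⟨D, L, hDo, ?_, ?_, ?_, ?_⟩
  · intro y i hi
    simp only [hdiag] at hi ⊢
    exact ⟨hsub i hi, hsub i hi⟩
  · intro q hq
    obtain ⟨n, hn⟩ := (hL q).exists
    exact ((hHc n q hq).congr hn).continuousWithinAt
  · intro u y
    obtain ⟨n, hn⟩ := (hL (u, y, y)).exists
    rw [← hn.self_of_nhds]
    clear hn
    induction n with
    | zero => rfl
    | succ i ih =>
      by_cases hi : y ∈ tsupport (r i)
      · rw [hH1 i _ hi, ih]
        simp only [hdiag]
        exact hd' _ _ _ (hsub i hi)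
      · rw [hH2 i _ hi, ih]
  · intro u y hq
    have hFi : ∀ i, F (H i (u, F u, y)) = interPt r i (F u, y) := by
      intro i
      induction i with
      | zero => simp [H, patchSteer, interPt]
      | succ i ih =>
        by_cases hi : F u ∈ tsupport (r i)
        · have hw := hq i hi
          rw [hH1 i _ hi]
          simp only
          rw [← ih] at hw ⊢
          exact hF' (c i) _ hw.1 _ hw.2
        · rw [hH2 i _ hi, hr0 i _ _ hi, ih]
    have hsum : ∀ᶠ n in atTop, ∑ j ∈ Finset.range n, r j (F u) = 1 := by
      have h1 : ∑ᶠ i, ρ i (F u) = 1 := ρ.sum_eq_one (mem_univ _)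
      have hfin : (Function.support fun i => ρ i (F u)).Finite :=
        ρ.locallyFinite.point_finite (F u)
      obtain ⟨b, hb⟩ := hfin.bddAbove
      filter_upwards [eventually_gt_atTop b] with n hn
      rw [← h1]
      refine (finsum_eq_sum_of_support_subset _ ?_).symm
      intro i hi
      simpa using (hb hi).trans_lt hn
    obtain ⟨n, hn, hn'⟩ := ((hL (u, F u, y)).and hsum).exists
    rw [← hn.self_of_nhds, hFi, interPt, hn']
    simp

lemma exists_step_s15 (D : Set (V × V)) (hD : IsOpen D) (hdiag : ∀ y, (y, y) ∈ D) :
    ∃ τ : C(C(I, V), ℝ), ∀ w, 0 < τ w ∧ ∀ s s' : I, |(s:ℝ) - s'| ≤ τ w → (w s, w s') ∈ D := by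
  refine exists_continuous_forall_mem_convex_of_local_const
    (t := fun w : C(I, V) => {δ : ℝ | 0 < δ ∧ ∀ s s' : I, |(s:ℝ) - s'| ≤ δ → (w s, w s') ∈ D}) ?_ ?_
  · intro w a ha b hb p q hp hq hpq
    have hle : p • a + q • b ≤ max a b := by
      calc p • a + q • b ≤ p • max a b + q • max a b := by
            gcongr
            · exact le_max_left _ _
            · exact le_max_right _ _
        _ = max a b := by rw [← add_smul, hpq, one_smul]
    have hge : min a b ≤ p • a + q • b := by
      calc min a b = p • min a b + q • min a b := by rw [← add_smul, hpq, one_smul]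
        _ ≤ _ := by
            gcongr
            · exact min_le_left _ _
            · exact min_le_right _ _
    refine ⟨(lt_min ha.1 hb.1).trans_le hge, fun s s' h => ?_⟩
    rcases le_max_iff.1 (h.trans hle) with h | h
    · exact ha.2 s s' h
    · exact hb.2 s s' h
  · intro w
    have hK : IsCompact (range fun s : I => (w s, w s)) := isCompact_range (by fun_prop)
    obtain ⟨ε, hε, hεD⟩ := hK.exists_thickening_subset_open hD (by
      rintro _ ⟨s, rfl⟩; exact hdiag _)
    have huc := CompactSpace.uniformContinuous_of_continuous w.continuous
    obtain ⟨δ, hδ, hδ'⟩ := Metric.uniformContinuous_iff.1 huc (ε / 2) (by positivity)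
    refine ⟨δ / 2, ?_⟩
    filter_upwards [Metric.ball_mem_nhds w (show 0 < ε / 2 by positivity)] with w' hw'
    refine ⟨by positivity, fun s s' hss => hεD ?_⟩
    rw [Metric.mem_thickening_iff]
    refine ⟨_, ⟨s, rfl⟩, ?_⟩
    have hd : ∀ t, dist (w' t) (w t) < ε / 2 := fun t =>
      (ContinuousMap.dist_apply_le_dist t).trans_lt hw'
    have h1 : dist (w s') (w s) < ε / 2 := by
      apply hδ'
      rw [Subtype.dist_eq, Real.dist_eq, abs_sub_comm]
      linarith
    rw [Prod.dist_eq]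
    refine max_lt ((hd s).trans (by linarith)) ?_
    calc dist (w' s') (w s) ≤ dist (w' s') (w s') + dist (w s') (w s) := dist_triangle _ _ _
      _ < ε := by linarith [hd s']

lemma lift_of_steer {Z : Type*} [TopologicalSpace Z] (F : E → V)
    (D : Set (V × V)) (Λ : E × V × V → E) (hD : IsOpen D) (hdiag : ∀ y, (y, y) ∈ D)
    (hΛ : ContinuousOn Λ {q | q.2 ∈ D}) (hΛ0 : ∀ u y, Λ (u, y, y) = u)
    (hΛF : ∀ u y, (F u, y) ∈ D → F (Λ (u, F u, y)) = y)
    (g : Z × I → V) (hg : Continuous g) (g₀ : Z → E) (hg₀ : Continuous g₀)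
    (hlift : ∀ z, F (g₀ z) = g (z, 0)) :
    ∃ gt : Z × I → E, Continuous gt ∧ (∀ z, gt (z, 0) = g₀ z) ∧ ∀ z s, F (gt (z, s)) = g (z, s) := by
  obtain ⟨τ', hτ'⟩ := exists_step_s15 D hD hdiag
  let gc : C(Z × I, V) := ⟨g, hg⟩
  let τ : Z → ℝ := fun z => τ' (gc.curry z)
  have hτc : Continuous τ := τ'.continuous.comp gc.curry.continuous
  have hτ0 : ∀ z, 0 < τ z := fun z => (hτ' _).1
  have hτD : ∀ z (s s' : I), |(s:ℝ) - s'| ≤ τ z → (g (z, s), g (z, s')) ∈ D :=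
    fun z => (hτ' (gc.curry z)).2
  let a : ℕ → Z × I → I := fun k q =>
    ⟨min (q.2:ℝ) (k * τ q.1), le_min q.2.2.1 (mul_nonneg k.cast_nonneg (hτ0 _).le),
      (min_le_left _ _).trans q.2.2.2⟩
  have hac : ∀ k, Continuous (a k) := by
    intro k
    apply Continuous.subtype_mk
    fun_prop
  have ha : ∀ k q, |(a k q : ℝ) - a (k + 1) q| ≤ τ q.1 := by
    intro k q
    refine (abs_min_sub_min_le_max _ _ _ _).trans ?_
    have := hτ0 q.1
    simp only [sub_self, abs_zero, Nat.cast_add, Nat.cast_one]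
    refine max_le this.le ?_
    rw [show (k:ℝ) * τ q.1 - (k + 1) * τ q.1 = - τ q.1 by ring, abs_neg, abs_of_pos this]
  have hastab : ∀ (k : ℕ) (q : Z × I), (q.2:ℝ) ≤ k * τ q.1 → a k q = q.2 := by
    intro k q h
    exact Subtype.ext (min_eq_left h)
  have ha0 : ∀ z, a 0 z = 0 := by
    intro z
    refine Subtype.ext ?_
    simp only [a, Nat.cast_zero, zero_mul]
    exact min_eq_right z.2.2.1
  have haz : ∀ k z, a k (z, 0) = 0 := by
    intro k z
    refine Subtype.ext ?_
    exact min_eq_left (mul_nonneg k.cast_nonneg (hτ0 _).le)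
  let G : ℕ → Z × I → V := fun k q => g (q.1, a k q)
  have hGc : ∀ k, Continuous (G k) := by
    intro k
    have := hac k
    exact hg.comp (continuous_fst.prodMk this)
  have hGD : ∀ k q, (G k q, G (k + 1) q) ∈ D := fun k q => hτD _ _ _ (ha k q)
  let H : ℕ → Z × I → E := fun k => Nat.rec (fun q => g₀ q.1)
    (fun k Hk q => Λ (Hk q, G k q, G (k + 1) q)) k
  have hH0 : ∀ q, H 0 q = g₀ q.1 := fun q => rfl
  have hHs : ∀ k q, H (k + 1) q = Λ (H k q, G k q, G (k + 1) q) := fun k q => rfl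
  have hHc : ∀ k, Continuous (H k) := by
    intro k
    induction k with
    | zero => exact hg₀.comp continuous_fst
    | succ k ih =>
      exact hΛ.comp_continuous (ih.prodMk ((hGc k).prodMk (hGc (k + 1)))) (hGD k)
  have hHF : ∀ k q, F (H k q) = G k q := by
    intro k q
    induction k with
    | zero => rw [hH0, hlift]; simp only [G, ha0]
    | succ k ih =>
      have := hGD k q
      rw [hHs, ← ih]
      rw [← ih] at this
      exact hΛF _ _ this
  have hlf : LocallyFinite fun k => {q | H (k + 1) q ≠ H k q} := by
    rintro ⟨z₀, s₀⟩
    refine ⟨{q | τ z₀ / 2 < τ q.1}, ?_, ?_⟩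
    · have : Continuous fun q : Z × I => τ q.1 := hτc.comp continuous_fst
      exact this.continuousAt.eventually (lt_mem_nhds (half_lt_self (hτ0 z₀)))
    · refine (Set.finite_lt_nat (⌈2 / τ z₀⌉₊ + 1)).subset ?_
      rintro k ⟨q, hq, hq'⟩
      by_contra hk
      simp only [mem_ofPred_eq, not_lt] at hk hq hq'
      apply hq
      have h0 := hτ0 z₀
      have h1 : 2 / τ z₀ ≤ k := (Nat.le_ceil _).trans (by exact_mod_cast (Nat.le_succ _).trans hk)
      have h2 : (q.2:ℝ) ≤ k * τ q.1 := by
        refine q.2.2.2.trans ?_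
        rw [div_le_iff₀ h0] at h1
        have : (0:ℝ) ≤ k := k.cast_nonneg
        nlinarith
      have h3 : (q.2:ℝ) ≤ (k + 1 : ℕ) * τ q.1 := by
        push_cast
        nlinarith [hτ0 q.1]
      rw [hHs]
      simp only [G, hastab k q h2, hastab (k + 1) q h3]
      exact hΛ0 _ _
  obtain ⟨L, hL⟩ := hlf.exists_forall_eventually_atTop_eventuallyEq
  refine ⟨L, ?_, ?_, ?_⟩
  · rw [continuous_iff_continuousAt]
    intro q
    obtain ⟨n, hn⟩ := (hL q).exists
    exact (hHc n).continuousAt.congr hn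
  · intro z
    obtain ⟨n, hn⟩ := (hL (z, 0)).exists
    rw [← hn.self_of_nhds]
    clear hn
    induction n with
    | zero => rfl
    | succ k ih =>
      rw [hHs, ih]
      simp only [G, haz]
      exact hΛ0 _ _
  · intro z s
    have hev : ∀ᶠ n : ℕ in atTop, (s:ℝ) ≤ n * τ z := by
      filter_upwards [eventually_ge_atTop ⌈(s:ℝ) / τ z⌉₊] with n hn
      rw [← div_le_iff₀ (hτ0 z)]
      exact (Nat.le_ceil _).trans (by exact_mod_cast hn)
    obtain ⟨n, hn, hn'⟩ := ((hL (z, s)).and hev).exists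
    rw [← hn.self_of_nhds, hHF]
    simp only [G, hastab n (z, s) hn']
end

lemma gronwall_zero (f k : ℝ → ℝ) (hf : ContinuousOn f (Icc 0 1))
    (hf0 : ∀ t, 0 ≤ f t) (hk0 : ∀ t, 0 ≤ k t)
    (hk : IntervalIntegrable k volume 0 1)
    (h : ∀ t ∈ Icc (0:ℝ) 1, f t ≤ ∫ s in (0:ℝ)..t, k s * f s) :
    f 1 = 0 := by
  have hkf : IntervalIntegrable (fun s => k s * f s) volume 0 1 :=
    hk.mul_continuousOn (by rwa [uIcc_of_le zero_le_one])
  have sub : ∀ {a b : ℝ}, a ∈ Icc (0:ℝ) 1 → b ∈ Icc (0:ℝ) 1 → uIcc a b ⊆ uIcc 0 1 := by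
    intro a b ha hb
    rw [uIcc_of_le (zero_le_one (α := ℝ))]
    exact uIcc_subset_Icc ha hb
  have ii : ∀ {φ : ℝ → ℝ} {a b : ℝ}, IntervalIntegrable φ volume 0 1 → a ∈ Icc (0:ℝ) 1 →
      b ∈ Icc (0:ℝ) 1 → IntervalIntegrable φ volume a b :=
    fun hφ ha hb => hφ.mono_set (sub ha hb)
  have h00 : (0:ℝ) ∈ Icc (0:ℝ) 1 := ⟨le_rfl, zero_le_one⟩
  have h11 : (1:ℝ) ∈ Icc (0:ℝ) 1 := ⟨zero_le_one, le_rfl⟩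
  let Φ : ℝ → ℝ := fun t => ∫ s in (0:ℝ)..t, k s * f s
  have cont : ∀ {φ : ℝ → ℝ}, IntervalIntegrable φ volume 0 1 →
      ContinuousOn (fun t => ∫ s in (0:ℝ)..t, φ s) (Icc 0 1) := by
    intro φ hφ
    have := intervalIntegral.continuousOn_primitive_interval' hφ (left_mem_uIcc)
    rwa [uIcc_of_le zero_le_one] at this
  have hΦc : ContinuousOn Φ (Icc 0 1) := cont hkf
  have hadd : ∀ {φ : ℝ → ℝ}, IntervalIntegrable φ volume 0 1 → ∀ a ∈ Icc (0:ℝ) 1, ∀ b ∈ Icc (0:ℝ) 1,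
      (∫ s in (0:ℝ)..b, φ s) = (∫ s in (0:ℝ)..a, φ s) + ∫ s in a..b, φ s := by
    intro φ hφ a ha b hb
    exact (intervalIntegral.integral_add_adjacent_intervals (ii hφ h00 ha) (ii hφ ha hb)).symm
  have hmono : ∀ a ∈ Icc (0:ℝ) 1, ∀ b ∈ Icc (0:ℝ) 1, a ≤ b → Φ a ≤ Φ b := by
    intro a ha b hb hab
    simp only [Φ]
    rw [hadd hkf a ha b hb]
    have := intervalIntegral.integral_nonneg (μ := volume) hab
      (fun s _ => mul_nonneg (hk0 s) (hf0 s))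
    linarith
  have hsub : Icc (0:ℝ) 1 ⊆ {t | Φ t = 0} := by
    refine IsClosed.Icc_subset_of_forall_mem_nhdsWithin ?_ ?_ ?_
    · have := hΦc.preimage_isClosed_of_isClosed isClosed_Icc (isClosed_singleton (x := (0:ℝ)))
      rw [inter_comm] at this
      exact this
    · simp [Φ]
    · rintro x ⟨hx, hx'⟩
      have hxI : x ∈ Icc (0:ℝ) 1 := ⟨hx'.1, hx'.2.le⟩
      have hKx := (cont hk) x hxI
      have hlt : ∀ᶠ t in 𝓝[Icc 0 1] x,
          (∫ s in (0:ℝ)..t, k s) < (∫ s in (0:ℝ)..x, k s) + 1 / 2 :=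
        hKx.eventually (gt_mem_nhds (by linarith))
      have hlt' : ∀ᶠ t in 𝓝[>] x, (∫ s in (0:ℝ)..t, k s) < (∫ s in (0:ℝ)..x, k s) + 1 / 2 := by
        have hle : 𝓝[Ioo x 1] x ≤ 𝓝[Icc 0 1] x :=
          nhdsWithin_mono _ (fun t ht => ⟨hx'.1.trans ht.1.le, ht.2.le⟩)
        rw [nhdsWithin_Ioo_eq_nhdsGT hx'.2] at hle
        exact hle hlt
      filter_upwards [hlt', Ioo_mem_nhdsGT hx'.2] with t ht htI
      have htI' : t ∈ Icc (0:ℝ) 1 := ⟨hx'.1.trans htI.1.le, htI.2.le⟩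
      have hxt := htI.1.le
      have e1 : Φ t = ∫ s in x..t, k s * f s := by
        have := hadd hkf x hxI t htI'
        have hx0 : Φ x = 0 := hx
        simp only [Φ] at hx0 ⊢
        rw [this, hx0, zero_add]
      have e2 : (∫ s in x..t, k s * f s) ≤ ∫ s in x..t, k s * Φ t := by
        refine intervalIntegral.integral_mono_on hxt (ii hkf hxI htI')
          ((ii hk hxI htI').mul_const _) ?_
        intro s hs
        have hsI : s ∈ Icc (0:ℝ) 1 := ⟨hx'.1.trans hs.1, hs.2.trans htI'.2⟩
        exact mul_le_mul_of_nonneg_left ((h s hsI).trans (hmono s hsI t htI' hs.2)) (hk0 s)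
      rw [intervalIntegral.integral_mul_const] at e2
      have e3 := hadd hk x hxI t htI'
      have e4 : 0 ≤ Φ t := by
        have := hmono 0 h00 t htI' htI'.1
        simpa [Φ] using this
      show Φ t = 0
      nlinarith
  have := h 1 h11
  have h2 : Φ 1 = 0 := hsub h11
  exact le_antisymm (this.trans h2.le) (hf0 1)

section
variable {n d : ℕ} {X : Fin d → EuclideanSpace ℝ (Fin n) → EuclideanSpace ℝ (Fin n)}
  {x : EuclideanSpace ℝ (Fin n)}

lemma traj_integrable (hXc : ∀ i, Continuous (X i)) {u : ℝ → EuclideanSpace ℝ (Fin d)}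
    (hu : ∀ i, IntervalIntegrable (fun s => u s i) volume 0 1)
    {γ : ℝ → EuclideanSpace ℝ (Fin n)} (hγ : ContinuousOn γ (Icc 0 1)) :
    IntervalIntegrable (fun s => ∑ i, u s i • X i (γ s)) volume 0 1 := by
  have key : ∀ i ∈ Finset.univ, IntervalIntegrable (fun s => u s i • X i (γ s)) volume 0 1 := ?_
  · have := IntervalIntegrable.sum Finset.univ key
    have e : (fun s => ∑ i, u s i • X i (γ s)) = ∑ i, fun s => u s i • X i (γ s) := by
      funext s; simp
    rw [e]; exact this
  intro i _
  refine (hu i).smul_continuousOn ?_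
  rw [uIcc_of_le zero_le_one]
  exact (hXc i).comp_continuousOn hγ

lemma traj_unique {C : ℝ} (hXc : ∀ i, Continuous (X i))
    (hL : ∀ i y z, ‖X i y - X i z‖ ≤ C * ‖y - z‖) (hC : 0 ≤ C)
    {u : ℝ → EuclideanSpace ℝ (Fin d)}
    (hu : ∀ i, IntervalIntegrable (fun s => u s i) volume 0 1)
    {γ γ' : ℝ → EuclideanSpace ℝ (Fin n)}
    (h : IsTrajectory X x u γ) (h' : IsTrajectory X x u γ') : γ 1 = γ' 1 := by
  have hi := traj_integrable hXc hu h.1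
  have hi' := traj_integrable hXc hu h'.1
  let k : ℝ → ℝ := fun s => ∑ i, |u s i| * C
  have hk : IntervalIntegrable k volume 0 1 := by
    have := IntervalIntegrable.sum Finset.univ (f := fun i s => |u s i| * C)
      fun i _ => (hu i).abs.mul_const _
    have e : k = ∑ i, fun s => |u s i| * C := by
      funext s; simp [k]
    rw [e]; exact this
  have key := gronwall_zero (fun t => ‖γ t - γ' t‖) k (h.1.sub h'.1).norm (fun t => norm_nonneg _)
    (fun t => Finset.sum_nonneg fun i _ => by positivity) hk ?_
  · exact sub_eq_zero.1 (norm_eq_zero.1 key)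
  intro t ht
  have sub : uIcc 0 t ⊆ uIcc (0:ℝ) 1 := by
    rw [uIcc_of_le (zero_le_one (α := ℝ)), uIcc_of_le ht.1]
    exact Icc_subset_Icc le_rfl ht.2
  have hkf : IntervalIntegrable (fun s => k s * ‖γ s - γ' s‖) volume 0 1 :=
    hk.mul_continuousOn (by rw [uIcc_of_le zero_le_one]; exact (h.1.sub h'.1).norm)
  show ‖γ t - γ' t‖ ≤ _
  rw [h.2 t ht, h'.2 t ht, add_sub_add_left_eq_sub,
    ← intervalIntegral.integral_sub (hi.mono_set sub) (hi'.mono_set sub)]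
  refine intervalIntegral.norm_integral_le_of_norm_le ht.1 ?_ (hkf.mono_set sub)
  refine ae_of_all _ fun s _ => ?_
  rw [← Finset.sum_sub_distrib, Finset.sum_mul]
  refine (norm_sum_le _ _).trans (Finset.sum_le_sum fun i _ => ?_)
  rw [← smul_sub, norm_smul, Real.norm_eq_abs, mul_assoc]
  gcongr
  exact hL i _ _
end

section
variable {B : Type} [NormedAddCommGroup B] [NormedSpace ℝ B]

/-- The control `u`, followed by the constant control `sign α • e` for a time `|α|`. -/
def extFun (e : B) (u : ℝ → B) (α : ℝ) (t : ℝ) : B :=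
  (Icc (0:ℝ) 1).indicator u t + (Ioi (1:ℝ)).indicator (fun _ => Real.sign α • e) t

/-- Time rescaling of `extFun`. -/
def stepFun (e : B) (u : ℝ → B) (α : ℝ) (t : ℝ) : B :=
  (1 + |α|) • extFun e u α ((1 + |α|) * t)

/-- Lebesgue measure on the unit interval. -/
abbrev μI : Measure ℝ := volume.restrict (Icc (0:ℝ) 1)

lemma one_add_abs_pos (α : ℝ) : 0 < 1 + |α| := by positivity

lemma map_dil_le {b : ℝ} (hb : 1 ≤ b) : Measure.map (fun x => b * x) volume ≤ volume := by
  rw [Real.map_volume_mul_left (by linarith : b ≠ 0)]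
  refine Measure.le_iff.2 fun s _ => ?_
  rw [Measure.smul_apply, smul_eq_mul]
  refine (mul_le_mul_left (a := volume s) ?_).trans (one_mul _).le
  rw [ENNReal.ofReal_le_one, abs_of_pos (by positivity)]
  exact inv_le_one_of_one_le₀ hb

lemma memLp_dil {p : ENNReal} {u : ℝ → B} (hu : MemLp u p μI) {b : ℝ} (hb : 1 ≤ b) :
    MemLp (fun t => (Icc (0:ℝ) 1).indicator u (b * t)) p μI := by
  have h1 : MemLp ((Icc (0:ℝ) 1).indicator u) p volume :=
    (memLp_indicator_iff_restrict measurableSet_Icc).2 hu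
  have h2 := h1.mono_measure (map_dil_le hb)
  exact (h2.comp_of_map (by fun_prop)).restrict _

lemma eLpNorm_dil_le {p : ENNReal} {u : ℝ → B} (hu : MemLp u p μI) {b : ℝ} (hb : 1 ≤ b) :
    eLpNorm (fun t => (Icc (0:ℝ) 1).indicator u (b * t)) p μI ≤ eLpNorm u p μI := by
  have h1 : MemLp ((Icc (0:ℝ) 1).indicator u) p volume :=
    (memLp_indicator_iff_restrict measurableSet_Icc).2 hu
  have h2 := h1.mono_measure (map_dil_le hb)
  calc _ ≤ eLpNorm (((Icc (0:ℝ) 1).indicator u) ∘ (fun x => b * x)) p volume :=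
        eLpNorm_mono_measure _ Measure.restrict_le_self
    _ = eLpNorm ((Icc (0:ℝ) 1).indicator u) p (Measure.map (fun x => b * x) volume) :=
        (eLpNorm_map_measure h2.1 (by fun_prop)).symm
    _ ≤ eLpNorm ((Icc (0:ℝ) 1).indicator u) p volume := eLpNorm_mono_measure _ (map_dil_le hb)
    _ = eLpNorm u p μI := eLpNorm_indicator_eq_eLpNorm_restrict measurableSet_Icc

lemma memLp_step {p : ENNReal} {u : ℝ → B} (e : B) (hu : MemLp u p μI) (α : ℝ) :
    MemLp (stepFun e u α) p μI := by
  have hb : 1 ≤ 1 + |α| := by linarith [abs_nonneg α]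
  have h2 : MemLp (fun t => (Ioi (1:ℝ)).indicator (fun _ => Real.sign α • e) ((1 + |α|) * t)) p μI := by
    have : (fun t => (Ioi (1:ℝ)).indicator (fun _ => Real.sign α • e) ((1 + |α|) * t))
        = ((fun t => (1 + |α|) * t) ⁻¹' (Ioi (1:ℝ))).indicator (fun _ => Real.sign α • e) := by
      funext t; rfl
    rw [this]
    exact (memLp_const _).indicator ((measurable_const_mul _) measurableSet_Ioi)
  exact ((memLp_dil hu hb).add h2).const_smul _

lemma eLpNorm_step_sub {p : ENNReal} {u v : ℝ → B} (e : B) (hu : MemLp u p μI) (hv : MemLp v p μI)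
    (α : ℝ) : eLpNorm (stepFun e u α - stepFun e v α) p μI
      ≤ ENNReal.ofReal (1 + |α|) * eLpNorm (u - v) p μI := by
  have hb : 1 ≤ 1 + |α| := by linarith [abs_nonneg α]
  have : stepFun e u α - stepFun e v α
      = (1 + |α|) • (fun t => (Icc (0:ℝ) 1).indicator (u - v) ((1 + |α|) * t)) := by
    funext t
    simp only [stepFun, extFun, Pi.sub_apply, Pi.smul_apply, indicator_sub']
    module
  rw [this, eLpNorm_const_smul, Real.enorm_eq_ofReal (by linarith)]
  gcongr
  exact eLpNorm_dil_le (hu.sub hv) hb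

lemma tendsto_eLpNorm_bdd {p : ENNReal} (hp0 : p ≠ 0) (hp : p ≠ ⊤) {ι : Type} {l : Filter ι}
    [l.IsCountablyGenerated] (f : ι → ℝ → B) (g : ℝ → B) (M : ℝ)
    (hf : ∀ i, AEStronglyMeasurable (f i) μI) (hg : AEStronglyMeasurable g μI)
    (hM : ∀ᶠ i in l, ∀ t, ‖f i t - g t‖ ≤ M)
    (hlim : ∀ᵐ t ∂μI, Tendsto (fun i => f i t) l (𝓝 (g t))) :
    Tendsto (fun i => eLpNorm (f i - g) p μI) l (𝓝 0) := by
  have hpr : 0 < p.toReal := ENNReal.toReal_pos hp0 hp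
  have h1 : Tendsto (fun i => ∫⁻ t, ‖(f i - g) t‖ₑ ^ p.toReal ∂μI) l (𝓝 (∫⁻ _, 0 ∂μI)) := by
    refine tendsto_lintegral_filter_of_dominated_convergence'
      (fun _ => ENNReal.ofReal M ^ p.toReal) ?_ ?_ ?_ ?_
    · exact Eventually.of_forall fun i => ((hf i).sub hg).enorm.pow_const _
    · filter_upwards [hM] with i hi
      refine ae_of_all _ fun t => ?_
      gcongr
      rw [Pi.sub_apply, ← ofReal_norm]
      exact ENNReal.ofReal_le_ofReal (hi t)
    · rw [lintegral_const]
      exact ENNReal.mul_ne_top (ENNReal.rpow_ne_top_of_nonneg hpr.le ENNReal.ofReal_ne_top)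
        (measure_ne_top _ _)
    · filter_upwards [hlim] with t ht
      have h0 : Tendsto (fun i => ‖(f i - g) t‖ₑ) l (𝓝 0) := by
        have := (ht.sub_const (g t)).enorm
        simpa using this
      have := (ENNReal.continuous_rpow_const (y := p.toReal)).continuousAt.tendsto.comp h0
      simpa [Function.comp_def, ENNReal.zero_rpow_of_pos hpr] using this
  rw [lintegral_zero] at h1
  have h2 := (ENNReal.continuous_rpow_const (y := 1 / p.toReal)).continuousAt.tendsto.comp h1
  have hpr' : 0 < 1 / p.toReal := by positivity
  rw [ENNReal.zero_rpow_of_pos hpr'] at h2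
  refine h2.congr fun i => ?_
  rw [Function.comp, eLpNorm_eq_lintegral_rpow_enorm_toReal hp0 hp]

lemma ae_ne_const (c : ℝ) : ∀ᵐ t ∂μI, t ≠ c := by
  unfold μI
  exact ae_restrict_of_ae (by simp [ae_iff])

lemma tendsto_step {p : ENNReal} (hp0 : p ≠ 0) (hp : p ≠ ⊤) (e : B) (g : ℝ → B)
    (hg : Continuous g) (M : ℝ) (hM : ∀ t, ‖g t‖ ≤ M) (hgp : MemLp g p μI) (α₀ : ℝ) :
    Tendsto (fun α => eLpNorm (stepFun e g α - stepFun e g α₀) p μI) (𝓝 α₀) (𝓝 0) := by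
  have hM0 : 0 ≤ M := (norm_nonneg _).trans (hM 0)
  have bd : ∀ α t, ‖stepFun e g α t‖ ≤ (1 + |α|) * (M + ‖e‖) := by
    intro α t
    rw [stepFun, norm_smul, Real.norm_eq_abs, abs_of_pos (one_add_abs_pos α)]
    have := one_add_abs_pos α
    gcongr
    refine (norm_add_le _ _).trans ?_
    gcongr
    · refine (norm_indicator_le_norm_self _ _).trans (hM _)
    · refine (norm_indicator_le_norm_self _ _).trans ?_
      rw [norm_smul]
      refine mul_le_of_le_one_left (norm_nonneg _) ?_
      rcases Real.sign_apply_eq α with h | h | h <;> simp [h]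
  refine tendsto_eLpNorm_bdd hp0 hp _ _ ((2 + |α₀|) * (M + ‖e‖) + (1 + |α₀|) * (M + ‖e‖))
    (fun α => (memLp_step e hgp α).1) (memLp_step e hgp α₀).1 ?_ ?_
  · have : ∀ᶠ α in 𝓝 α₀, |α| < |α₀| + 1 :=
      continuous_abs.continuousAt.eventually (gt_mem_nhds (by linarith))
    filter_upwards [this] with α hα t
    refine (norm_sub_le _ _).trans (add_le_add ((bd α t).trans ?_) (bd α₀ t))
    have : 0 ≤ M + ‖e‖ := by positivity
    gcongr ?_ * _
    linarith
  · filter_upwards [ae_ne_const ((1 + |α₀|)⁻¹), ae_ne_const 0,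
      (ae_restrict_mem measurableSet_Icc : ∀ᵐ t ∂μI, t ∈ Icc (0:ℝ) 1)] with t ht ht0 htI
    have htp : 0 < t := lt_of_le_of_ne htI.1 (Ne.symm ht0)
    have hne : (1 + |α₀|) * t ≠ 1 := by
      intro h
      apply ht
      exact eq_inv_of_mul_eq_one_right h
    have hbc : Continuous fun α : ℝ => (1 + |α|) * t := by fun_prop
    have hbc1 : Continuous fun α : ℝ => (1 + |α|) := by fun_prop
    unfold stepFun
    refine (hbc1.tendsto α₀).smul ?_
    rcases lt_or_gt_of_ne hne with hlt | hgt
    · have ev : ∀ᶠ α in 𝓝 α₀, (1 + |α|) * t < 1 :=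
        hbc.continuousAt.eventually (gt_mem_nhds hlt)
      have val : ∀ α : ℝ, (1 + |α|) * t < 1 → extFun e g α ((1 + |α|) * t) = g ((1 + |α|) * t) := by
        intro α h
        have h0 : 0 ≤ (1 + |α|) * t := mul_nonneg (one_add_abs_pos α).le htI.1
        rw [extFun, indicator_of_mem (show _ ∈ Icc (0:ℝ) 1 from ⟨h0, h.le⟩), indicator_of_notMem, add_zero]
        simpa using h.le
      rw [val α₀ hlt]
      refine ((hg.comp hbc).tendsto α₀).congr' ?_
      filter_upwards [ev] with α h
      exact (val α h).symm
    · have ev : ∀ᶠ α in 𝓝 α₀, 1 < (1 + |α|) * t :=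
        hbc.continuousAt.eventually (lt_mem_nhds hgt)
      have hα₀ : α₀ ≠ 0 := by
        rintro rfl
        simp only [abs_zero, add_zero, one_mul] at hgt
        exact absurd htI.2 (not_le.2 hgt)
      have evs : ∀ᶠ α in 𝓝 α₀, Real.sign α = Real.sign α₀ := by
        rcases lt_or_gt_of_ne hα₀ with h | h
        · filter_upwards [gt_mem_nhds h] with α h'
          rw [Real.sign_of_neg h, Real.sign_of_neg h']
        · filter_upwards [lt_mem_nhds h] with α h'
          rw [Real.sign_of_pos h, Real.sign_of_pos h']
      have val : ∀ α : ℝ, 1 < (1 + |α|) * t → extFun e g α ((1 + |α|) * t) = Real.sign α • e := by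
        intro α h
        rw [extFun, indicator_of_notMem, indicator_of_mem (show _ ∈ Ioi (1:ℝ) from h), zero_add]
        exact fun h' => absurd h'.2 (not_le.2 h)
      rw [val α₀ hgt]
      refine (tendsto_const_nhds).congr' ?_
      filter_upwards [ev, evs] with α h h'
      rw [val α h, h']

/-- The step in `L^p`. -/
def stepLp (p : ENNReal) (e : B) (q : Lp B p μI × ℝ) : Lp B p μI :=
  (memLp_step e (Lp.memLp q.1) q.2).toLp _

lemma stepFun_zero (e : B) (u : ℝ → B) {t : ℝ} (ht : t ∈ Icc (0:ℝ) 1) : stepFun e u 0 t = u t := by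
  simp only [stepFun, extFun, abs_zero, add_zero, one_mul, one_smul]
  rw [indicator_of_mem ht, indicator_of_notMem, add_zero]
  simpa using ht.2

lemma stepLp_zero (p : ENNReal) (e : B) (u : Lp B p μI) : stepLp p e (u, 0) = u := by
  apply Lp.ext
  refine (MemLp.coeFn_toLp _).trans ?_
  filter_upwards [(ae_restrict_mem measurableSet_Icc : ∀ᵐ t ∂μI, t ∈ Icc (0:ℝ) 1)] with t ht
  exact stepFun_zero e _ ht

lemma stepLp_continuous (p : ENNReal) [Fact (1 ≤ p)] (hp : p ≠ ⊤) (e : B) :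
    Continuous (stepLp p e) := by
  have hp0 : p ≠ 0 := (lt_of_lt_of_le one_pos (Fact.out : 1 ≤ p)).ne'
  rw [continuous_iff_continuousAt]
  rintro ⟨u₀, α₀⟩
  rw [ContinuousAt, EMetric.tendsto_nhds]
  intro ε hε
  obtain ⟨δ, hδ, hδε⟩ := ENNReal.exists_nnreal_pos_mul_lt
    (a := ENNReal.ofReal (1 + |α₀|) + ENNReal.ofReal (1 + |α₀|)) (b := ε) (by simp) hε.ne'
  obtain ⟨g, hg, hgp⟩ := (Lp.memLp u₀).exists_boundedContinuous_eLpNorm_sub_le hp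
    (ε := (δ : ENNReal)) (by exact_mod_cast hδ.ne')
  let gL : Lp B p μI := hgp.toLp _
  have hd0 : edist u₀ gL ≤ δ := by
    rw [← Lp.toLp_coeFn u₀ (Lp.memLp u₀), Lp.edist_toLp_toLp]
    exact hg
  have e1 : ∀ (u : Lp B p μI) α, edist (stepLp p e (u, α)) ((memLp_step e hgp α).toLp _)
      ≤ ENNReal.ofReal (1 + |α|) * edist u gL := by
    intro u α
    rw [stepLp, Lp.edist_toLp_toLp, ← Lp.toLp_coeFn u (Lp.memLp u), Lp.edist_toLp_toLp]
    refine (eLpNorm_step_sub e (Lp.memLp _) hgp α).trans (le_of_eq ?_)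
    congr 1
    rw [Lp.toLp_coeFn]
  have e2 : Tendsto (fun q : Lp B p μI × ℝ => ENNReal.ofReal (1 + |q.2|) * (edist q.1 u₀ + δ)
      + eLpNorm (stepFun e g q.2 - stepFun e g α₀) p μI
      + ENNReal.ofReal (1 + |α₀|) * δ) (𝓝 (u₀, α₀))
      (𝓝 (ENNReal.ofReal (1 + |α₀|) * (edist u₀ u₀ + δ) + 0 + ENNReal.ofReal (1 + |α₀|) * δ)) := by
    refine Tendsto.add (Tendsto.add (ENNReal.Tendsto.mul ?_ ?_ ?_ ?_) ?_) tendsto_const_nhds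
    · exact (ENNReal.continuous_ofReal.comp
        (by fun_prop : Continuous fun q : Lp B p μI × ℝ => 1 + |q.2|)).tendsto (u₀, α₀)
    · right; simp
    · exact (by fun_prop : Continuous fun q : Lp B p μI × ℝ => edist q.1 u₀ + δ).tendsto (u₀, α₀)
    · right; simp
    · have := tendsto_step hp0 hp e g g.continuous ‖g‖ g.norm_coe_le_norm hgp α₀
      exact this.comp (continuous_snd.tendsto (u₀, α₀))
  have e3 : ENNReal.ofReal (1 + |α₀|) * (edist u₀ u₀ + δ) + 0 + ENNReal.ofReal (1 + |α₀|) * δ < ε := by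
    refine lt_of_eq_of_lt ?_ hδε
    rw [edist_self]; ring
  filter_upwards [e2.eventually (gt_mem_nhds e3)] with q hq
  refine lt_of_le_of_lt ?_ hq
  obtain ⟨u, α⟩ := q
  refine (edist_triangle4 _ ((memLp_step e hgp α).toLp _) ((memLp_step e hgp α₀).toLp _) _).trans ?_
  gcongr
  · refine (e1 u α).trans ?_
    gcongr
    exact (edist_triangle u u₀ gL).trans (by gcongr)
  · rw [Lp.edist_toLp_toLp]
  · rw [edist_comm]
    refine (e1 u₀ α₀).trans ?_
    gcongr

end

section
variable {n d : ℕ} {X : Fin d → EuclideanSpace ℝ (Fin n) → EuclideanSpace ℝ (Fin n)}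
  {x : EuclideanSpace ℝ (Fin n)}

lemma traj_congr {u v : ℝ → EuclideanSpace ℝ (Fin d)} (huv : u =ᵐ[μI] v)
    {γ : ℝ → EuclideanSpace ℝ (Fin n)} (h : IsTrajectory X x u γ) : IsTrajectory X x v γ := by
  refine ⟨h.1, fun t ht => ?_⟩
  rw [h.2 t ht]
  congr 1
  refine intervalIntegral.integral_congr_ae ?_
  have := (ae_restrict_iff' measurableSet_Icc).1 huv
  filter_upwards [this] with s hs hs'
  rw [uIoc_of_le ht.1] at hs'
  rw [hs ⟨hs'.1.le, hs'.2.trans ht.2⟩]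

lemma traj_step (hXc : ∀ i, Continuous (X i)) {u : ℝ → EuclideanSpace ℝ (Fin d)}
    (hu : ∀ i, IntervalIntegrable (fun s => u s i) volume 0 1)
    {γ : ℝ → EuclideanSpace ℝ (Fin n)} (hγ : IsTrajectory X x u γ) (i : Fin d) (α : ℝ)
    (Γ : ℝ → EuclideanSpace ℝ (Fin n)) (hΓc : Continuous Γ) (hneg : ∀ t ≤ 0, Γ t = γ 1)
    (hΓ : ∀ t ∈ Icc (0:ℝ) 1, Γ t = γ 1 + α • ∫ s in (0:ℝ)..t, X i (Γ s)) :
    ∃ η, IsTrajectory X x (stepFun (EuclideanSpace.single i (1:ℝ)) u α) η ∧ η 1 = Γ 1 := by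
  set e : EuclideanSpace ℝ (Fin d) := EuclideanSpace.single i (1:ℝ) with he
  let b : ℝ := 1 + |α|
  have hb : 1 ≤ b := by simp only [b]; linarith [abs_nonneg α]
  let η : ℝ → EuclideanSpace ℝ (Fin n) := fun t => γ (min t 1) + (Γ ((t - 1) / |α|) - γ 1)
  have hη1 : ∀ t, t ≤ 1 → η t = γ t := by
    intro t ht
    simp only [η, min_eq_left ht]
    rw [hneg _ (div_nonpos_of_nonpos_of_nonneg (by linarith) (abs_nonneg _)), sub_self, add_zero]
  have hη2 : ∀ t, 1 ≤ t → η t = Γ ((t - 1) / |α|) := by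
    intro t ht
    simp only [η, min_eq_right ht]
    abel
  have hηc : ContinuousOn η (Icc 0 b) := by
    refine ContinuousOn.add (hγ.1.comp (by fun_prop) ?_) (Continuous.continuousOn (by fun_prop))
    intro t ht
    exact ⟨le_min ht.1 zero_le_one, min_le_right _ _⟩
  let f : ℝ → EuclideanSpace ℝ (Fin n) := fun s => ∑ j, (extFun e u α s) j • X j (η s)
  have hf1 : ∀ s ∈ Icc (0:ℝ) 1, f s = ∑ j, u s j • X j (γ s) := by
    intro s hs
    have : extFun e u α s = u s := by
      rw [extFun, indicator_of_mem hs, indicator_of_notMem (by simpa using hs.2), add_zero]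
    simp only [f, this, hη1 s hs.2]
  have hf2 : ∀ s, 1 < s → f s = Real.sign α • X i (Γ ((s - 1) / |α|)) := by
    intro s hs
    have : extFun e u α s = Real.sign α • e := by
      rw [extFun, indicator_of_notMem (fun h => absurd h.2 (not_le.2 hs)),
        indicator_of_mem (show s ∈ Ioi (1:ℝ) from hs), zero_add]
    simp only [f, this, hη2 s hs.le]
    rw [Finset.sum_eq_single i]
    · simp [he]
    · intro j _ hj
      simp [he, hj]
    · simp
  have main : ∀ t ∈ Icc (0:ℝ) b, η t = x + ∫ s in (0:ℝ)..t, f s := by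
    intro t ht
    have i1 : ∀ r ∈ Icc (0:ℝ) 1, (∫ s in (0:ℝ)..r, f s) = ∫ s in (0:ℝ)..r, ∑ j, u s j • X j (γ s) := by
      intro r hr
      refine intervalIntegral.integral_congr fun s hs => ?_
      rw [uIcc_of_le hr.1] at hs
      exact hf1 s ⟨hs.1, hs.2.trans hr.2⟩
    rcases le_or_gt t 1 with h | h
    · rw [hη1 t h, i1 t ⟨ht.1, h⟩]
      exact hγ.2 t ⟨ht.1, h⟩
    · have hα : 0 < |α| := by
        have : t ≤ 1 + |α| := ht.2
        linarith
      have int1 : IntervalIntegrable f volume 0 1 := by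
        refine (traj_integrable hXc hu hγ.1).congr ?_
        intro s hs
        rw [uIoc_of_le zero_le_one] at hs
        exact (hf1 s ⟨hs.1.le, hs.2⟩).symm
      have cΓ : Continuous fun s : ℝ => Real.sign α • X i (Γ ((s - 1) / |α|)) := by
        have := hXc i
        fun_prop
      have int2 : IntervalIntegrable f volume 1 t := by
        refine (cΓ.intervalIntegrable 1 t).congr ?_
        intro s hs
        rw [uIoc_of_le h.le] at hs
        exact (hf2 s hs.1).symm
      have e2 : (∫ s in (1:ℝ)..t, f s) = α • ∫ s in (0:ℝ)..((t - 1) / |α|), X i (Γ s) := by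
        have a1 : (∫ s in (1:ℝ)..t, f s)
            = ∫ s in (1:ℝ)..t, Real.sign α • X i (Γ (s / |α| - 1 / |α|)) := by
          refine intervalIntegral.integral_congr_ae (ae_of_all _ fun s hs => ?_)
          rw [uIoc_of_le h.le] at hs
          rw [hf2 s hs.1, sub_div]
        rw [a1, intervalIntegral.integral_smul,
          intervalIntegral.integral_comp_div_sub (fun s => X i (Γ s)) hα.ne', smul_smul, sub_self,
          ← sub_div]
        congr 1
        rcases lt_or_gt_of_ne (abs_pos.1 hα) with h' | h'
        · rw [Real.sign_of_neg h', abs_of_neg h']; ring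
        · rw [Real.sign_of_pos h', abs_of_pos h']; ring
      have hm : (t - 1) / |α| ∈ Icc (0:ℝ) 1 := by
        refine ⟨div_nonneg (by linarith) hα.le, ?_⟩
        rw [div_le_one hα]
        have : t ≤ 1 + |α| := ht.2
        linarith
      rw [hη2 t h.le, hΓ _ hm, ← intervalIntegral.integral_add_adjacent_intervals int1 int2, e2,
        i1 1 ⟨zero_le_one, le_rfl⟩, hγ.2 1 ⟨zero_le_one, le_rfl⟩, add_assoc]
  have hmem : ∀ t ∈ Icc (0:ℝ) 1, b * t ∈ Icc (0:ℝ) b := by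
    intro t ht
    exact ⟨mul_nonneg (by linarith) ht.1, mul_le_of_le_one_right (by linarith) ht.2⟩
  refine ⟨fun t => η (b * t), ⟨hηc.comp (by fun_prop) hmem, fun t ht => ?_⟩, ?_⟩
  · have h1 := main (b * t) (hmem t ht)
    have h2 := intervalIntegral.smul_integral_comp_mul_left (a := 0) (b := t) f b
    rw [mul_zero] at h2
    simp only
    rw [h1, ← h2, ← intervalIntegral.integral_smul]
    congr 1
    refine intervalIntegral.integral_congr fun s _ => ?_
    simp only [f, stepFun, Finset.smul_sum, smul_smul, PiLp.smul_apply, smul_eq_mul, b]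
  · simp only [mul_one]
    rw [hη2 b hb]
    by_cases hα : α = 0
    · subst hα
      have := hΓ 1 ⟨zero_le_one, le_rfl⟩
      rw [zero_smul, add_zero] at this
      rw [this]
      exact hneg _ (by simp)
    · have : (b - 1) / |α| = 1 := by
        simp only [b, add_sub_cancel_left]
        exact div_self (abs_pos.2 hα).ne'
      rw [this]

lemma lp_coord_integrable {p : ENNReal} (hp : 1 ≤ p) (u : Lp (EuclideanSpace ℝ (Fin d)) p μI)
    (i : Fin d) : IntervalIntegrable (fun s => u s i) volume 0 1 := by
  have h1 : Integrable u μI := (Lp.memLp u).integrable hp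
  have h2 : Integrable (fun s => u s i) μI :=
    (EuclideanSpace.proj (𝕜 := ℝ) i).integrable_comp h1
  rw [intervalIntegrable_iff_integrableOn_Icc_of_le zero_le_one]
  exact h2

lemma realizable_flow {p : ENNReal} [Fact (1 ≤ p)] (hp : p ≠ ⊤) {C : ℝ}
    (hXc : ∀ i, Continuous (X i))
    (hL : ∀ i y z, ‖X i y - X i z‖ ≤ C * ‖y - z‖) (hC : 0 ≤ C)
    (F : Lp (EuclideanSpace ℝ (Fin d)) p μI → EuclideanSpace ℝ (Fin n))
    (hF : ∀ u : Lp (EuclideanSpace ℝ (Fin d)) p μI, ∃ γ, IsTrajectory X x (⇑u) γ ∧ F u = γ 1)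
    (i : Fin d) (h : ℝ → ℝ) (hh : Continuous h) (h0 : h 0 = 0)
    (Γ : ℝ × EuclideanSpace ℝ (Fin n) → C(I, EuclideanSpace ℝ (Fin n)))
    (heq : ∀ a y (t : I), Γ (a, y) t = y + h a • ∫ s in (0:ℝ)..t,
      X i (Γ (a, y) (projIcc 0 1 zero_le_one s))) :
    Realizable F (fun q : ℝ × EuclideanSpace ℝ (Fin n) => Γ q 1) := by
  have hp1 : 1 ≤ p := Fact.out
  refine ⟨fun q => stepLp p (EuclideanSpace.single i (1:ℝ)) (q.1, h q.2), ?_, ?_, ?_⟩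
  · exact (stepLp_continuous p hp _).comp (by fun_prop)
  · intro u
    simp only [h0]
    exact stepLp_zero _ _ _
  · intro u a
    obtain ⟨γ, hγ, hFγ⟩ := hF u
    obtain ⟨γ', hγ', hFγ'⟩ := hF (stepLp p (EuclideanSpace.single i (1:ℝ)) (u, h a))
    obtain ⟨η, hη, hη1⟩ := traj_step hXc (lp_coord_integrable hp1 u) hγ i (h a)
      (fun s => Γ (a, γ 1) (projIcc 0 1 zero_le_one s))
      ((Γ (a, γ 1)).continuous.comp continuous_projIcc)
      (by
        intro t ht
        rw [projIcc_of_le_left zero_le_one ht, heq]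
        simp)
      (by
        intro t ht
        rw [projIcc_of_mem zero_le_one ht, heq])
    have hη' := traj_congr (MemLp.coeFn_toLp
      (memLp_step (EuclideanSpace.single i (1:ℝ)) (Lp.memLp u) (h a))).symm hη
    have := traj_unique hXc hL hC (lp_coord_integrable hp1 _) hγ' hη'
    simp only
    rw [hFγ', this, hη1, hFγ, projIcc_right]
    rfl
end
end Helpers

/-- for a bounded, globally Lipschitz, smooth, bracket-generating
(driftless) family, the endpoint map `F : L^p([0,1],ℝ^d) → ℝⁿ`, `F(u) = γ_u(1)`, is
a Hurewicz fibration: every homotopy into `ℝⁿ` admitting a lift at time `0` lifts. -/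
theorem stmt15 (n d : ℕ) (p : ℝ) (hp : 1 ≤ p) [Fact (1 ≤ ENNReal.ofReal p)]
    (x : EuclideanSpace ℝ (Fin n))
    (X : Fin d → EuclideanSpace ℝ (Fin n) → EuclideanSpace ℝ (Fin n))
    (hXsmooth : ∀ i, ContDiff ℝ (⊤ : ℕ∞) (X i))
    (hXbdd : ∃ C, ∀ i y, ‖X i y‖ ≤ C)
    (hXder : ∃ C, ∀ i y, ‖fderiv ℝ (X i) y‖ ≤ C)
    (hbg : BracketGenerating X)
    (F : Lp (EuclideanSpace ℝ (Fin d)) (ENNReal.ofReal p)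
        (volume.restrict (Set.Icc (0:ℝ) 1)) → EuclideanSpace ℝ (Fin n))
    (hF : ∀ u : Lp (EuclideanSpace ℝ (Fin d)) (ENNReal.ofReal p)
        (volume.restrict (Set.Icc (0:ℝ) 1)),
      ∃ γ, IsTrajectory X x (⇑u) γ ∧ F u = γ 1)
    (Z : Type*) [TopologicalSpace Z]
    (g : Z × unitInterval → EuclideanSpace ℝ (Fin n)) (hg : Continuous g)
    (g₀ : Z → Lp (EuclideanSpace ℝ (Fin d)) (ENNReal.ofReal p)
      (volume.restrict (Set.Icc (0:ℝ) 1)))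
    (hg₀ : Continuous g₀)
    (hlift : ∀ z, F (g₀ z) = g (z, 0)) :
    ∃ gt : Z × unitInterval → Lp (EuclideanSpace ℝ (Fin d)) (ENNReal.ofReal p)
        (volume.restrict (Set.Icc (0:ℝ) 1)),
      Continuous gt ∧ (∀ z, gt (z, 0) = g₀ z) ∧
        ∀ z s, F (gt (z, s)) = g (z, s) := by
  obtain ⟨C₀, hC₀⟩ := hXder
  have hC : ∀ i y, ‖fderiv ℝ (X i) y‖ ≤ max C₀ 0 := fun i y => (hC₀ i y).trans (le_max_left _ _)
  have hL : ∀ i y z, ‖X i y - X i z‖ ≤ max C₀ 0 * ‖y - z‖ := fun i y z =>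
    Convex.norm_image_sub_le_of_norm_fderiv_le (𝕜 := ℝ)
      (fun w _ => ((hXsmooth i).differentiable (by simp)) w) (fun w _ => hC i w) convex_univ
      (Set.mem_univ z) (Set.mem_univ y)
  have hbase : ∀ i, GoodField F (X i) := by
    intro i
    obtain ⟨h, Γ, hh, h0, h1, hΓ, heq, hinv⟩ := flow_exists (X i) (hXsmooth i) _ (hC i)
    exact goodField_of_flow (X i) (hXsmooth i) h Γ hh h0 h1 hΓ heq hinv
      (realizable_flow ENNReal.ofReal_ne_top (fun i => (hXsmooth i).continuous) hL
        (le_max_right _ _) F hF i h hh.continuous h0 Γ heq)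
  have hall : ∀ Y, IsIteratedBracket X Y → GoodField F Y := by
    intro Y hY
    induction hY with
    | base i => exact hbase i
    | bracket Y Z _ _ hY hZ => exact hY.bracket hZ
  have hspan : ∀ y₀, Submodule.span ℝ {v | ∃ Y, GoodField F Y ∧ Y y₀ = v} = ⊤ := by
    intro y₀
    rw [eq_top_iff, ← hbg y₀]
    refine Submodule.span_mono ?_
    rintro v ⟨Y, hY, rfl⟩
    exact ⟨Y, hall Y hY, rfl⟩
  obtain ⟨D, Λ, hD, hdiag, hΛ, hΛ0, hΛF⟩ := global_steer F
    (fun y₀ => (Ach.id_of_span y₀ (hspan y₀)).local_steer)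
  exact lift_of_steer F D Λ hD hdiag hΛ hΛ0 hΛF g hg g₀ hg₀ hlift
end
end
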